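/- Let n ≥ 3, let Γ ⊂ O(n) be a finite subgroup acting freely on ℝⁿ\{0}, and let u : ℝⁿ → [0,∞) be locally Lipschitz, Γ-symmetric, 1-homogeneous, harmonic in the open set {u>0}, with Σ := ∂{u>0}\{0} a smooth embedded hypersurface, u smooth up to Σ from within {u>0} and |∇u| = 1 on Σ. Suppose there exist μ ∈ ℝ, a constant γ ≥ (n/2 − 1 − μ)², and a Γ-symmetric nonnegative function v̄ on {u>0}\{0}, homogeneous of degree −μ, C² on {u>0}, C¹ up to Σ, not identically zero, such that Δv̄ ≥ γ v̄/|x|² in {u>0} and ∂_ν v̄ ≤ H v̄ on Σ, and such that the subsolution is strict in the sense that either Δv̄(x₀) > γ v̄(x₀)/|x₀|² at some point x₀ ∈ {u>0} with v̄(x₀) > 0, or ∂_ν v̄(x₀) < H(x₀) v̄(x₀) at some point x₀ ∈ Σ with v̄(x₀) > 0. Then u is not a Γ-symmetric minimizer against Γ-symmetric competitors. -/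

import Mathlib

open MeasureTheory Metric Set
open scoped RealInnerProductSpace

noncomputable section

/-- The Alt–Caffarelli energy `E_Q(u, U) = ∫_U |∇u|² + Q²·1_{u>0}`. -/
def acEnergy {n : ℕ} (Q : ℝ) (u : EuclideanSpace ℝ (Fin n) → ℝ)
    (U : Set (EuclideanSpace ℝ (Fin n))) : ℝ :=
  ∫ x in U, (‖gradient u x‖ ^ 2 + Q ^ 2 * Set.indicator {y | 0 < u y} (fun _ => (1 : ℝ)) x)

/-- `u` is invariant under the group `Γ` of linear isometries. -/
def IsSymmetricUnder {n : ℕ}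
    (Γ : Subgroup (EuclideanSpace ℝ (Fin n) ≃ₗᵢ[ℝ] EuclideanSpace ℝ (Fin n)))
    (u : EuclideanSpace ℝ (Fin n) → ℝ) : Prop :=
  ∀ g ∈ Γ, ∀ x, u (g x) = u x

/-- A nonnegative locally Lipschitz `Γ`-symmetric function `u` is a `Γ`-symmetric minimizer
against `Γ`-symmetric competitors (with `Q = 1`). -/
def IsSymMinimizer {n : ℕ}
    (Γ : Subgroup (EuclideanSpace ℝ (Fin n) ≃ₗᵢ[ℝ] EuclideanSpace ℝ (Fin n)))
    (u : EuclideanSpace ℝ (Fin n) → ℝ) : Prop :=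
  (∀ x, 0 ≤ u x) ∧ LocallyLipschitz u ∧ IsSymmetricUnder Γ u ∧
    ∀ R > 0, ∀ v : EuclideanSpace ℝ (Fin n) → ℝ, (∀ x, 0 ≤ v x) → LocallyLipschitz v →
      IsSymmetricUnder Γ v →
      (∀ x ∉ ball (0 : EuclideanSpace ℝ (Fin n)) R, v x = u x) →
      acEnergy 1 u (ball 0 R) ≤ acEnergy 1 v (ball 0 R)

/-- The Euclidean Laplacian, as the trace of the Hessian. -/
def lap {n : ℕ} (f : EuclideanSpace ℝ (Fin n) → ℝ) (x : EuclideanSpace ℝ (Fin n)) : ℝ :=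
  ∑ i : Fin n, fderiv ℝ (fun y => fderiv ℝ f y (EuclideanSpace.single i 1)) x
    (EuclideanSpace.single i 1)

/-- The free boundary away from the origin: `Σ = ∂{u>0} \ {0}`. -/
def freeBoundary {n : ℕ} (u : EuclideanSpace ℝ (Fin n) → ℝ) :
    Set (EuclideanSpace ℝ (Fin n)) :=
  frontier {x | 0 < u x} \ {0}

/-- The outward unit normal along `Σ`, computed from a smooth extension `Uext` of `u`
across `Σ` (on `Σ` one has `u = 0`, `u > 0` inside, and `|∇Uext| = 1`, so `-∇Uext` is the
unit normal pointing out of `{u > 0}`). -/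
def nuVec {n : ℕ} (Uext : EuclideanSpace ℝ (Fin n) → ℝ) (x : EuclideanSpace ℝ (Fin n)) :
    EuclideanSpace ℝ (Fin n) :=
  -(gradient Uext x)

/-- The outward mean curvature `H = -∂²u/∂ν²` of `Σ`, computed from the smooth extension. -/
def meanCurv {n : ℕ} (Uext : EuclideanSpace ℝ (Fin n) → ℝ) (x : EuclideanSpace ℝ (Fin n)) : ℝ :=
  -(fderiv ℝ (fun y => (⟪gradient Uext y, nuVec Uext x⟫ : ℝ)) x (nuVec Uext x))

/-- One-sided directional derivative `∂_ν f(x)` in the outward normal direction,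
taken from within `{u > 0}` (i.e. from the side `t ≤ 0`). -/
def dNu {n : ℕ} (Uext f : EuclideanSpace ℝ (Fin n) → ℝ) (x : EuclideanSpace ℝ (Fin n)) : ℝ :=
  derivWithin (fun t : ℝ => f (x + t • nuVec Uext x)) (Set.Iic 0) 0


/-! ### Gradient tools -/

lemma inner_gradient_eq {n : ℕ} (f : EuclideanSpace ℝ (Fin n) → ℝ) (x y : EuclideanSpace ℝ (Fin n)) :
    (inner ℝ (gradient f x) y : ℝ) = fderiv ℝ f x y := by
  rw [gradient, InnerProductSpace.toDual_symm_apply]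

lemma norm_gradient_eq {n : ℕ} (f : EuclideanSpace ℝ (Fin n) → ℝ) (x : EuclideanSpace ℝ (Fin n)) :
    ‖gradient f x‖ = ‖fderiv ℝ f x‖ := by
  rw [gradient, LinearIsometryEquiv.norm_map]

lemma gradient_mul' {n : ℕ} {f g : EuclideanSpace ℝ (Fin n) → ℝ} {x : EuclideanSpace ℝ (Fin n)}
    (hf : DifferentiableAt ℝ f x) (hg : DifferentiableAt ℝ g x) :
    gradient (fun y => f y * g y) x = f x • gradient g x + g x • gradient f x := by
  unfold gradient
  rw [fderiv_fun_mul hf hg]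
  simp

lemma gradient_sub' {n : ℕ} {f g : EuclideanSpace ℝ (Fin n) → ℝ} {x : EuclideanSpace ℝ (Fin n)}
    (hf : DifferentiableAt ℝ f x) (hg : DifferentiableAt ℝ g x) :
    gradient (fun y => f y - g y) x = gradient f x - gradient g x := by
  unfold gradient
  rw [fderiv_fun_sub hf hg]
  simp

lemma gradient_const_mul' {n : ℕ} {f : EuclideanSpace ℝ (Fin n) → ℝ} {x : EuclideanSpace ℝ (Fin n)}
    (hf : DifferentiableAt ℝ f x) (c : ℝ) :
    gradient (fun y => c * f y) x = c • gradient f x := by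
  unfold gradient
  rw [fderiv_const_mul hf]
  simp

lemma gradient_eq_zero_of_isLocalMin {n : ℕ} {f : EuclideanSpace ℝ (Fin n) → ℝ}
    {x : EuclideanSpace ℝ (Fin n)} (h : IsLocalMin f x) : gradient f x = 0 := by
  unfold gradient
  rw [h.fderiv_eq_zero]; simp

lemma gradient_congr' {n : ℕ} {f g : EuclideanSpace ℝ (Fin n) → ℝ}
    {x : EuclideanSpace ℝ (Fin n)} (h : f =ᶠ[nhds x] g) : gradient f x = gradient g x := by
  unfold gradient
  rw [h.fderiv_eq]

lemma gradient_eq_of_touch {n : ℕ} {f g : EuclideanSpace ℝ (Fin n) → ℝ}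
    {x : EuclideanSpace ℝ (Fin n)} (hf : DifferentiableAt ℝ f x) (hg : DifferentiableAt ℝ g x)
    (h : ∀ᶠ y in nhds x, f y ≤ g y) (hx : f x = g x) : gradient f x = gradient g x := by
  have h1 : gradient (fun y => g y - f y) x = 0 := by
    apply gradient_eq_zero_of_isLocalMin
    filter_upwards [h] with y hy
    simp only [hx, sub_self]; linarith
  rw [gradient_sub' hg hf] at h1
  exact (sub_eq_zero.1 h1).symm

lemma norm_gradient_le_of_lipschitz {n : ℕ} {f : EuclideanSpace ℝ (Fin n) → ℝ} {C : NNReal}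
    (hf : LipschitzWith C f) (x : EuclideanSpace ℝ (Fin n)) : ‖gradient f x‖ ≤ C := by
  rw [norm_gradient_eq]; exact norm_fderiv_le_of_lipschitz ℝ hf

lemma measurable_gradient' {n : ℕ} (f : EuclideanSpace ℝ (Fin n) → ℝ) :
    Measurable (gradient f) := by
  unfold gradient
  exact (LinearIsometryEquiv.continuous _).measurable.comp (measurable_fderiv ℝ f)

lemma inner_gradient_sum {n : ℕ} (f g : EuclideanSpace ℝ (Fin n) → ℝ)
    (x : EuclideanSpace ℝ (Fin n)) :
    (inner ℝ (gradient f x) (gradient g x) : ℝ) = ∑ i : Fin n,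
      fderiv ℝ f x (EuclideanSpace.single i 1) * fderiv ℝ g x (EuclideanSpace.single i 1) := by
  have h := (EuclideanSpace.basisFun (Fin n) ℝ).sum_inner_mul_inner (gradient f x) (gradient g x)
  rw [← h]
  refine Finset.sum_congr rfl fun i _ => ?_
  rw [real_inner_comm (gradient g x)]
  simp only [inner_gradient_eq, EuclideanSpace.basisFun_apply]

/-- Bounded measurable functions are integrable on sets of finite measure. -/
lemma integrableOn_of_bdd {n : ℕ} {A : Set (EuclideanSpace ℝ (Fin n))} (hA : MeasurableSet A)
    (hfin : volume A ≠ ⊤) {f : EuclideanSpace ℝ (Fin n) → ℝ}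
    (hf : AEStronglyMeasurable f (volume.restrict A)) (C : ℝ) (hC : ∀ x ∈ A, |f x| ≤ C) :
    IntegrableOn f A := by
  have : IsFiniteMeasure (volume.restrict A) :=
    ⟨by rw [Measure.restrict_apply_univ]; exact lt_top_iff_ne_top.2 hfin⟩
  refine Integrable.of_bound hf C ?_
  refine (ae_restrict_iff' hA).2 (Filter.Eventually.of_forall fun x hx => ?_)
  exact hC x hx

/-- Integration by parts against a function with compact support in `D`. -/
lemma ibp_compact {n : ℕ} {D : Set (EuclideanSpace ℝ (Fin n))} (hD : IsOpen D)
    {f g : EuclideanSpace ℝ (Fin n) → ℝ} {C : NNReal} (hf : LipschitzWith C f)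
    {T : Set (EuclideanSpace ℝ (Fin n))} (hT : IsCompact T) (hTD : T ⊆ D)
    (hfT : ∀ x ∉ T, f x = 0) (hg : ContDiffOn ℝ 2 g D) :
    Integrable (fun x => f x * lap g x) ∧
    ∫ x, (inner ℝ (gradient f x) (gradient g x) : ℝ) = - ∫ x, f x * lap g x := by
  have hfc : HasCompactSupport f := HasCompactSupport.intro hT hfT
  have hts : tsupport f ⊆ T := by
    refine closure_minimal ?_ hT.isClosed
    intro x hx; by_contra h; exact hx (hfT x h)
  obtain ⟨V, hVo, hTV, hVD, hVc⟩ := exists_open_between_and_isCompact_closure hT hD hTD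
  obtain ⟨θ, hθ1, hθ0, -⟩ := exists_contMDiffMap_one_nhds_of_subset_interior (n := (⊤ : ℕ∞))
    (modelWithCornersSelf ℝ (EuclideanSpace ℝ (Fin n))) hT.isClosed
    (hTV.trans_eq hVo.interior_eq.symm)
  have hθs : ContDiff ℝ 1 θ := by
    have h1 : ContDiff ℝ (⊤ : ℕ∞) θ := θ.contMDiff.contDiff
    exact h1.of_le (by exact_mod_cast le_top)
  have hθt : tsupport θ ⊆ closure V := by
    refine closure_mono ?_
    intro x hx; by_contra h; exact hx (hθ0 x h)
  have hθc : HasCompactSupport θ := HasCompactSupport.of_support_subset_isCompact hVc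
    ((subset_tsupport _).trans hθt)
  set e : Fin n → EuclideanSpace ℝ (Fin n) := fun i => EuclideanSpace.single i 1 with he
  have hdg : ∀ i, ∀ x ∈ D, ContDiffAt ℝ 1 (fun y => fderiv ℝ g y (e i)) x := by
    intro i x hx
    have h1 : ContDiffAt ℝ 2 g x := hg.contDiffAt (hD.mem_nhds hx)
    have h2 : ContDiffAt ℝ 1 (fderiv ℝ g) x := h1.fderiv_right (by norm_num)
    exact h2.clm_apply contDiffAt_const
  have hFsm : ∀ i, ContDiff ℝ 1 (fun y => θ y * fderiv ℝ g y (e i)) := by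
    intro i
    rw [contDiff_iff_contDiffAt]
    intro x
    by_cases hx : x ∈ D
    · exact hθs.contDiffAt.mul (hdg i x hx)
    · have : x ∉ tsupport θ := fun h => hx (hVD (hθt h))
      have h0 : (fun y => θ y * fderiv ℝ g y (e i)) =ᶠ[nhds x] fun _ => 0 := by
        filter_upwards [notMem_tsupport_iff_eventuallyEq.1 this] with y hy
        simp [hy]
      exact contDiffAt_const.congr_of_eventuallyEq h0
  have hFc : ∀ i, HasCompactSupport (fun y => θ y * fderiv ℝ g y (e i)) := fun i =>
    hθc.mul_right
  have hlapeq : ∀ x, f x * lap g x = ∑ i, f x * fderiv ℝ (fun y => θ y * fderiv ℝ g y (e i)) x (e i) := by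
    intro x
    by_cases hx : x ∈ T
    · rw [← Finset.mul_sum]; congr 1
      unfold lap
      refine Finset.sum_congr rfl fun i _ => ?_
      have : (fun y => θ y * fderiv ℝ g y (e i)) =ᶠ[nhds x] fun y => fderiv ℝ g y (e i) := by
        filter_upwards [hθ1.filter_mono (nhds_le_nhdsSet hx)] with y hy
        simp [hy]
      rw [this.fderiv_eq]
    · simp [hfT x hx]
  have hIntg : ∀ i, Integrable (fun x => f x * fderiv ℝ (fun y => θ y * fderiv ℝ g y (e i)) x (e i)) := by
    intro i
    refine Continuous.integrable_of_hasCompactSupport ?_ hfc.mul_right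
    exact hf.continuous.mul (((hFsm i).continuous_fderiv (by norm_num)).clm_apply continuous_const)
  have hinn : ∀ x, (inner ℝ (gradient f x) (gradient g x) : ℝ) =
      ∑ i, fderiv ℝ f x (e i) * (θ x * fderiv ℝ g x (e i)) := by
    intro x
    rw [inner_gradient_sum]
    by_cases hx : x ∈ T
    · simp [hθ1.self_of_nhdsSet x hx, he]
    · have h0 : f =ᶠ[nhds x] fun _ => 0 := by
        filter_upwards [hT.isClosed.isOpen_compl.mem_nhds hx] with y hy using hfT y hy
      rw [h0.fderiv_eq]; simp
  have hdiff := hf.ae_differentiableAt (μ := volume)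
  have hIntg2 : ∀ i, Integrable (fun x => fderiv ℝ f x (e i) * (θ x * fderiv ℝ g x (e i))) := by
    intro i
    have h1 : Integrable (fun y => θ y * fderiv ℝ g y (e i)) :=
      (hFsm i).continuous.integrable_of_hasCompactSupport (hFc i)
    refine h1.bdd_mul (c := C * ‖e i‖) (measurable_fderiv_apply_const ℝ f (e i)).aestronglyMeasurable ?_
    refine Filter.Eventually.of_forall fun x => ?_
    exact ContinuousLinearMap.le_of_opNorm_le _ (norm_fderiv_le_of_lipschitz ℝ hf) _
  constructor
  · simp_rw [hlapeq]
    exact integrable_finsetSum _ fun i _ => hIntg i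
  · simp_rw [hlapeq, hinn]
    rw [integral_finsetSum _ fun i _ => hIntg i, integral_finsetSum _ fun i _ => hIntg2 i,
      ← Finset.sum_neg_distrib]
    refine Finset.sum_congr rfl fun i _ => ?_
    obtain ⟨C', hC'⟩ := ContDiff.lipschitzWith_of_hasCompactSupport (hFc i) (hFsm i) (by norm_num)
    have key := hC'.integral_lineDeriv_mul_eq (μ := volume) hf hfc (e i)
    have h1 : ∀ x, lineDeriv ℝ (fun y => θ y * fderiv ℝ g y (e i)) x (e i) =
        fderiv ℝ (fun y => θ y * fderiv ℝ g y (e i)) x (e i) := fun x =>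
      ((hFsm i).differentiable (by norm_num)).differentiableAt.lineDeriv_eq_fderiv
    simp_rw [h1] at key
    have h2 : ∫ x, lineDeriv ℝ f x (-e i) * (θ x * fderiv ℝ g x (e i)) =
        ∫ x, - (fderiv ℝ f x (e i) * (θ x * fderiv ℝ g x (e i))) := by
      refine integral_congr_ae ?_
      filter_upwards [hdiff] with x hx
      rw [hx.lineDeriv_eq_fderiv, map_neg, neg_mul]
    rw [h2, integral_neg] at key
    simp_rw [mul_comm (f _)]
    linarith

/-- Integration by parts inequality for functions vanishing outside `D`. -/
lemma ibp_ineq {n : ℕ} {D K : Set (EuclideanSpace ℝ (Fin n))} (hD : IsOpen D) (hK : IsCompact K)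
    {f g G : EuclideanSpace ℝ (Fin n) → ℝ} {C : NNReal} (hf : LipschitzWith C f)
    (hf0 : ∀ x, 0 ≤ f x) (hfD : ∀ x ∉ D, f x = 0) (hfK : ∀ x ∉ K, f x = 0)
    (hg : ContDiffOn ℝ 2 g D) (M : ℝ) (hgM : ∀ x ∈ D ∩ K, ‖gradient g x‖ ≤ M)
    (hGm : AEStronglyMeasurable G (volume.restrict (D ∩ K)))
    (hGM : ∀ x ∈ D ∩ K, |G x| ≤ M) (hlap : ∀ x ∈ D ∩ K, G x ≤ lap g x) :
    ∫ x in D ∩ K, ((inner ℝ (gradient f x) (gradient g x) : ℝ) + f x * G x) ≤ 0 := by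
  have hDK : MeasurableSet (D ∩ K) := hD.measurableSet.inter hK.measurableSet
  have hfin : volume (D ∩ K) ≠ ⊤ :=
    ((measure_mono inter_subset_right).trans_lt hK.measure_lt_top).ne
  have hF : IsFiniteMeasure (volume.restrict (D ∩ K)) :=
    ⟨by rw [Measure.restrict_apply_univ]; exact lt_top_iff_ne_top.2 hfin⟩
  obtain ⟨B, hB⟩ : ∃ B, ∀ x, |f x| ≤ B := by
    have hfc : HasCompactSupport f := HasCompactSupport.intro hK hfK
    obtain ⟨B, hB⟩ := hfc.exists_bound_of_continuous hf.continuous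
    exact ⟨B, hB⟩
  have hB0 : 0 ≤ B := (abs_nonneg _).trans (hB 0)
  -- truncations
  have hfd : ∀ δ : ℝ, LipschitzWith C (fun x => max (f x - δ) 0) := by
    intro δ
    have : LipschitzWith C (fun x => f x - δ) := by
      intro x y; simpa using hf x y
    exact this.max_const 0
  have hstep : ∀ δ : ℝ, 0 < δ → ∫ x in D ∩ K, (({y | δ < f y}).indicator
      (fun x => (inner ℝ (gradient f x) (gradient g x) : ℝ)) x + max (f x - δ) 0 * G x) ≤ 0 := by
    intro δ hδ
    set T := {x | δ ≤ f x} with hTdef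
    have hTK : T ⊆ K := fun x hx => by
      by_contra h
      have h1 : δ ≤ f x := hx
      rw [hfK x h] at h1; linarith
    have hTD : T ⊆ D := fun x hx => by
      by_contra h
      have h1 : δ ≤ f x := hx
      rw [hfD x h] at h1; linarith
    have hTc : IsCompact T := hK.of_isClosed_subset (isClosed_le continuous_const hf.continuous) hTK
    obtain ⟨hI, hE⟩ := ibp_compact hD (hfd δ) hTc hTD (fun x hx => by
      have : f x < δ := not_le.1 hx
      exact max_eq_right (by linarith)) hg
    have hgrad : ∀ᵐ x, gradient (fun x => max (f x - δ) 0) x = ({y | δ < f y}).indicator (gradient f) x := by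
      refine Filter.Eventually.of_forall fun x => ?_
      by_cases hx : δ < f x
      · rw [indicator_of_mem (by exact hx)]
        have h1 : (fun x => max (f x - δ) 0) =ᶠ[nhds x] fun y => f y - δ := by
          filter_upwards [(isOpen_lt continuous_const hf.continuous).mem_nhds hx] with y hy
          have : δ < f y := hy
          exact max_eq_left (by linarith)
        rw [gradient_congr' h1]
        unfold gradient; rw [fderiv_sub_const]
      · rw [indicator_of_notMem (by exact hx)]
        apply gradient_eq_zero_of_isLocalMin
        refine Filter.Eventually.of_forall fun y => ?_
        have : max (f x - δ) 0 = 0 := max_eq_right (by linarith [not_lt.1 hx])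
        simp only [this]; exact le_max_right _ _
    have e1 : ∫ x in D ∩ K, ({y | δ < f y}).indicator
        (fun x => (inner ℝ (gradient f x) (gradient g x) : ℝ)) x =
        ∫ x, (inner ℝ (gradient (fun x => max (f x - δ) 0) x) (gradient g x) : ℝ) := by
      rw [← integral_indicator hDK]
      refine integral_congr_ae ?_
      filter_upwards [hgrad] with x hx
      rw [hx]
      by_cases h : δ < f x
      · have hT : x ∈ T := le_of_lt h
        have hm : x ∈ D ∩ K := ⟨hTD hT, hTK hT⟩
        rw [indicator_of_mem hm, indicator_of_mem (by exact h), indicator_of_mem (by exact h)]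
      · rw [indicator_of_notMem (s := {y | δ < f y}) (f := gradient f) (by exact h), inner_zero_left]
        by_cases hm : x ∈ D ∩ K
        · rw [indicator_of_mem hm, indicator_of_notMem (by exact h)]
        · rw [indicator_of_notMem hm]
    have e2 : ∫ x in D ∩ K, max (f x - δ) 0 * lap g x = ∫ x, max (f x - δ) 0 * lap g x := by
      apply setIntegral_eq_integral_of_forall_compl_eq_zero
      intro x hx
      have : f x = 0 := by
        by_cases h : x ∈ D
        · exact hfK x fun h' => hx ⟨h, h'⟩
        · exact hfD x h
      rw [this]; simp [hδ.le]
    have i2 : IntegrableOn (fun x => max (f x - δ) 0 * G x) (D ∩ K) := by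
      refine integrableOn_of_bdd hDK hfin
        ((hfd δ).continuous.aestronglyMeasurable.mul hGm) (B * M) fun x hx => ?_
      rw [abs_mul]
      have h1 : |max (f x - δ) 0| ≤ B := by
        rw [abs_of_nonneg (le_max_right _ _)]
        exact max_le (by linarith [le_abs_self (f x), hB x]) hB0
      exact mul_le_mul h1 (hGM x hx) (abs_nonneg _) hB0
    have i1 : IntegrableOn (({y | δ < f y}).indicator
        (fun x => (inner ℝ (gradient f x) (gradient g x) : ℝ))) (D ∩ K) := by
      refine integrableOn_of_bdd hDK hfin ?_ (C * M) fun x hx => ?_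
      · refine (Measurable.indicator ?_ (measurableSet_lt measurable_const hf.continuous.measurable)).aestronglyMeasurable
        exact (measurable_gradient' f).inner (measurable_gradient' g)
      · by_cases h : x ∈ {y | δ < f y}
        · rw [indicator_of_mem h]
          refine (abs_real_inner_le_norm _ _).trans ?_
          exact mul_le_mul (norm_gradient_le_of_lipschitz hf x) (hgM x hx) (norm_nonneg _) C.2
        · rw [indicator_of_notMem h, abs_zero]
          exact mul_nonneg C.2 ((norm_nonneg _).trans (hgM x hx))
    rw [integral_add i1 i2, e1, hE, ← e2]
    have : ∫ x in D ∩ K, max (f x - δ) 0 * G x ≤ ∫ x in D ∩ K, max (f x - δ) 0 * lap g x :=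
      setIntegral_mono_on i2 hI.integrableOn hDK fun x hx =>
        mul_le_mul_of_nonneg_left (hlap x hx) (le_max_right _ _)
    linarith
  have hlim : Filter.Tendsto (fun k : ℕ => ∫ x in D ∩ K, (({y | (1 / ((k : ℝ) + 1)) < f y}).indicator
      (fun x => (inner ℝ (gradient f x) (gradient g x) : ℝ)) x + max (f x - 1 / ((k : ℝ) + 1)) 0 * G x))
      Filter.atTop (nhds (∫ x in D ∩ K, ((inner ℝ (gradient f x) (gradient g x) : ℝ) + f x * G x))) := by
    refine tendsto_integral_of_dominated_convergence (fun _ => C * M + B * M) ?_ (integrable_const _) ?_ ?_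
    · intro k
      refine AEStronglyMeasurable.add ?_ ((hfd _).continuous.aestronglyMeasurable.mul hGm)
      refine (Measurable.indicator ?_ (measurableSet_lt measurable_const hf.continuous.measurable)).aestronglyMeasurable
      exact (measurable_gradient' f).inner (measurable_gradient' g)
    · intro k
      refine (ae_restrict_iff' hDK).2 (Filter.Eventually.of_forall fun x hx => ?_)
      refine (norm_add_le _ _).trans (add_le_add ?_ ?_)
      · by_cases h : x ∈ {y | (1 / ((k : ℝ) + 1)) < f y}
        · rw [indicator_of_mem h]
          refine (abs_real_inner_le_norm _ _).trans ?_
          exact mul_le_mul (norm_gradient_le_of_lipschitz hf x) (hgM x hx) (norm_nonneg _) C.2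
        · rw [indicator_of_notMem h, norm_zero]
          exact mul_nonneg C.2 ((norm_nonneg _).trans (hgM x hx))
      · rw [Real.norm_eq_abs, abs_mul]
        have h1 : |max (f x - 1 / ((k : ℝ) + 1)) 0| ≤ B := by
          rw [abs_of_nonneg (le_max_right _ _)]
          have : 0 < 1 / ((k : ℝ) + 1) := by positivity
          exact max_le (by linarith [le_abs_self (f x), hB x]) hB0
        exact mul_le_mul h1 (hGM x hx) (abs_nonneg _) hB0
    · refine (ae_restrict_iff' hDK).2 (Filter.Eventually.of_forall fun x hx => ?_)
      have ht := tendsto_one_div_add_atTop_nhds_zero_nat (𝕜 := ℝ)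
      refine Filter.Tendsto.add ?_ ?_
      · rcases (hf0 x).eq_or_lt with h | h
        · have : gradient f x = 0 := gradient_eq_zero_of_isLocalMin
            (Filter.Eventually.of_forall fun y => by rw [← h]; exact hf0 y)
          refine tendsto_const_nhds.congr fun k => ?_
          by_cases h' : x ∈ {y | (1 / ((k : ℝ) + 1)) < f y}
          · rw [indicator_of_mem h']
          · rw [indicator_of_notMem h', this, inner_zero_left]
        · refine tendsto_const_nhds.congr' ?_
          filter_upwards [ht.eventually (gt_mem_nhds h)] with k hk
          rw [indicator_of_mem (by exact hk)]
      · have h1 : Filter.Tendsto (fun k : ℕ => max (f x - 1 / ((k : ℝ) + 1)) 0) Filter.atTop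
            (nhds (max (f x - 0) 0)) :=
          ((tendsto_const_nhds.sub ht).max tendsto_const_nhds)
        rw [sub_zero, max_eq_left (hf0 x)] at h1
        exact h1.mul_const _
  exact le_of_tendsto' hlim fun k => hstep _ (by positivity)

/-- Integration by parts equality for (signed) functions vanishing outside `D`, harmonic field. -/
lemma ibp_harm {n : ℕ} {D K : Set (EuclideanSpace ℝ (Fin n))} (hD : IsOpen D) (hK : IsCompact K)
    {f g : EuclideanSpace ℝ (Fin n) → ℝ} {C : NNReal} (hf : LipschitzWith C f)
    (hfD : ∀ x ∉ D, f x = 0) (hfK : ∀ x ∉ K, f x = 0)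
    (hg : ContDiffOn ℝ 2 g D) (M : ℝ) (hgM : ∀ x ∈ D ∩ K, ‖gradient g x‖ ≤ M)
    (hlap : ∀ x ∈ D, lap g x = 0) :
    ∫ x in D ∩ K, (inner ℝ (gradient f x) (gradient g x) : ℝ) = 0 := by
  have hDK : MeasurableSet (D ∩ K) := hD.measurableSet.inter hK.measurableSet
  have hfin : volume (D ∩ K) ≠ ⊤ :=
    ((measure_mono inter_subset_right).trans_lt hK.measure_lt_top).ne
  have hM' : ∀ x ∈ D ∩ K, |(0 : ℝ)| ≤ M := fun x hx => by
    rw [abs_zero]; exact (norm_nonneg _).trans (hgM x hx)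
  have hgradneg : ∀ h : EuclideanSpace ℝ (Fin n) → ℝ, ∀ x, gradient (fun y => - h y) x = - gradient h x := by
    intro h x; unfold gradient; rw [fderiv_fun_neg]; simp
  have hlapneg : ∀ x, lap (fun y => - g y) x = - lap g x := by
    intro x; unfold lap
    rw [← Finset.sum_neg_distrib]
    refine Finset.sum_congr rfl fun i _ => ?_
    simp_rw [fderiv_fun_neg]
    simp [fderiv_fun_neg]
  have pos : ∀ f : EuclideanSpace ℝ (Fin n) → ℝ, LipschitzWith C f → (∀ x, 0 ≤ f x) →
      (∀ x ∉ D, f x = 0) → (∀ x ∉ K, f x = 0) →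
      ∫ x in D ∩ K, (inner ℝ (gradient f x) (gradient g x) : ℝ) = 0 := by
    intro f hf h0 hfD hfK
    have h1 := ibp_ineq (G := fun _ => 0) hD hK hf h0 hfD hfK hg M hgM
      aestronglyMeasurable_const hM' (fun x hx => (hlap x hx.1).ge)
    have h2 := ibp_ineq (G := fun _ => 0) hD hK hf h0 hfD hfK hg.neg M
      (fun x hx => by rw [hgradneg, norm_neg]; exact hgM x hx)
      aestronglyMeasurable_const hM' (fun x hx => by rw [hlapneg, hlap x hx.1, neg_zero])
    simp only [hgradneg, inner_neg_right, mul_zero, add_zero, integral_neg] at h1 h2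
    linarith
  have hm : LipschitzWith C (fun x => - f x) := by
    intro x y; simpa [edist_neg_neg] using hf x y
  have p1 := pos (fun x => max (f x) 0) (hf.max_const 0) (fun x => le_max_right _ _)
    (fun x hx => by simp [hfD x hx]) (fun x hx => by simp [hfK x hx])
  have p2 := pos (fun x => max (-f x) 0) (hm.max_const 0) (fun x => le_max_right _ _)
    (fun x hx => by simp [hfD x hx]) (fun x hx => by simp [hfK x hx])
  have hIntg : ∀ f : EuclideanSpace ℝ (Fin n) → ℝ, LipschitzWith C f →
      IntegrableOn (fun x => (inner ℝ (gradient f x) (gradient g x) : ℝ)) (D ∩ K) := by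
    intro f hf
    refine integrableOn_of_bdd hDK hfin
      ((measurable_gradient' f).inner (measurable_gradient' g)).aestronglyMeasurable (C * M) fun x hx => ?_
    refine (abs_real_inner_le_norm _ _).trans ?_
    exact mul_le_mul (norm_gradient_le_of_lipschitz hf x) (hgM x hx) (norm_nonneg _) C.2
  have : ∫ x in D ∩ K, (inner ℝ (gradient f x) (gradient g x) : ℝ) =
      ∫ x in D ∩ K, ((inner ℝ (gradient (fun x => max (f x) 0) x) (gradient g x) : ℝ) -
        (inner ℝ (gradient (fun x => max (-f x) 0) x) (gradient g x) : ℝ)) := by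
    refine integral_congr_ae (ae_restrict_of_ae ?_)
    filter_upwards [(hf.max_const 0).ae_differentiableAt (μ := volume),
      (hm.max_const 0).ae_differentiableAt (μ := volume)] with x h1 h2
    rw [← inner_sub_left, ← gradient_sub' h1 h2]
    congr 2
    ext y
    rcases le_total 0 (f y) with h | h
    · rw [max_eq_left h, max_eq_right (by linarith), sub_zero]
    · rw [max_eq_right h, max_eq_left (by linarith)]; ring
  rw [this, integral_sub (hIntg _ (hf.max_const 0)) (hIntg _ (hm.max_const 0)), p1, p2, sub_zero]

/-! ### Functions which are Lipschitz along segments contained in `D` -/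

/-- Bounded on `D`, and Lipschitz along segments contained in `D`. -/
def SegLip {n : ℕ} (D : Set (EuclideanSpace ℝ (Fin n))) (F : EuclideanSpace ℝ (Fin n) → ℝ) : Prop :=
  ∃ M : ℝ, 0 ≤ M ∧ (∀ x ∈ D, |F x| ≤ M) ∧
    ∀ x y, segment ℝ x y ⊆ D → |F x - F y| ≤ M * ‖x - y‖

lemma SegLip.of_gradient {n : ℕ} {D : Set (EuclideanSpace ℝ (Fin n))}
    {F : EuclideanSpace ℝ (Fin n) → ℝ} (hd : ∀ x ∈ D, DifferentiableAt ℝ F x) (M : ℝ) (hM : 0 ≤ M)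
    (hb : ∀ x ∈ D, |F x| ≤ M) (hg : ∀ x ∈ D, ‖gradient F x‖ ≤ M) : SegLip D F := by
  refine ⟨M, hM, hb, fun x y hxy => ?_⟩
  have := (convex_segment x y).norm_image_sub_le_of_norm_fderiv_le (𝕜 := ℝ) (f := F) (C := M)
    (fun z hz => hd z (hxy hz)) (fun z hz => by rw [← norm_gradient_eq]; exact hg z (hxy hz))
    (right_mem_segment ℝ x y) (left_mem_segment ℝ x y)
  simpa using this

lemma SegLip.mul {n : ℕ} {D : Set (EuclideanSpace ℝ (Fin n))}
    {F G : EuclideanSpace ℝ (Fin n) → ℝ} (hF : SegLip D F) (hG : SegLip D G) :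
    SegLip D (fun x => F x * G x) := by
  obtain ⟨M, hM, hb, hl⟩ := hF
  obtain ⟨M', hM', hb', hl'⟩ := hG
  refine ⟨2 * M * M', by positivity, fun x hx => ?_, fun x y hxy => ?_⟩
  · rw [abs_mul]
    have := mul_le_mul (hb x hx) (hb' x hx) (abs_nonneg _) hM
    nlinarith [mul_nonneg hM hM']
  · have hx := hxy (left_mem_segment ℝ x y)
    have hy := hxy (right_mem_segment ℝ x y)
    have e : F x * G x - F y * G y = F x * (G x - G y) + G y * (F x - F y) := by ring
    rw [e]
    refine (abs_add_le _ _).trans ?_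
    rw [abs_mul, abs_mul]
    have h1 := mul_le_mul (hb x hx) (hl' x y hxy) (abs_nonneg _) hM
    have h2 := mul_le_mul (hb' y hy) (hl x y hxy) (abs_nonneg _) hM'
    nlinarith

lemma SegLip.sub {n : ℕ} {D : Set (EuclideanSpace ℝ (Fin n))}
    {F G : EuclideanSpace ℝ (Fin n) → ℝ} (hF : SegLip D F) (hG : SegLip D G) :
    SegLip D (fun x => F x - G x) := by
  obtain ⟨M, hM, hb, hl⟩ := hF
  obtain ⟨M', hM', hb', hl'⟩ := hG
  refine ⟨M + M', by positivity, fun x hx => ?_, fun x y hxy => ?_⟩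
  · exact (abs_sub _ _).trans (add_le_add (hb x hx) (hb' x hx))
  · have e : F x - G x - (F y - G y) = (F x - F y) - (G x - G y) := by ring
    rw [e]
    refine (abs_sub _ _).trans ?_
    have h1 := hl x y hxy
    have h2 := hl' x y hxy
    nlinarith

lemma SegLip.const {n : ℕ} {D : Set (EuclideanSpace ℝ (Fin n))} (c : ℝ) :
    SegLip D (fun _ => c) :=
  ⟨|c|, abs_nonneg _, fun _ _ => le_rfl, fun x y _ => by simp; positivity⟩

lemma SegLip.min_lip {n : ℕ} {D : Set (EuclideanSpace ℝ (Fin n))}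
    {u F : EuclideanSpace ℝ (Fin n) → ℝ} (hF : SegLip D F) {C : NNReal} (hu : LipschitzWith C u)
    (hu0 : ∀ x, 0 ≤ u x) (hF0 : ∀ x ∈ D, 0 ≤ F x) :
    SegLip D (fun x => min (u x) (F x)) := by
  obtain ⟨M, hM, hb, hl⟩ := hF
  refine ⟨M + C, by positivity, fun x hx => ?_, fun x y hxy => ?_⟩
  · rw [abs_of_nonneg (le_min (hu0 x) (hF0 x hx))]
    have := (le_abs_self _).trans (hb x hx)
    have hC : (0 : ℝ) ≤ C := C.2
    exact (min_le_right _ _).trans (by linarith)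
  · refine (abs_min_sub_min_le_max _ _ _ _).trans ?_
    have h1 := hl x y hxy
    have h2 : |u x - u y| ≤ C * ‖x - y‖ := by
      have := hu.dist_le_mul x y
      rwa [Real.dist_eq, dist_eq_norm] at this
    have hC : (0 : ℝ) ≤ C := C.2
    refine max_le ?_ ?_ <;> nlinarith [norm_nonneg (x - y), mul_nonneg hC (norm_nonneg (x - y)), mul_nonneg hM (norm_nonneg (x - y))]

lemma SegLip.lipschitz_indicator {n : ℕ} {D : Set (EuclideanSpace ℝ (Fin n))}
    {u F : EuclideanSpace ℝ (Fin n) → ℝ} (hF : SegLip D F) {C : NNReal} (hu : LipschitzWith C u)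
    (huD : ∀ x ∉ D, u x = 0) (c : ℝ) (hc : 0 ≤ c) (hFu : ∀ x ∈ D, |F x| ≤ c * u x) :
    ∃ C' : NNReal, LipschitzWith C' (D.indicator F) := by
  obtain ⟨M, hM, hb, hl⟩ := hF
  have hC : (0 : ℝ) ≤ C := C.2
  have hB : 0 ≤ M + 2 * c * C := by positivity
  refine ⟨⟨M + 2 * c * C, hB⟩, LipschitzWith.of_dist_le_mul fun x y => ?_⟩
  rw [Real.dist_eq, dist_eq_norm]
  change _ ≤ (M + 2 * c * C) * ‖x - y‖
  have hnn := norm_nonneg (x - y)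
  by_cases hxy : segment ℝ x y ⊆ D
  · rw [indicator_of_mem (hxy (left_mem_segment ℝ x y)), indicator_of_mem (hxy (right_mem_segment ℝ x y))]
    have := hl x y hxy
    have : 0 ≤ 2 * c * C * ‖x - y‖ := by positivity
    linarith
  · obtain ⟨z, hz, hzD⟩ := not_subset.1 hxy
    have aux : ∀ w, ‖w - z‖ ≤ ‖x - y‖ → |D.indicator F w| ≤ c * C * ‖x - y‖ := by
      intro w hw
      by_cases hwD : w ∈ D
      · rw [indicator_of_mem hwD]
        refine (hFu w hwD).trans ?_
        have h2 := hu.dist_le_mul w z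
        rw [Real.dist_eq, dist_eq_norm, huD z hzD, sub_zero] at h2
        have h3 : u w ≤ C * ‖x - y‖ :=
          (le_abs_self _).trans (h2.trans (mul_le_mul_of_nonneg_left hw hC))
        calc c * u w ≤ c * (C * ‖x - y‖) := mul_le_mul_of_nonneg_left h3 hc
          _ = _ := by ring
      · rw [indicator_of_notMem hwD, abs_zero]; positivity
    have hx := aux x (by
      have := norm_sub_le_of_mem_segment hz
      rw [norm_sub_rev x z, norm_sub_rev x y]; exact this)
    have hy := aux y (by
      rw [segment_symm] at hz
      have := norm_sub_le_of_mem_segment hz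
      rw [norm_sub_rev y z]; exact this)
    refine (abs_sub _ _).trans ?_
    have : 0 ≤ M * ‖x - y‖ := by positivity
    nlinarith

/-! ### The truncation `m = min(u, εφ)` -/

/-- The decrement `m = min(u, εφ)` on `{u > 0}`, `0` elsewhere. -/
def mfun {n : ℕ} (u φ : EuclideanSpace ℝ (Fin n) → ℝ) (ε : ℝ) : EuclideanSpace ℝ (Fin n) → ℝ :=
  ({x | 0 < u x}).indicator (fun x => min (u x) (ε * φ x))

lemma mfun_lip {n : ℕ} {u φ : EuclideanSpace ℝ (Fin n) → ℝ} {ε : ℝ} (hε : 0 < ε)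
    {C : NNReal} (hu : LipschitzWith C u) (hu0 : ∀ x, 0 ≤ u x)
    (hφ : SegLip {x | 0 < u x} φ) (hφ0 : ∀ x ∈ {x | 0 < u x}, 0 ≤ φ x) :
    ∃ C' : NNReal, LipschitzWith C' (mfun u φ ε) := by
  have h1 : SegLip {x | 0 < u x} (fun x => ε * φ x) := (SegLip.const ε).mul hφ
  have h0 : ∀ x ∈ {x | 0 < u x}, 0 ≤ ε * φ x := fun x hx => mul_nonneg hε.le (hφ0 x hx)
  refine (h1.min_lip hu hu0 h0).lipschitz_indicator hu
    (fun x hx => le_antisymm (not_lt.1 hx) (hu0 x)) 1 zero_le_one ?_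
  intro x hx
  rw [abs_of_nonneg (le_min (hu0 x) (h0 x hx)), one_mul]
  exact min_le_left _ _

lemma mfun_grad {n : ℕ} {u φ : EuclideanSpace ℝ (Fin n) → ℝ} {ε : ℝ}
    (huc : Continuous u) {x : EuclideanSpace ℝ (Fin n)} (hx : 0 < u x)
    (hm : DifferentiableAt ℝ (mfun u φ ε) x) (hu : DifferentiableAt ℝ u x)
    (hφ : DifferentiableAt ℝ φ x) :
    (u x ≤ ε * φ x → gradient (mfun u φ ε) x = gradient u x) ∧
    (ε * φ x ≤ u x → gradient (mfun u φ ε) x = ε • gradient φ x) := by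
  have hev : ∀ᶠ y in nhds x, mfun u φ ε y = min (u y) (ε * φ y) := by
    filter_upwards [(isOpen_lt continuous_const huc).mem_nhds hx] with y hy
    exact indicator_of_mem (s := {x | 0 < u x}) (f := fun x => min (u x) (ε * φ x)) hy
  have hx' := hev.self_of_nhds
  constructor
  · intro h
    refine gradient_eq_of_touch hm hu ?_ (by rw [hx', min_eq_left h])
    filter_upwards [hev] with y hy
    rw [hy]; exact min_le_left _ _
  · intro h
    rw [← gradient_const_mul' hφ]
    refine gradient_eq_of_touch hm (hφ.const_mul ε) ?_ (by rw [hx', min_eq_right h])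
    filter_upwards [hev] with y hy
    rw [hy]; exact min_le_right _ _

/-- scalar pointwise estimate on the strip -/
lemma strip_scalar {M η ε U a p A B Fh Pf h ζ v G b zz : ℝ} (hM : 1 ≤ M) (hη0 : 0 < η)
    (hη : η ≤ 1) (hε : 0 < ε) (hU0 : 0 ≤ U) (ha : a = ζ * v) (hUa : U ≤ ε * a)
    (hζ0 : 0 ≤ ζ) (hζ : ζ ≤ M) (hv0 : 0 ≤ v) (hv : v ≤ M) (hh : |h| ≤ M) (hG : |G| ≤ M)
    (hB : |B| ≤ M ^ 2) (hFh : |Fh| ≤ M ^ 2) (hPf : |Pf| ≤ 2 * M ^ 3) (hzz : 0 ≤ zz)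
    (hp : |p - 1 + 2 * U * h| ≤ η * U) (hA : - h * v + b - η ≤ A) :
    p - 1 - ε * (ζ * A + U * B + ζ * U * G) -
      (h * p * (ε * a - 2 * U) + h * U * ε * Pf + U * (ε * a - U) * Fh) ≤
    ε ^ 2 * (v ^ 2 * zz - G * ζ ^ 2 * v) - ε * (ζ * b) + 9 * M ^ 6 * (η * ε + ε ^ 2) := by
  have hM0 : 0 ≤ M := by linarith
  have haM : a ≤ M ^ 2 := by rw [ha, sq]; exact mul_le_mul hζ hv hv0 hM0
  have ha0 : 0 ≤ a := by rw [ha]; positivity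
  have hUM : U ≤ ε * M ^ 2 := hUa.trans (mul_le_mul_of_nonneg_left haM hε.le)
  have hp1 : |p - 1| ≤ 3 * M * U := by
    have e : p - 1 = (p - 1 + 2 * U * h) - 2 * U * h := by ring
    rw [e]
    refine (abs_sub _ _).trans ?_
    rw [abs_mul (2 * U), abs_of_nonneg (by positivity : 0 ≤ 2 * U)]
    have : 2 * U * |h| ≤ 2 * U * M := mul_le_mul_of_nonneg_left hh (by positivity)
    have h2 : η * U ≤ M * U := mul_le_mul_of_nonneg_right (by linarith) hU0
    linarith
  have hq : |ε * a - 2 * U| ≤ ε * M ^ 2 := by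
    have : ε * a ≤ ε * M ^ 2 := mul_le_mul_of_nonneg_left haM hε.le
    rw [abs_le]; constructor <;> nlinarith
  have t1 : |h * (p - 1) * (ε * a - 2 * U)| ≤ 3 * M ^ 6 * ε ^ 2 := by
    rw [abs_mul, abs_mul]
    calc |h| * |p - 1| * |ε * a - 2 * U| ≤ M * (3 * M * (ε * M ^ 2)) * (ε * M ^ 2) := by
          gcongr
          exact hp1.trans (by gcongr)
      _ = _ := by ring
  have t2 : |h * U * ε * Pf| ≤ 2 * M ^ 6 * ε ^ 2 := by
    rw [abs_mul, abs_mul, abs_mul, abs_of_nonneg hU0, abs_of_pos hε]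
    calc |h| * U * ε * |Pf| ≤ M * (ε * M ^ 2) * ε * (2 * M ^ 3) := by gcongr
      _ = _ := by ring
  have t3 : |U * (ε * a - U) * Fh| ≤ M ^ 6 * ε ^ 2 := by
    rw [abs_mul, abs_mul, abs_of_nonneg hU0, abs_of_nonneg (by linarith : 0 ≤ ε * a - U)]
    calc U * (ε * a - U) * |Fh| ≤ (ε * M ^ 2) * (ε * M ^ 2) * M ^ 2 := by
          gcongr
          nlinarith
      _ = _ := by ring
  have t4 : |ε * U * B| ≤ M ^ 4 * ε ^ 2 := by
    rw [abs_mul, abs_mul, abs_of_nonneg hU0, abs_of_pos hε]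
    calc ε * U * |B| ≤ ε * (ε * M ^ 2) * M ^ 2 := by gcongr
      _ = _ := by ring
  have t5 : |ε * (ζ * U * G)| ≤ M ^ 4 * ε ^ 2 := by
    rw [abs_mul, abs_mul, abs_mul, abs_of_nonneg hU0, abs_of_pos hε, abs_of_nonneg hζ0]
    calc ε * (ζ * U * |G|) ≤ ε * (M * (ε * M ^ 2) * M) := by gcongr
      _ = _ := by ring
  have t6 : |ε ^ 2 * (G * ζ ^ 2 * v)| ≤ M ^ 4 * ε ^ 2 := by
    rw [abs_mul, abs_mul, abs_mul, abs_of_nonneg hv0, abs_of_nonneg (sq_nonneg ε), abs_of_nonneg (sq_nonneg ζ)]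
    calc ε ^ 2 * (|G| * ζ ^ 2 * v) ≤ ε ^ 2 * (M * M ^ 2 * M) := by gcongr
      _ = _ := by ring
  have t7 : ε * ζ * (- h * v + b - η) ≤ ε * ζ * A := mul_le_mul_of_nonneg_left hA (by positivity)
  have t8 : ε * ζ * η ≤ M * (η * ε) := by
    have : ζ * (η * ε) ≤ M * (η * ε) := mul_le_mul_of_nonneg_right hζ (by positivity)
    linarith
  have t9 : η * U ≤ M ^ 2 * (η * ε) := by
    have := mul_le_mul_of_nonneg_left hUM hη0.le
    linarith
  have t10 : 0 ≤ ε ^ 2 * (v ^ 2 * zz) := by positivity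
  have hMM : M ≤ M ^ 6 := le_self_pow₀ hM (by norm_num)
  have hM2 : M ^ 2 ≤ M ^ 6 := pow_le_pow_right₀ hM (by norm_num)
  have hM4 : M ^ 4 ≤ M ^ 6 := pow_le_pow_right₀ hM (by norm_num)
  have hηε : 0 ≤ η * ε := by positivity
  have s1 : M * (η * ε) ≤ M ^ 6 * (η * ε) := mul_le_mul_of_nonneg_right hMM hηε
  have s2 : M ^ 2 * (η * ε) ≤ M ^ 6 * (η * ε) := mul_le_mul_of_nonneg_right hM2 hηε
  have s4 : M ^ 4 * ε ^ 2 ≤ M ^ 6 * ε ^ 2 := mul_le_mul_of_nonneg_right hM4 (sq_nonneg ε)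
  have s5 : 0 ≤ M ^ 6 * (η * ε) := by positivity
  have hp' := (abs_le.1 hp).2
  have t1' := abs_le.1 t1
  have t2' := abs_le.1 t2
  have t3' := abs_le.1 t3
  have t4' := abs_le.1 t4
  have t5' := abs_le.1 t5
  have t6' := abs_le.1 t6
  have key : p - 1 - ε * (ζ * A + U * B + ζ * U * G) -
      (h * p * (ε * a - 2 * U) + h * U * ε * Pf + U * (ε * a - U) * Fh) =
      (p - 1 + 2 * U * h) - h * (ε * a) - ε * ζ * A - ε * U * B - ε * (ζ * U * G)
       - h * (p - 1) * (ε * a - 2 * U) - h * U * ε * Pf - U * (ε * a - U) * Fh := by ring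
  rw [key]
  have e7 : ε * ζ * (- h * v + b - η) = - h * (ε * a) + ε * (ζ * b) - ε * ζ * η := by rw [ha]; ring
  rw [e7] at t7
  linarith

/-! ### The second variation inequality -/

/-- The strip `{0 < u ≤ εφ}`. -/
def strip {n : ℕ} (u φ : EuclideanSpace ℝ (Fin n) → ℝ) (ε : ℝ) : Set (EuclideanSpace ℝ (Fin n)) :=
  {x | 0 < u x ∧ u x ≤ ε * φ x}

lemma mfun_of_pos {n : ℕ} {u φ : EuclideanSpace ℝ (Fin n) → ℝ} {ε : ℝ}
    {x : EuclideanSpace ℝ (Fin n)} (hx : 0 < u x) : mfun u φ ε x = min (u x) (ε * φ x) :=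
  indicator_of_mem (s := {x | 0 < u x}) (f := fun x => min (u x) (ε * φ x)) hx

lemma mfun_of_not_pos {n : ℕ} {u φ : EuclideanSpace ℝ (Fin n) → ℝ} {ε : ℝ}
    {x : EuclideanSpace ℝ (Fin n)} (hx : ¬ 0 < u x) : mfun u φ ε x = 0 :=
  indicator_of_notMem (s := {x | 0 < u x}) (f := fun x => min (u x) (ε * φ x)) hx

/-- pointwise identity off the strip -/
lemma ptwise_off {E : Type*} [NormedAddCommGroup E] [InnerProductSpace ℝ E]
    (gv gζ gu gh gφ : E) (ε ζ v G h : ℝ) (hφ : gφ = ζ • gv + v • gζ) :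
    ‖ε • gφ‖ ^ 2 - ε * ((inner ℝ (ζ • (ε • gφ) + (ε * (ζ * v)) • gζ) gv : ℝ)
        + ζ * (ε * (ζ * v)) * G)
      - (inner ℝ (h • ((ε * (ζ * v)) • (ε • gφ - ε • gφ) + (ε * (ζ * v) - ε * (ζ * v)) • (ε • gφ))
        + ((ε * (ζ * v)) * (ε * (ζ * v) - ε * (ζ * v))) • gh) gu : ℝ)
      = ε ^ 2 * (v ^ 2 * ‖gζ‖ ^ 2 - G * ζ ^ 2 * v) := by
  rw [norm_smul, mul_pow, Real.norm_eq_abs, sq_abs]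
  simp only [sub_self, smul_zero, zero_smul, mul_zero, add_zero, inner_zero_left, sub_zero]
  rw [← real_inner_self_eq_norm_sq, ← real_inner_self_eq_norm_sq, hφ]
  simp only [inner_add_left, inner_add_right, inner_smul_left, inner_smul_right]
  rw [real_inner_comm gζ gv]
  simp
  ring

/-- pointwise estimate on the strip -/
lemma ptwise_on {E : Type*} [NormedAddCommGroup E] [InnerProductSpace ℝ E]
    (gv gζ gu gh gφ : E) (ε ζ v G h U b M η : ℝ) (hφ : gφ = ζ • gv + v • gζ)
    (hM : 1 ≤ M) (hη0 : 0 < η)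
    (hη : η ≤ 1) (hε : 0 < ε) (hU0 : 0 ≤ U) (hUa : U ≤ ε * (ζ * v))
    (hζ0 : 0 ≤ ζ) (hζ : ζ ≤ M) (hv0 : 0 ≤ v) (hv : v ≤ M) (hh : |h| ≤ M) (hG : |G| ≤ M)
    (hgv : ‖gv‖ ≤ M) (hgζ : ‖gζ‖ ≤ M) (hgu : ‖gu‖ ≤ M) (hgh : ‖gh‖ ≤ M)
    (hp : |‖gu‖ ^ 2 - 1 + 2 * U * h| ≤ η * U) (hA : - h * v + b - η ≤ (inner ℝ gv gu : ℝ)) :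
    ‖gu‖ ^ 2 - 1 - ε * ((inner ℝ (ζ • gu + U • gζ) gv : ℝ) + ζ * U * G)
      - (inner ℝ (h • (U • (ε • gφ - gu) + (ε * (ζ * v) - U) • gu)
        + (U * (ε * (ζ * v) - U)) • gh) gu : ℝ)
      ≤ ε ^ 2 * (v ^ 2 * ‖gζ‖ ^ 2 - G * ζ ^ 2 * v) - ε * (ζ * b)
        + 9 * M ^ 6 * (η * ε + ε ^ 2) := by
  have hM0 : 0 ≤ M := by linarith
  have hgφ : ‖gφ‖ ≤ 2 * M ^ 2 := by
    rw [hφ]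
    refine (norm_add_le _ _).trans ?_
    rw [norm_smul, norm_smul, Real.norm_eq_abs, Real.norm_eq_abs, abs_of_nonneg hζ0,
      abs_of_nonneg hv0]
    have := mul_le_mul hζ hgv (norm_nonneg _) hM0
    have := mul_le_mul hv hgζ (norm_nonneg _) hM0
    nlinarith
  have inn : ∀ (a b : E) (A B : ℝ), ‖a‖ ≤ A → ‖b‖ ≤ B → 0 ≤ A → |(inner ℝ a b : ℝ)| ≤ A * B := by
    intro a b A B ha hb hA
    exact (abs_real_inner_le_norm a b).trans (mul_le_mul ha hb (norm_nonneg _) hA)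
  have key := strip_scalar (M := M) (η := η) (ε := ε) (U := U) (a := ζ * v) (p := ‖gu‖ ^ 2)
    (A := inner ℝ gv gu) (B := inner ℝ gζ gv) (Fh := inner ℝ gh gu) (Pf := inner ℝ gφ gu)
    (h := h) (ζ := ζ) (v := v) (G := G) (b := b) (zz := ‖gζ‖ ^ 2) hM hη0 hη hε hU0 rfl hUa
    hζ0 hζ hv0 hv hh hG (by have := inn gζ gv M M hgζ hgv hM0; nlinarith)
    (by have := inn gh gu M M hgh hgu hM0; nlinarith)
    (by have := inn gφ gu (2 * M ^ 2) M hgφ hgu (by positivity); nlinarith) (by positivity) hp hA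
  refine le_trans (le_of_eq ?_) key
  simp only [inner_add_left, inner_sub_left, inner_smul_left]
  rw [real_inner_self_eq_norm_sq, real_inner_comm gv gu]
  simp
  ring

lemma gradient_eq_zero_off {n : ℕ} {f : EuclideanSpace ℝ (Fin n) → ℝ}
    {K : Set (EuclideanSpace ℝ (Fin n))} (hK : IsClosed K) (hf : ∀ x ∉ K, f x = 0)
    {x : EuclideanSpace ℝ (Fin n)} (hx : x ∉ K) : gradient f x = 0 := by
  have : f =ᶠ[nhds x] fun _ => 0 := by
    filter_upwards [hK.isOpen_compl.mem_nhds hx] with y hy using hf y hy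
  rw [gradient_congr' this]
  unfold gradient
  simp

/-- Hypotheses of the second variation inequality. -/
structure CoreData {n : ℕ} (u v ζ h G b : EuclideanSpace ℝ (Fin n) → ℝ)
    (K : Set (EuclideanSpace ℝ (Fin n))) (C : NNReal) (M : ℝ) : Prop where
  hu : LipschitzWith C u
  hu0 : ∀ x, 0 ≤ u x
  hu2 : ContDiffOn ℝ 2 u {x | 0 < u x}
  huh : ∀ x ∈ {x | 0 < u x}, lap u x = 0
  hv2 : ContDiffOn ℝ 2 v {x | 0 < u x}
  hv0 : ∀ x ∈ {x | 0 < u x}, 0 ≤ v x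
  hK : IsCompact K
  hζ : Differentiable ℝ ζ
  hζ0 : ∀ x, 0 ≤ ζ x
  hζK : ∀ x ∉ K, ζ x = 0
  hhd : ∀ x ∈ {x | 0 < u x}, DifferentiableAt ℝ h x
  hM : 1 ≤ M
  hhM : ∀ x ∈ {x | 0 < u x}, |h x| ≤ M
  hhg : ∀ x ∈ {x | 0 < u x}, ‖gradient h x‖ ≤ M
  bζ : ∀ x ∈ {x | 0 < u x} ∩ K, ζ x ≤ M
  bgζ : ∀ x ∈ {x | 0 < u x} ∩ K, ‖gradient ζ x‖ ≤ M
  bv : ∀ x ∈ {x | 0 < u x} ∩ K, v x ≤ M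
  bgv : ∀ x ∈ {x | 0 < u x} ∩ K, ‖gradient v x‖ ≤ M
  bgu : ∀ x ∈ {x | 0 < u x} ∩ K, ‖gradient u x‖ ≤ M
  bG : ∀ x ∈ {x | 0 < u x} ∩ K, |G x| ≤ M
  bb : ∀ x ∈ {x | 0 < u x} ∩ K, |b x| ≤ M
  mG : AEStronglyMeasurable G (volume.restrict ({x | 0 < u x} ∩ K))
  mb : AEStronglyMeasurable b (volume.restrict ({x | 0 < u x} ∩ K))
  hlap : ∀ x ∈ {x | 0 < u x} ∩ K, G x ≤ lap v x

namespace CoreData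

variable {n : ℕ} {u v ζ h G b : EuclideanSpace ℝ (Fin n) → ℝ}
    {K : Set (EuclideanSpace ℝ (Fin n))} {C : NNReal} {M : ℝ}

lemma openD (H : CoreData u v ζ h G b K C M) : IsOpen {x | 0 < u x} :=
  isOpen_lt continuous_const H.hu.continuous

lemma measDK (H : CoreData u v ζ h G b K C M) : MeasurableSet ({x | 0 < u x} ∩ K) :=
  H.openD.measurableSet.inter H.hK.measurableSet

lemma finDK (H : CoreData u v ζ h G b K C M) : volume ({x | 0 < u x} ∩ K) ≠ ⊤ :=
    ((measure_mono inter_subset_right).trans_lt H.hK.measure_lt_top).ne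

lemma M0 (H : CoreData u v ζ h G b K C M) : 0 ≤ M := by linarith [H.hM]

lemma segζ (H : CoreData u v ζ h G b K C M) : SegLip {x | 0 < u x} ζ := by
  refine SegLip.of_gradient (fun x _ => H.hζ x) M H.M0 (fun x hx => ?_) (fun x hx => ?_)
  · by_cases hk : x ∈ K
    · rw [abs_of_nonneg (H.hζ0 x)]; exact H.bζ x ⟨hx, hk⟩
    · rw [H.hζK x hk, abs_zero]; exact H.M0
  · by_cases hk : x ∈ K
    · exact H.bgζ x ⟨hx, hk⟩
    · rw [gradient_eq_zero_off H.hK.isClosed H.hζK hk, norm_zero]; exact H.M0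

lemma dv (H : CoreData u v ζ h G b K C M) {x} (hx : 0 < u x) : DifferentiableAt ℝ v x :=
  (H.hv2.differentiableOn (by norm_num)).differentiableAt (H.openD.mem_nhds hx)

lemma du (H : CoreData u v ζ h G b K C M) {x} (hx : 0 < u x) : DifferentiableAt ℝ u x :=
  (H.hu2.differentiableOn (by norm_num)).differentiableAt (H.openD.mem_nhds hx)

lemma dφ (H : CoreData u v ζ h G b K C M) {x} (hx : 0 < u x) :
    DifferentiableAt ℝ (fun y => ζ y * v y) x := (H.hζ x).mul (H.dv hx)

lemma gφ (H : CoreData u v ζ h G b K C M) {x} (hx : 0 < u x) :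
    gradient (fun y => ζ y * v y) x = ζ x • gradient v x + v x • gradient ζ x :=
  gradient_mul' (H.hζ x) (H.dv hx)

lemma φ0 (H : CoreData u v ζ h G b K C M) {x} (hx : 0 < u x) : 0 ≤ ζ x * v x :=
  mul_nonneg (H.hζ0 x) (H.hv0 x hx)

lemma φM (H : CoreData u v ζ h G b K C M) {x} (hx : 0 < u x) : ζ x * v x ≤ M ^ 2 := by
  by_cases hk : x ∈ K
  · rw [sq]; exact mul_le_mul (H.bζ x ⟨hx, hk⟩) (H.bv x ⟨hx, hk⟩) (H.hv0 x hx) H.M0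
  · rw [H.hζK x hk, zero_mul]; positivity

lemma gφM (H : CoreData u v ζ h G b K C M) {x} (hx : 0 < u x) :
    ‖gradient (fun y => ζ y * v y) x‖ ≤ 2 * M ^ 2 := by
  by_cases hk : x ∈ K
  · rw [H.gφ hx]
    refine (norm_add_le _ _).trans ?_
    rw [norm_smul, norm_smul, Real.norm_eq_abs, Real.norm_eq_abs, abs_of_nonneg (H.hζ0 x),
      abs_of_nonneg (H.hv0 x hx)]
    have := mul_le_mul (H.bζ x ⟨hx, hk⟩) (H.bgv x ⟨hx, hk⟩) (norm_nonneg _) H.M0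
    have := mul_le_mul (H.bv x ⟨hx, hk⟩) (H.bgζ x ⟨hx, hk⟩) (norm_nonneg _) H.M0
    nlinarith
  · rw [gradient_eq_zero_off H.hK.isClosed (fun y hy => by rw [H.hζK y hy, zero_mul]) hk, norm_zero]
    positivity

lemma segφ (H : CoreData u v ζ h G b K C M) : SegLip {x | 0 < u x} (fun y => ζ y * v y) := by
  refine SegLip.of_gradient (fun x hx => H.dφ hx) (2 * M ^ 2) (by positivity) (fun x hx => ?_)
    (fun x hx => H.gφM hx)
  rw [abs_of_nonneg (H.φ0 hx)]
  have := H.φM hx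
  nlinarith [sq_nonneg M]

lemma segh (H : CoreData u v ζ h G b K C M) : SegLip {x | 0 < u x} h :=
  SegLip.of_gradient H.hhd M H.M0 H.hhM H.hhg

lemma m_lip (H : CoreData u v ζ h G b K C M) {ε : ℝ} (hε : 0 < ε) :
    ∃ C' : NNReal, LipschitzWith C' (mfun u (fun y => ζ y * v y) ε) :=
  mfun_lip hε H.hu H.hu0 H.segφ (fun _ hx => H.φ0 hx)

lemma m_nonneg (H : CoreData u v ζ h G b K C M) {ε : ℝ} (hε : 0 < ε) (x) :
    0 ≤ mfun u (fun y => ζ y * v y) ε x := by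
  by_cases hx : 0 < u x
  · rw [mfun_of_pos hx]; exact le_min hx.le (mul_nonneg hε.le (H.φ0 hx))
  · rw [mfun_of_not_pos hx]

lemma m_le (H : CoreData u v ζ h G b K C M) {ε : ℝ} (x) :
    mfun u (fun y => ζ y * v y) ε x ≤ u x := by
  by_cases hx : 0 < u x
  · rw [mfun_of_pos hx]; exact min_le_left _ _
  · rw [mfun_of_not_pos hx]; exact H.hu0 x

lemma m_offK (H : CoreData u v ζ h G b K C M) {ε : ℝ} (x) (hx : x ∉ K) :
    mfun u (fun y => ζ y * v y) ε x = 0 := by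
  by_cases hx' : 0 < u x
  · rw [mfun_of_pos hx', H.hζK x hx, zero_mul, mul_zero]; exact min_eq_right hx'.le
  · rw [mfun_of_not_pos hx']

lemma segm (H : CoreData u v ζ h G b K C M) {ε : ℝ} (hε : 0 < ε) :
    SegLip {x | 0 < u x} (fun y => min (u y) (ε * (ζ y * v y))) :=
  ((SegLip.const ε).mul H.segφ).min_lip H.hu H.hu0 (fun _ hx => mul_nonneg hε.le (H.φ0 hx))

lemma f2_lip (H : CoreData u v ζ h G b K C M) {ε : ℝ} (hε : 0 < ε) :
    ∃ C' : NNReal, LipschitzWith C' (fun x => ζ x * mfun u (fun y => ζ y * v y) ε x) := by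
  obtain ⟨C', hC'⟩ := (H.segζ.mul (H.segm hε)).lipschitz_indicator H.hu
    (fun x hx => le_antisymm (not_lt.1 hx) (H.hu0 x)) M H.M0 (fun x hx => by
      rw [abs_of_nonneg (mul_nonneg (H.hζ0 x) (le_min (H.hu0 x) (mul_nonneg hε.le (H.φ0 hx))))]
      have : ζ x ≤ M := by
        by_cases hk : x ∈ K
        · exact H.bζ x ⟨hx, hk⟩
        · rw [H.hζK x hk]; exact H.M0
      exact mul_le_mul this (min_le_left _ _) (le_min (H.hu0 x) (mul_nonneg hε.le (H.φ0 hx))) H.M0)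
  refine ⟨C', ?_⟩
  convert hC' using 1
  funext x
  by_cases hx : 0 < u x
  · rw [mfun_of_pos hx, indicator_of_mem (s := {x | 0 < u x}) hx]
  · rw [mfun_of_not_pos hx, indicator_of_notMem (s := {x | 0 < u x}) hx, mul_zero]

lemma f3_lip (H : CoreData u v ζ h G b K C M) {ε : ℝ} (hε : 0 < ε) :
    ∃ C' : NNReal, LipschitzWith C' (fun x => h x * (mfun u (fun y => ζ y * v y) ε x *
      (ε * (ζ x * v x) - mfun u (fun y => ζ y * v y) ε x))) := by
  obtain ⟨C', hC'⟩ := (H.segh.mul ((H.segm hε).mul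
    (((SegLip.const ε).mul H.segφ).sub (H.segm hε)))).lipschitz_indicator H.hu
    (fun x hx => le_antisymm (not_lt.1 hx) (H.hu0 x)) (M * (ε * M ^ 2))
    (mul_nonneg H.M0 (by positivity)) (fun x hx => by
      have h1 : 0 ≤ min (u x) (ε * (ζ x * v x)) := le_min (H.hu0 x) (mul_nonneg hε.le (H.φ0 hx))
      have h2 : 0 ≤ ε * (ζ x * v x) - min (u x) (ε * (ζ x * v x)) :=
        sub_nonneg.2 (min_le_right _ _)
      rw [abs_mul, abs_mul, abs_of_nonneg h1, abs_of_nonneg h2]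
      have h3 : ε * (ζ x * v x) - min (u x) (ε * (ζ x * v x)) ≤ ε * M ^ 2 := by
        have := mul_le_mul_of_nonneg_left (H.φM hx) hε.le
        linarith
      calc |h x| * (min (u x) (ε * (ζ x * v x)) * (ε * (ζ x * v x) - min (u x) (ε * (ζ x * v x))))
          ≤ M * (u x * (ε * M ^ 2)) := by
            have := H.hhM x hx
            have := H.M0
            have := H.hu0 x
            gcongr
            exact min_le_left _ _
        _ = _ := by ring)
  refine ⟨C', ?_⟩
  convert hC' using 1
  funext x
  by_cases hx : 0 < u x
  · rw [mfun_of_pos hx, indicator_of_mem (s := {x | 0 < u x}) hx]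
  · rw [mfun_of_not_pos hx, indicator_of_notMem (s := {x | 0 < u x}) hx, zero_mul, mul_zero]

lemma meas_strip (H : CoreData u v ζ h G b K C M) (ε : ℝ) :
    MeasurableSet (strip u (fun y => ζ y * v y) ε) := by
  have hc : ContinuousOn (fun y => ε * (ζ y * v y) - u y) {x | 0 < u x} := by
    have := H.hv2.continuousOn
    have h2 := H.hζ.continuous
    have h3 := H.hu.continuous
    fun_prop
  have ho := hc.isOpen_inter_preimage H.openD (isOpen_Iio (a := (0 : ℝ)))
  have e : strip u (fun y => ζ y * v y) ε =
      {x | 0 < u x} \ ({x | 0 < u x} ∩ (fun y => ε * (ζ y * v y) - u y) ⁻¹' Iio 0) := by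
    ext x
    simp only [strip, mem_setOf_eq, mem_diff, mem_inter_iff, mem_preimage, mem_Iio, not_and, not_lt]
    constructor
    · rintro ⟨h1, h2⟩; exact ⟨h1, fun _ => by linarith⟩
    · rintro ⟨h1, h2⟩; exact ⟨h1, by linarith [h2 h1]⟩
  rw [e]
  exact H.openD.measurableSet.diff ho.measurableSet

end CoreData

lemma integral_lin3 {α : Type*} [MeasurableSpace α] {μ : Measure α} {f g h : α → ℝ} {c : ℝ}
    (hf : Integrable f μ) (hg : Integrable g μ) (hh : Integrable h μ) :
    ∫ x, (f x - c * g x - h x) ∂μ = ∫ x, f x ∂μ - c * ∫ x, g x ∂μ - ∫ x, h x ∂μ := by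
  have := integral_sub (hf.sub (hg.const_mul c)) hh
  have h2 := integral_sub hf (hg.const_mul c)
  rw [integral_const_mul] at h2
  rw [← h2]
  exact this

lemma integral_lin3' {α : Type*} [MeasurableSpace α] {μ : Measure α} {f g h : α → ℝ} {c d e : ℝ}
    (hf : Integrable f μ) (hg : Integrable g μ) (hh : Integrable h μ) :
    ∫ x, (c * f x - d * g x + e * h x) ∂μ =
      c * ∫ x, f x ∂μ - d * ∫ x, g x ∂μ + e * ∫ x, h x ∂μ := by
  have := integral_add ((hf.const_mul c).sub (hg.const_mul d)) (hh.const_mul e)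
  have h2 := integral_sub (hf.const_mul c) (hg.const_mul d)
  rw [integral_const_mul, integral_const_mul] at h2
  rw [← h2, ← integral_const_mul e]
  exact this

namespace CoreData

variable {n : ℕ} {u v ζ h G b : EuclideanSpace ℝ (Fin n) → ℝ}
    {K : Set (EuclideanSpace ℝ (Fin n))} {C : NNReal} {M : ℝ}

/-- pointwise inequality, at points of differentiability of `m` -/
lemma ptwise (H : CoreData u v ζ h G b K C M) {ε η s : ℝ} (hε : 0 < ε) (hη0 : 0 < η) (hη : η ≤ 1)
    (hεs : ε * M ^ 2 < s)
    (hnear : ∀ x ∈ {x | 0 < u x} ∩ K, u x < s →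
      |‖gradient u x‖ ^ 2 - 1 + 2 * u x * h x| ≤ η * u x ∧
      - h x * v x + b x - η ≤ (inner ℝ (gradient v x) (gradient u x) : ℝ))
    {x : EuclideanSpace ℝ (Fin n)} (hx : x ∈ {x | 0 < u x} ∩ K)
    (hm : DifferentiableAt ℝ (mfun u (fun y => ζ y * v y) ε) x) :
    (‖gradient (mfun u (fun y => ζ y * v y) ε) x‖ ^ 2 -
        (strip u (fun y => ζ y * v y) ε).indicator (fun _ => (1 : ℝ)) x)
      - ε * ((inner ℝ (gradient (fun x => ζ x * mfun u (fun y => ζ y * v y) ε x) x) (gradient v x) : ℝ)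
        + ζ x * mfun u (fun y => ζ y * v y) ε x * G x)
      - (inner ℝ (gradient (fun x => h x * (mfun u (fun y => ζ y * v y) ε x *
      (ε * (ζ x * v x) - mfun u (fun y => ζ y * v y) ε x))) x) (gradient u x) : ℝ)
    ≤ ε ^ 2 * (v x ^ 2 * ‖gradient ζ x‖ ^ 2 - G x * ζ x ^ 2 * v x)
      - ε * (strip u (fun y => ζ y * v y) ε).indicator (fun x => ζ x * b x) x
      + 9 * M ^ 6 * (η * ε + ε ^ 2) *
        (strip u (fun y => ζ y * v y) ε).indicator (fun _ => (1 : ℝ)) x := by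
  have hx0 : 0 < u x := hx.1
  have hg := mfun_grad H.hu.continuous hx0 hm (H.du hx0) (H.dφ hx0)
  have d1 : DifferentiableAt ℝ (fun y => ε * (ζ y * v y)) x := (H.dφ hx0).const_mul ε
  rw [gradient_mul' (H.hζ x) hm,
    gradient_mul' (H.hhd x hx0) (hm.fun_mul (d1.fun_sub hm)),
    gradient_mul' hm (d1.fun_sub hm), gradient_sub' d1 hm, gradient_const_mul' (H.dφ hx0)]
  by_cases hS : u x ≤ ε * (ζ x * v x)
  · have hmem : x ∈ strip u (fun y => ζ y * v y) ε := ⟨hx0, hS⟩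
    have hmx : mfun u (fun y => ζ y * v y) ε x = u x := by rw [mfun_of_pos hx0, min_eq_left hS]
    rw [hg.1 hS, hmx, indicator_of_mem hmem, indicator_of_mem hmem, mul_one]
    have hus : u x < s := by
      have := mul_le_mul_of_nonneg_left (H.φM hx0) hε.le
      linarith
    obtain ⟨hp, hA⟩ := hnear x hx hus
    exact ptwise_on _ _ _ _ _ ε (ζ x) (v x) (G x) (h x) (u x) (b x) M η (H.gφ hx0) H.hM hη0 hη hε
      hx0.le hS (H.hζ0 x) (H.bζ x hx) (H.hv0 x hx0) (H.bv x hx) (H.hhM x hx0) (H.bG x hx)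
      (H.bgv x hx) (H.bgζ x hx) (H.bgu x hx) (H.hhg x hx0) hp hA
  · have hmem : x ∉ strip u (fun y => ζ y * v y) ε := fun hh => hS hh.2
    have hle := (not_le.1 hS).le
    have hmx : mfun u (fun y => ζ y * v y) ε x = ε * (ζ x * v x) := by
      rw [mfun_of_pos hx0, min_eq_right hle]
    rw [hg.2 hle, hmx, indicator_of_notMem hmem, indicator_of_notMem hmem, mul_zero, mul_zero,
      sub_zero, sub_zero, add_zero]
    exact (ptwise_off _ _ _ _ _ ε (ζ x) (v x) (G x) (h x) (H.gφ hx0)).le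

lemma ptwise_strip (H : CoreData u v ζ h G b K C M) {ε η s : ℝ} (hε : 0 < ε) (hη : η ≤ 1)
    (hεs : ε * M ^ 2 < s) (hε6 : ε * (6 * M ^ 3) ≤ 1)
    (hnear : ∀ x ∈ {x | 0 < u x} ∩ K, u x < s →
      |‖gradient u x‖ ^ 2 - 1 + 2 * u x * h x| ≤ η * u x ∧
      - h x * v x + b x - η ≤ (inner ℝ (gradient v x) (gradient u x) : ℝ))
    {x : EuclideanSpace ℝ (Fin n)} (hx : x ∈ {x | 0 < u x} ∩ K)
    (hm : DifferentiableAt ℝ (mfun u (fun y => ζ y * v y) ε) x) :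
    1 / 2 * (strip u (fun y => ζ y * v y) ε).indicator (fun _ => (1 : ℝ)) x - 2 * M ^ 3 * ε ≤
    (inner ℝ (gradient (mfun u (fun y => ζ y * v y) ε) x) (gradient u x) : ℝ) := by
  have hx0 : 0 < u x := hx.1
  have hM0 := H.M0
  have hg := mfun_grad H.hu.continuous hx0 hm (H.du hx0) (H.dφ hx0)
  by_cases hS : u x ≤ ε * (ζ x * v x)
  · have hmem : x ∈ strip u (fun y => ζ y * v y) ε := ⟨hx0, hS⟩
    rw [hg.1 hS, indicator_of_mem hmem, mul_one, real_inner_self_eq_norm_sq]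
    have hU : u x ≤ ε * M ^ 2 := hS.trans (mul_le_mul_of_nonneg_left (H.φM hx0) hε.le)
    have hp := (abs_le.1 (hnear x hx (by linarith)).1).1
    have hh := (abs_le.1 (H.hhM x hx0)).2
    have h1 : u x * h x ≤ u x * M := mul_le_mul_of_nonneg_left hh hx0.le
    have h2 : η * u x ≤ M * u x := mul_le_mul_of_nonneg_right (hη.trans H.hM) hx0.le
    have h3 : u x * M ≤ ε * M ^ 2 * M := mul_le_mul_of_nonneg_right hU hM0
    have : 0 ≤ 2 * M ^ 3 * ε := by positivity
    nlinarith
  · have hmem : x ∉ strip u (fun y => ζ y * v y) ε := fun hh => hS hh.2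
    rw [hg.2 (not_le.1 hS).le, indicator_of_notMem hmem, mul_zero, inner_smul_left]
    have h1 := abs_real_inner_le_norm (gradient (fun y => ζ y * v y) x) (gradient u x)
    have h2 := mul_le_mul (H.gφM hx0) (H.bgu x hx) (norm_nonneg _) (by positivity)
    have h3 := (abs_le.1 (h1.trans h2)).1
    have := mul_le_mul_of_nonneg_left h3 hε.le
    simp only [conj_trivial]
    nlinarith

lemma core (H : CoreData u v ζ h G b K C M)
    (hnear : ∀ η > 0, ∃ s > 0, ∀ x ∈ {x | 0 < u x} ∩ K, u x < s →
      |‖gradient u x‖ ^ 2 - 1 + 2 * u x * h x| ≤ η * u x ∧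
      - h x * v x + b x - η ≤ (inner ℝ (gradient v x) (gradient u x) : ℝ))
    (hmin : ∀ ε > 0, 0 ≤ ∫ x in {x | 0 < u x} ∩ K,
      (‖gradient (mfun u (fun y => ζ y * v y) ε) x‖ ^ 2 -
        (strip u (fun y => ζ y * v y) ε).indicator (fun _ => (1 : ℝ)) x)) :
    ∀ θ > 0, ∃ ε₀ > 0, ∀ ε, 0 < ε → ε < ε₀ →
      (∫ x in {x | 0 < u x} ∩ K, (G x * ζ x ^ 2 * v x - v x ^ 2 * ‖gradient ζ x‖ ^ 2))
      + ε⁻¹ * (∫ x in {x | 0 < u x} ∩ K,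
          (strip u (fun y => ζ y * v y) ε).indicator (fun x => ζ x * b x) x) ≤ θ := by
  intro θ hθ
  have hM0 := H.M0
  have hM1 := H.hM
  set D : Set (EuclideanSpace ℝ (Fin n)) := {x | 0 < u x} with hDdef
  set V : ℝ := (volume.restrict (D ∩ K)).real univ with hV
  have hFM : IsFiniteMeasure (volume.restrict (D ∩ K)) :=
    ⟨by rw [Measure.restrict_apply_univ]; exact lt_top_iff_ne_top.2 H.finDK⟩
  have hV0 : 0 ≤ V := measureReal_nonneg
  -- choose η
  set Λ : ℝ := 36 * M ^ 9 * V + 1 with hΛ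
  have hΛ0 : 0 < Λ := by positivity
  set η : ℝ := min 1 (θ / (2 * Λ)) with hηdef
  have hη0 : 0 < η := lt_min one_pos (by positivity)
  have hη1 : η ≤ 1 := min_le_left _ _
  obtain ⟨s, hs, hns⟩ := hnear η hη0
  refine ⟨min (s / M ^ 2) (min (1 / (6 * M ^ 3)) (θ / (2 * Λ))), by positivity, fun ε hε hε' => ?_⟩
  have hε1 : ε * M ^ 2 < s := by
    have := hε'.trans_le (min_le_left _ _)
    rwa [lt_div_iff₀ (by positivity)] at this
  have hε2 : ε * (6 * M ^ 3) ≤ 1 := by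
    have := (hε'.trans_le ((min_le_right _ _).trans (min_le_left _ _))).le
    rwa [le_div_iff₀ (by positivity)] at this
  have hε3 : ε ≤ θ / (2 * Λ) := (hε'.trans_le ((min_le_right _ _).trans (min_le_right _ _))).le
  set φ : EuclideanSpace ℝ (Fin n) → ℝ := fun y => ζ y * v y with hφ
  set m := mfun u φ ε with hm
  set S := strip u φ ε with hS
  have hSm : MeasurableSet S := H.meas_strip ε
  obtain ⟨C1, hC1⟩ : ∃ C' : NNReal, LipschitzWith C' m := H.m_lip hε
  obtain ⟨C2, hC2⟩ : ∃ C' : NNReal, LipschitzWith C' (fun x => ζ x * m x) := H.f2_lip hε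
  obtain ⟨C3, hC3⟩ : ∃ C' : NNReal, LipschitzWith C'
    (fun x => h x * (m x * (ε * (ζ x * v x) - m x))) := H.f3_lip hε
  have moff : ∀ x ∉ D, m x = 0 := fun x hx => mfun_of_not_pos hx
  have mK : ∀ x ∉ K, m x = 0 := fun x hx => H.m_offK x hx
  have i1 : ∫ x in D ∩ K, (inner ℝ (gradient m x) (gradient u x) : ℝ) = 0 :=
    ibp_harm H.openD H.hK hC1 moff mK H.hu2 M H.bgu H.huh
  have i2 : ∫ x in D ∩ K, ((inner ℝ (gradient (fun x => ζ x * m x) x) (gradient v x) : ℝ)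
      + ζ x * m x * G x) ≤ 0 :=
    ibp_ineq H.openD H.hK hC2 (fun x => mul_nonneg (H.hζ0 x) (H.m_nonneg hε x))
      (fun x hx => by rw [moff x hx, mul_zero]) (fun x hx => by rw [mK x hx, mul_zero])
      H.hv2 M H.bgv H.mG H.bG H.hlap
  have i3 : ∫ x in D ∩ K, (inner ℝ (gradient (fun x => h x * (m x * (ε * (ζ x * v x) - m x))) x)
      (gradient u x) : ℝ) = 0 :=
    ibp_harm H.openD H.hK hC3 (fun x hx => by rw [moff x hx, zero_mul, mul_zero])
      (fun x hx => by rw [mK x hx, zero_mul, mul_zero]) H.hu2 M H.bgu H.huh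
  have i0 := hmin ε hε
  -- integrability
  have gm : ∀ f : EuclideanSpace ℝ (Fin n) → ℝ,
      AEStronglyMeasurable (gradient f) (volume.restrict (D ∩ K)) :=
    fun f => (measurable_gradient' f).aestronglyMeasurable
  have innb : ∀ f g : EuclideanSpace ℝ (Fin n) → ℝ, ∀ C' : NNReal, LipschitzWith C' f →
      (∀ x ∈ D ∩ K, ‖gradient g x‖ ≤ M) →
      IntegrableOn (fun x => (inner ℝ (gradient f x) (gradient g x) : ℝ)) (D ∩ K) := by
    intro f g C' hf hg
    refine integrableOn_of_bdd H.measDK H.finDK ((gm f).inner (gm g)) (C' * M) fun x hx => ?_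
    exact (abs_real_inner_le_norm _ _).trans (mul_le_mul (norm_gradient_le_of_lipschitz hf x)
      (hg x hx) (norm_nonneg _) C'.2)
  have mζ : AEStronglyMeasurable ζ (volume.restrict (D ∩ K)) :=
    H.hζ.continuous.aestronglyMeasurable
  have mv : AEStronglyMeasurable v (volume.restrict (D ∩ K)) :=
    (H.hv2.continuousOn.mono inter_subset_left).aestronglyMeasurable H.measDK
  have n1 : IntegrableOn (fun x => (inner ℝ (gradient m x) (gradient u x) : ℝ)) (D ∩ K) :=
    innb m u C1 hC1 H.bgu
  have n2a := innb _ v C2 hC2 H.bgv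
  have n2b : IntegrableOn (fun x => ζ x * m x * G x) (D ∩ K) := by
    refine integrableOn_of_bdd H.measDK H.finDK
      ((mζ.mul hC1.continuous.aestronglyMeasurable).mul H.mG) (M * (ε * M ^ 2) * M) fun x hx => ?_
    have h1 : m x ≤ ε * M ^ 2 := by
      rw [hm, mfun_of_pos hx.1]
      exact (min_le_right _ _).trans (mul_le_mul_of_nonneg_left (H.φM hx.1) hε.le)
    have h0 := H.m_nonneg hε x
    rw [abs_mul, abs_of_nonneg (mul_nonneg (H.hζ0 x) h0)]
    have := H.bζ x hx
    have := H.bG x hx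
    have := H.hζ0 x
    gcongr
  have n2 : IntegrableOn (fun x => (inner ℝ (gradient (fun x => ζ x * m x) x) (gradient v x) : ℝ)
      + ζ x * m x * G x) (D ∩ K) := n2a.add n2b
  have n3 := innb _ u C3 hC3 H.bgu
  have nS : IntegrableOn (S.indicator (fun _ => (1 : ℝ))) (D ∩ K) :=
    (integrable_const (1 : ℝ)).indicator hSm
  have n0 : IntegrableOn (fun x => ‖gradient m x‖ ^ 2 - S.indicator (fun _ => (1 : ℝ)) x) (D ∩ K) := by
    refine Integrable.sub ?_ nS
    refine integrableOn_of_bdd H.measDK H.finDK ((gm m).norm.pow 2) (C1 ^ 2) fun x hx => ?_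
    rw [abs_of_nonneg (by positivity)]
    have := norm_gradient_le_of_lipschitz hC1 x
    gcongr
  have nb : IntegrableOn (S.indicator (fun x => ζ x * b x)) (D ∩ K) := by
    refine Integrable.indicator ?_ hSm
    refine integrableOn_of_bdd H.measDK H.finDK (mζ.mul H.mb) (M * M) fun x hx => ?_
    rw [abs_mul, abs_of_nonneg (H.hζ0 x)]
    exact mul_le_mul (H.bζ x hx) (H.bb x hx) (abs_nonneg _) hM0
  have nQ : IntegrableOn (fun x => v x ^ 2 * ‖gradient ζ x‖ ^ 2 - G x * ζ x ^ 2 * v x) (D ∩ K) := by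
    refine Integrable.sub ?_ ?_
    · refine integrableOn_of_bdd H.measDK H.finDK ((mv.pow 2).mul ((gm ζ).norm.pow 2))
        (M ^ 2 * M ^ 2) fun x hx => ?_
      rw [abs_of_nonneg (by positivity)]
      have := H.bv x hx
      have := H.hv0 x hx.1
      have := H.bgζ x hx
      gcongr
    · refine integrableOn_of_bdd H.measDK H.finDK ((H.mG.mul (mζ.pow 2)).mul mv)
        (M * M ^ 2 * M) fun x hx => ?_
      have h1 := H.bv x hx
      have h2 := H.hv0 x hx.1
      have h3 := H.bζ x hx
      have h4 := H.bG x hx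
      have h5 := H.hζ0 x
      rw [abs_mul, abs_mul, abs_of_nonneg h2, abs_of_nonneg (sq_nonneg (ζ x))]
      gcongr
  have hae : ∀ᵐ x ∂(volume.restrict (D ∩ K)), DifferentiableAt ℝ m x ∧ x ∈ D ∩ K := by
    filter_upwards [ae_restrict_of_ae hC1.ae_differentiableAt, ae_restrict_mem H.measDK] with x h1 h2
      using ⟨h1, h2⟩
  -- measure of the strip
  have hSV : ∫ x in D ∩ K, S.indicator (fun _ => (1 : ℝ)) x ≤ 4 * M ^ 3 * ε * V := by
    have := integral_mono_ae (μ := volume.restrict (D ∩ K))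
      (f := fun x => 1 / 2 * S.indicator (fun _ => (1 : ℝ)) x - 2 * M ^ 3 * ε)
      ((nS.const_mul (1 / 2)).sub (integrable_const _)) n1
      (by filter_upwards [hae] with x hx using H.ptwise_strip hε hη1 hε1 hε2 hns hx.2 hx.1)
    rw [i1, integral_sub (nS.const_mul (1 / 2)) (integrable_const _), integral_const_mul,
      integral_const, smul_eq_mul, ← hV] at this
    linarith
  have hS0 : 0 ≤ ∫ x in D ∩ K, S.indicator (fun _ => (1 : ℝ)) x :=
    integral_nonneg fun x => indicator_nonneg (fun _ _ => zero_le_one) x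
  have main := integral_mono_ae (μ := volume.restrict (D ∩ K))
      ((n0.sub (n2.const_mul ε)).sub n3)
      (((nQ.const_mul (ε ^ 2)).sub (nb.const_mul ε)).add
        (nS.const_mul (9 * M ^ 6 * (η * ε + ε ^ 2))))
      (by filter_upwards [hae] with x hx using H.ptwise hε hη0 hη1 hε1 hns hx.2 hx.1)
  simp only [Pi.sub_apply, Pi.add_apply] at main
  rw [integral_lin3 n0 n2 n3, integral_lin3' nQ nb nS, i3] at main
  have hQ : ∫ x in D ∩ K, (G x * ζ x ^ 2 * v x - v x ^ 2 * ‖gradient ζ x‖ ^ 2) =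
      - ∫ x in D ∩ K, (v x ^ 2 * ‖gradient ζ x‖ ^ 2 - G x * ζ x ^ 2 * v x) := by
    rw [← integral_neg]; congr 1; funext x; ring
  rw [hQ]
  set Q := ∫ x in D ∩ K, (v x ^ 2 * ‖gradient ζ x‖ ^ 2 - G x * ζ x ^ 2 * v x)
  set Bb := ∫ x in D ∩ K, S.indicator (fun x => ζ x * b x) x
  set SS := ∫ x in D ∩ K, S.indicator (fun _ => (1 : ℝ)) x
  have h1 : 9 * M ^ 6 * (η * ε + ε ^ 2) * SS ≤ 9 * M ^ 6 * (η * ε + ε ^ 2) * (4 * M ^ 3 * ε * V) :=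
    mul_le_mul_of_nonneg_left hSV (by positivity)
  have h2 : 0 ≤ ε ^ 2 * Q - ε * Bb + ε ^ 2 * ((η + ε) * (36 * M ^ 9 * V)) := by
    have e : 9 * M ^ 6 * (η * ε + ε ^ 2) * (4 * M ^ 3 * ε * V) =
      ε ^ 2 * ((η + ε) * (36 * M ^ 9 * V)) := by ring
    have : 0 ≤ -ε * ∫ x in D ∩ K, ((inner ℝ (gradient (fun x => ζ x * m x) x) (gradient v x) : ℝ)
      + ζ x * m x * G x) := by nlinarith
    linarith
  have h3 : 0 ≤ Q - ε⁻¹ * Bb + (η + ε) * (36 * M ^ 9 * V) := by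
    have := mul_nonneg (by positivity : 0 ≤ (ε ^ 2)⁻¹) h2
    have e : (ε ^ 2)⁻¹ * (ε ^ 2 * Q - ε * Bb + ε ^ 2 * ((η + ε) * (36 * M ^ 9 * V))) =
      Q - ε⁻¹ * Bb + (η + ε) * (36 * M ^ 9 * V) := by field_simp
    linarith
  have h4 : (η + ε) * (36 * M ^ 9 * V) ≤ θ := by
    have a1 : η + ε ≤ θ / Λ := by
      have : η ≤ θ / (2 * Λ) := min_le_right _ _
      have e : θ / Λ = θ / (2 * Λ) + θ / (2 * Λ) := by field_simp; ring
      linarith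
    calc (η + ε) * (36 * M ^ 9 * V) ≤ (θ / Λ) * Λ := by
          gcongr; rw [hΛ]; linarith
      _ = θ := by field_simp
  linarith

end CoreData

namespace CoreData

variable {n : ℕ} {u v ζ h G b : EuclideanSpace ℝ (Fin n) → ℝ}
    {K : Set (EuclideanSpace ℝ (Fin n))} {C : NNReal} {M : ℝ}

lemma energy_step (H : CoreData u v ζ h G b K C M)
    (Γ : Subgroup (EuclideanSpace ℝ (Fin n) ≃ₗᵢ[ℝ] EuclideanSpace ℝ (Fin n)))
    (hmin : IsSymMinimizer Γ u) (hζs : IsSymmetricUnder Γ ζ) (hvs : IsSymmetricUnder Γ v) :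
    ∀ ε > 0, 0 ≤ ∫ x in {x | 0 < u x} ∩ K,
      (‖gradient (mfun u (fun y => ζ y * v y) ε) x‖ ^ 2 -
        (strip u (fun y => ζ y * v y) ε).indicator (fun _ => (1 : ℝ)) x) := by
  intro ε hε
  obtain ⟨R, hR0, hR⟩ : ∃ R : ℝ, 0 < R ∧ K ⊆ ball 0 R := by
    obtain ⟨R, hR⟩ := H.hK.isBounded.subset_ball 0
    exact ⟨max R 1, by positivity, hR.trans (ball_subset_ball (le_max_left _ _))⟩
  set D : Set (EuclideanSpace ℝ (Fin n)) := {x | 0 < u x} with hDdef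
  set φ : EuclideanSpace ℝ (Fin n) → ℝ := fun y => ζ y * v y with hφ
  set m := mfun u φ ε with hm
  set S := strip u φ ε with hS
  have hSm : MeasurableSet S := H.meas_strip ε
  obtain ⟨C1, hC1⟩ : ∃ C' : NNReal, LipschitzWith C' m := H.m_lip hε
  have moff : ∀ x ∉ D, m x = 0 := fun x hx => mfun_of_not_pos hx
  have mK : ∀ x ∉ K, m x = 0 := fun x hx => H.m_offK x hx
  have i1 : ∫ x in D ∩ K, (inner ℝ (gradient m x) (gradient u x) : ℝ) = 0 :=
    ibp_harm H.openD H.hK hC1 moff mK H.hu2 M H.bgu H.huh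
  set w : EuclideanSpace ℝ (Fin n) → ℝ := fun x => u x - m x with hw
  have hwl : LipschitzWith (C + C1) w := H.hu.sub hC1
  have hw0 : ∀ x, 0 ≤ w x := fun x => sub_nonneg.2 (H.m_le x)
  have hws : IsSymmetricUnder Γ w := by
    intro g hg x
    have e1 : u (g x) = u x := hmin.2.2.1 g hg x
    have e2 : φ (g x) = φ x := by simp only [hφ]; rw [hζs g hg x, hvs g hg x]
    have e3 : m (g x) = m x := by
      by_cases hx : 0 < u x
      · rw [hm, mfun_of_pos hx, mfun_of_pos (by rw [e1]; exact hx), e1, e2]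
      · rw [hm, mfun_of_not_pos hx, mfun_of_not_pos (by rw [e1]; exact hx)]
    simp only [hw]; rw [e1, e3]
  have hE := hmin.2.2.2 R hR0 w hw0 hwl.locallyLipschitz hws (fun x hx => by
    simp only [hw]; rw [mK x (fun hk => hx (hR hk)), sub_zero])
  -- integrability of energies
  have eint : ∀ (f : EuclideanSpace ℝ (Fin n) → ℝ) (C' : NNReal), LipschitzWith C' f →
      IntegrableOn (fun x => ‖gradient f x‖ ^ 2 +
        (1 : ℝ) ^ 2 * Set.indicator {y | 0 < f y} (fun _ => (1 : ℝ)) x) (ball 0 R) := by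
    intro f C' hf
    have hmeas : MeasurableSet {y | 0 < f y} := (isOpen_lt continuous_const hf.continuous).measurableSet
    refine integrableOn_of_bdd measurableSet_ball measure_ball_lt_top.ne ?_ (C' ^ 2 + 1) fun x _ => ?_
    · exact (((measurable_gradient' f).norm.pow_const 2).add
        ((measurable_const.indicator hmeas).const_mul _)).aestronglyMeasurable
    · have h1 := norm_gradient_le_of_lipschitz hf x
      have h2 : 0 ≤ Set.indicator {y | 0 < f y} (fun _ => (1 : ℝ)) x :=
        indicator_nonneg (fun _ _ => zero_le_one) x
      have h3 : Set.indicator {y | 0 < f y} (fun _ => (1 : ℝ)) x ≤ 1 :=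
        indicator_le_self' (fun _ _ => zero_le_one) x
      rw [abs_of_nonneg (by positivity)]
      have : ‖gradient f x‖ ^ 2 ≤ (C' : ℝ) ^ 2 := by gcongr
      linarith
  have hdiff : 0 ≤ ∫ x in ball 0 R, ((‖gradient w x‖ ^ 2 +
        (1 : ℝ) ^ 2 * Set.indicator {y | 0 < w y} (fun _ => (1 : ℝ)) x) - (‖gradient u x‖ ^ 2 +
        (1 : ℝ) ^ 2 * Set.indicator {y | 0 < u y} (fun _ => (1 : ℝ)) x)) := by
    rw [integral_sub (eint w _ hwl) (eint u _ H.hu)]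
    unfold acEnergy at hE
    linarith
  have hpt : ∀ᵐ x ∂(volume.restrict (ball (0 : EuclideanSpace ℝ (Fin n)) R)),
      ((‖gradient w x‖ ^ 2 +
        (1 : ℝ) ^ 2 * Set.indicator {y | 0 < w y} (fun _ => (1 : ℝ)) x) - (‖gradient u x‖ ^ 2 +
        (1 : ℝ) ^ 2 * Set.indicator {y | 0 < u y} (fun _ => (1 : ℝ)) x)) =
      (D ∩ K).indicator (fun x => (‖gradient m x‖ ^ 2 - S.indicator (fun _ => (1 : ℝ)) x)
        - 2 * (inner ℝ (gradient m x) (gradient u x) : ℝ)) x := by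
    filter_upwards [ae_restrict_of_ae hC1.ae_differentiableAt] with x hmd
    by_cases hx : 0 < u x
    · have hux : x ∈ {y | 0 < u y} := hx
      by_cases hk : x ∈ K
      · have hDK : x ∈ D ∩ K := ⟨hx, hk⟩
        rw [indicator_of_mem hDK, indicator_of_mem hux]
        have hgw : gradient w x = gradient u x - gradient m x := gradient_sub' (H.du hx) hmd
        rw [hgw, norm_sub_sq_real, real_inner_comm]
        have hind : Set.indicator {y | 0 < w y} (fun _ => (1 : ℝ)) x =
            1 - S.indicator (fun _ => (1 : ℝ)) x := by
          by_cases hs : u x ≤ ε * φ x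
          · have h1 : x ∈ S := ⟨hx, hs⟩
            have h2 : x ∉ {y | 0 < w y} := by
              have : w x = 0 := by
                simp only [hw]; rw [hm, mfun_of_pos hx, min_eq_left hs, sub_self]
              intro h; exact absurd h (by show ¬ (0 < w x); rw [this]; exact lt_irrefl _)
            rw [indicator_of_mem h1, indicator_of_notMem h2, sub_self]
          · have h1 : x ∉ S := fun h => hs h.2
            have h2 : x ∈ {y | 0 < w y} := by
              show 0 < w x
              simp only [hw]; rw [hm, mfun_of_pos hx, min_eq_right (not_le.1 hs).le]
              linarith [not_le.1 hs]
            rw [indicator_of_notMem h1, indicator_of_mem h2, sub_zero]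
        rw [hind]; ring
      · have hDK : x ∉ D ∩ K := fun h => hk h.2
        rw [indicator_of_notMem hDK]
        have hev : w =ᶠ[nhds x] u := by
          filter_upwards [H.hK.isClosed.isOpen_compl.mem_nhds hk] with y hy
          simp only [hw]; rw [mK y hy, sub_zero]
        have hxw : x ∈ {y | 0 < w y} := by
          show 0 < w x; rw [hev.self_of_nhds]; exact hx
        rw [gradient_congr' hev, indicator_of_mem hux, indicator_of_mem hxw, sub_self]
    · have hDK : x ∉ D ∩ K := fun h => hx h.1
      have hux : u x = 0 := le_antisymm (not_lt.1 hx) (H.hu0 x)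
      have hwx : w x = 0 := by simp only [hw]; rw [moff x hx, hux, sub_zero]
      rw [indicator_of_notMem hDK, indicator_of_notMem (s := {y | 0 < u y}) hx,
        indicator_of_notMem (s := {y | 0 < w y}) (by show ¬ (0 < w x); rw [hwx]; exact lt_irrefl _),
        gradient_eq_zero_of_isLocalMin (f := w) (Filter.Eventually.of_forall fun y => by
          rw [hwx]; exact hw0 y),
        gradient_eq_zero_of_isLocalMin (f := u) (Filter.Eventually.of_forall fun y => by
          rw [hux]; exact H.hu0 y), sub_self]
  rw [integral_congr_ae hpt, integral_indicator H.measDK,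
    Measure.restrict_restrict H.measDK,
    inter_eq_self_of_subset_left (inter_subset_right.trans hR)] at hdiff
  have hFM : IsFiniteMeasure (volume.restrict (D ∩ K)) :=
    ⟨by rw [Measure.restrict_apply_univ]; exact lt_top_iff_ne_top.2 H.finDK⟩
  have gm : ∀ f : EuclideanSpace ℝ (Fin n) → ℝ,
      AEStronglyMeasurable (gradient f) (volume.restrict (D ∩ K)) :=
    fun f => (measurable_gradient' f).aestronglyMeasurable
  have n1 : IntegrableOn (fun x => 2 * (inner ℝ (gradient m x) (gradient u x) : ℝ)) (D ∩ K) := by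
    refine Integrable.const_mul ?_ 2
    refine integrableOn_of_bdd H.measDK H.finDK ((gm m).inner (gm u)) (C1 * M) fun x hx => ?_
    exact (abs_real_inner_le_norm _ _).trans (mul_le_mul (norm_gradient_le_of_lipschitz hC1 x)
      (H.bgu x hx) (norm_nonneg _) C1.2)
  have n0 : IntegrableOn (fun x => ‖gradient m x‖ ^ 2 - S.indicator (fun _ => (1 : ℝ)) x) (D ∩ K) := by
    refine Integrable.sub ?_ ((integrable_const (1 : ℝ)).indicator hSm)
    refine integrableOn_of_bdd H.measDK H.finDK ((gm m).norm.pow 2) (C1 ^ 2) fun x hx => ?_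
    rw [abs_of_nonneg (by positivity)]
    have := norm_gradient_le_of_lipschitz hC1 x
    gcongr
  rw [integral_sub n0 n1, integral_const_mul, i1] at hdiff
  linarith

end CoreData

/-! ### Local geometry of the free boundary -/

/-- The standing assumptions on `u` and its smooth extension. -/
structure FB {n : ℕ} (u U : EuclideanSpace ℝ (Fin n) → ℝ) (W : Set (EuclideanSpace ℝ (Fin n)))
    (C : NNReal) : Prop where
  hu : LipschitzWith C u
  hu0 : ∀ x, 0 ≤ u x
  hu00 : u 0 = 0
  huh : ∀ x ∈ {x | 0 < u x}, lap u x = 0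
  hW : IsOpen W
  hWsup : closure {x | 0 < u x} \ {0} ⊆ W
  hUsm : ContDiffOn ℝ (⊤ : ℕ∞) U W
  hUeq : ∀ x ∈ closure {x | 0 < u x}, U x = u x
  hgrad1 : ∀ x ∈ freeBoundary u, ‖gradient U x‖ = 1
  hsurf : ∀ x ∈ freeBoundary u, ∃ ε > 0,
      freeBoundary u ∩ ball x ε = {y ∈ ball x ε | U y = 0}

namespace FB

variable {n : ℕ} {u U : EuclideanSpace ℝ (Fin n) → ℝ} {W : Set (EuclideanSpace ℝ (Fin n))}
    {C : NNReal}

lemma openD (H : FB u U W C) : IsOpen {x | 0 < u x} := isOpen_lt continuous_const H.hu.continuous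

lemma ne0 (H : FB u U W C) {x} (hx : 0 < u x) : x ≠ 0 := by
  rintro rfl; rw [H.hu00] at hx; exact lt_irrefl _ hx

lemma DW (H : FB u U W C) {x} (hx : 0 < u x) : x ∈ W :=
  H.hWsup ⟨subset_closure hx, H.ne0 hx⟩

lemma frontier_zero (H : FB u U W C) {x} (hx : x ∈ frontier {x | 0 < u x}) : u x = 0 := by
  rw [H.openD.frontier_eq] at hx
  exact le_antisymm (not_lt.1 hx.2) (H.hu0 x)

lemma frontier_U (H : FB u U W C) {x} (hx : x ∈ frontier {x | 0 < u x}) : U x = 0 := by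
  rw [H.hUeq x (frontier_subset_closure hx), H.frontier_zero hx]

lemma eqD (H : FB u U W C) {x} (hx : 0 < u x) : u =ᶠ[nhds x] U := by
  filter_upwards [H.openD.mem_nhds hx] with y hy using (H.hUeq y (subset_closure hy)).symm

lemma gradD (H : FB u U W C) {x} (hx : 0 < u x) : gradient u x = gradient U x :=
  gradient_congr' (H.eqD hx)

lemma hu2 (H : FB u U W C) : ContDiffOn ℝ 2 u {x | 0 < u x} := by
  have h1 : ContDiffOn ℝ 2 U {x | 0 < u x} := (H.hUsm.mono fun x hx => H.DW hx).of_le (by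
    have : ((2 : ℕ∞) : WithTop ℕ∞) ≤ ((⊤ : ℕ∞) : WithTop ℕ∞) := WithTop.coe_le_coe.2 le_top
    exact this)
  exact h1.congr fun x hx => (H.hUeq x (subset_closure hx)).symm

lemma FBW (H : FB u U W C) {z} (hz : z ∈ freeBoundary u) : z ∈ W :=
  H.hWsup ⟨frontier_subset_closure hz.1, hz.2⟩

lemma grad_smooth (H : FB u U W C) : ContDiffOn ℝ (⊤ : ℕ∞) (gradient U) W := by
  have := H.hUsm.fderiv_of_isOpen H.hW (m := (⊤ : ℕ∞)) (by exact_mod_cast le_rfl)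
  exact ((InnerProductSpace.toDual ℝ (EuclideanSpace ℝ (Fin n))).symm.toContinuousLinearEquiv.contDiff.comp_contDiffOn this)

lemma diffU (H : FB u U W C) {x} (hx : x ∈ W) : DifferentiableAt ℝ U x :=
  (H.hUsm.differentiableOn (by simp)).differentiableAt (H.hW.mem_nhds hx)

lemma diffG (H : FB u U W C) {x} (hx : x ∈ W) : DifferentiableAt ℝ (gradient U) x :=
  (H.grad_smooth.differentiableOn (by simp)).differentiableAt (H.hW.mem_nhds hx)

lemma meanCurv_eq (H : FB u U W C) {x} (hx : x ∈ W) :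
    meanCurv U x = - (inner ℝ (fderiv ℝ (gradient U) x (gradient U x)) (gradient U x) : ℝ) := by
  unfold meanCurv nuVec
  rw [fderiv_inner_apply ℝ (H.diffG hx) (differentiableAt_const _)]
  simp

lemma meanCurv_smooth (H : FB u U W C) : ContDiffOn ℝ (⊤ : ℕ∞) (meanCurv U) W := by
  have h1 := H.grad_smooth
  have h2 := H.grad_smooth.fderiv_of_isOpen H.hW (m := (⊤ : ℕ∞)) (by exact_mod_cast le_rfl)
  have : ContDiffOn ℝ (⊤ : ℕ∞) (fun x =>
      - (inner ℝ (fderiv ℝ (gradient U) x (gradient U x)) (gradient U x) : ℝ)) W :=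
    ((h2.clm_apply h1).inner ℝ h1).neg
  exact this.congr fun x hx => H.meanCurv_eq hx

/-- the defect function `‖∇U‖² - 1 + 2 U H` -/
lemma k_smooth (H : FB u U W C) : ContDiffOn ℝ (⊤ : ℕ∞)
    (fun x => ‖gradient U x‖ ^ 2 - 1 + 2 * U x * meanCurv U x) W := by
  have h1 := H.grad_smooth
  have h2 := H.meanCurv_smooth
  have h3 := H.hUsm
  exact ((h1.norm_sq ℝ).sub contDiffOn_const).add ((contDiffOn_const.mul h3).mul h2)

lemma k_zero (H : FB u U W C) {z} (hz : z ∈ freeBoundary u) :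
    ‖gradient U z‖ ^ 2 - 1 + 2 * U z * meanCurv U z = 0 := by
  rw [H.hgrad1 z hz, H.frontier_U hz.1]; ring

lemma k_fderiv_zero (H : FB u U W C) {z} (hz : z ∈ freeBoundary u) :
    fderiv ℝ (fun x => ‖gradient U x‖ ^ 2 - 1 + 2 * U x * meanCurv U x) z = 0 := by
  have hzW := H.FBW hz
  have hWz := H.hW.mem_nhds hzW
  have hN := H.hgrad1 z hz
  have hUz := H.frontier_U hz.1
  -- strict derivatives
  have sU : HasStrictFDerivAt U (fderiv ℝ U z) z :=
    (H.hUsm.contDiffAt hWz).hasStrictFDerivAt (by simp)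
  have cq : ContDiffAt ℝ (⊤ : ℕ∞) (fun x => ‖gradient U x‖ ^ 2) z :=
    (H.grad_smooth.norm_sq ℝ).contDiffAt hWz
  have sq' : HasStrictFDerivAt (fun x => ‖gradient U x‖ ^ 2)
      (fderiv ℝ (fun x => ‖gradient U x‖ ^ 2) z) z := cq.hasStrictFDerivAt (by simp)
  have hext : IsLocalExtrOn (fun x => ‖gradient U x‖ ^ 2) {x | U x = U z} z := by
    left
    obtain ⟨ε, hε, he⟩ := H.hsurf z hz
    have : ∀ᶠ x in nhdsWithin z {x | U x = U z}, x ∈ ball z ε ∧ U x = 0 := by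
      filter_upwards [mem_nhdsWithin_of_mem_nhds (ball_mem_nhds z hε), self_mem_nhdsWithin] with x h1 h2
      exact ⟨h1, by rw [← hUz]; exact h2⟩
    filter_upwards [this] with x hx
    have hxF : x ∈ freeBoundary u := by
      have : x ∈ freeBoundary u ∩ ball z ε := by rw [he]; exact hx
      exact this.1
    show ‖gradient U z‖ ^ 2 ≤ ‖gradient U x‖ ^ 2
    rw [hN, H.hgrad1 x hxF]
  obtain ⟨a, b, hab, hl⟩ := hext.exists_multipliers_of_hasStrictFDerivAt_1d sU sq'
  have hUN : fderiv ℝ U z (gradient U z) = 1 := by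
    rw [← inner_gradient_eq, real_inner_self_eq_norm_sq, hN]; norm_num
  have hqN : fderiv ℝ (fun x => ‖gradient U x‖ ^ 2) z (gradient U z) = -2 * meanCurv U z := by
    rw [H.meanCurv_eq hzW]
    have : (fun x => ‖gradient U x‖ ^ 2) = fun x => (inner ℝ (gradient U x) (gradient U x) : ℝ) := by
      funext x; rw [real_inner_self_eq_norm_sq]
    rw [this, fderiv_inner_apply ℝ (H.diffG hzW) (H.diffG hzW), real_inner_comm]
    ring
  have hlN : a + b * (-2 * meanCurv U z) = 0 := by
    have := congrArg (fun f => f (gradient U z)) hl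
    simpa [hUN, hqN] using this
  have hb : b ≠ 0 := by
    rintro rfl
    apply hab
    simp at hlN
    simp [hlN]
  have hq : fderiv ℝ (fun x => ‖gradient U x‖ ^ 2) z = (-2 * meanCurv U z) • fderiv ℝ U z := by
    ext y
    have := congrArg (fun f => f y) hl
    simp only [add_apply, smul_apply, smul_eq_mul,
      zero_apply] at this
    simp only [smul_apply, smul_eq_mul]
    have ha : a = b * (2 * meanCurv U z) := by linarith
    rw [ha] at this
    have : b * (2 * meanCurv U z * fderiv ℝ U z y + fderiv ℝ (fun x => ‖gradient U x‖ ^ 2) z y) = 0 := by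
      linarith
    rcases mul_eq_zero.1 this with h | h
    · exact absurd h hb
    · linarith
  have dH : DifferentiableAt ℝ (meanCurv U) z :=
    (H.meanCurv_smooth.differentiableOn (by simp)).differentiableAt hWz
  have h1 : HasFDerivAt (fun x => ‖gradient U x‖ ^ 2 - 1 + 2 * U x * meanCurv U x)
      (fderiv ℝ (fun x => ‖gradient U x‖ ^ 2) z +
        ((2 * U z) • fderiv ℝ (meanCurv U) z + meanCurv U z • ((2 : ℝ) • fderiv ℝ U z))) z :=
    (sq'.hasFDerivAt.sub_const 1).add
      (((H.diffU hzW).hasFDerivAt.const_mul 2).mul dH.hasFDerivAt)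
  rw [h1.fderiv, hq, hUz]
  ext y
  simp
  ring

/-- monotonicity in the normal direction near a free boundary point -/
lemma nbhd (H : FB u U W C) {z} (hz : z ∈ freeBoundary u) : ∃ δ > 0, ball z δ ⊆ W ∧
    (∀ y ∈ ball z δ, U y = 0 → y ∈ freeBoundary u) ∧
    (∀ y ∈ ball z δ, y ≠ 0) ∧
    ∀ x ∈ ball z δ, ∀ t, 0 ≤ t → x + t • gradient U z ∈ ball z δ →
      U x + t / 2 ≤ U (x + t • gradient U z) := by
  have hzW := H.FBW hz
  obtain ⟨ε, hε, he⟩ := H.hsurf z hz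
  have hc : ContinuousAt (fun y => fderiv ℝ U y (gradient U z)) z := by
    have h1 : ContinuousAt (gradient U) z :=
      (H.grad_smooth.continuousOn).continuousAt (H.hW.mem_nhds hzW)
    have : (fun y => fderiv ℝ U y (gradient U z)) = fun y => (inner ℝ (gradient U y) (gradient U z) : ℝ) := by
      funext y; rw [inner_gradient_eq]
    rw [this]
    exact h1.inner continuousAt_const
  have hz1 : fderiv ℝ U z (gradient U z) = 1 := by
    rw [← inner_gradient_eq, real_inner_self_eq_norm_sq, H.hgrad1 z hz]; norm_num
  have hev : ∀ᶠ y in nhds z, 1 / 2 < fderiv ℝ U y (gradient U z) :=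
    hc.eventually (lt_mem_nhds (by simp only [hz1]; norm_num))
  have evW : ∀ᶠ y in nhds z, y ∈ W := H.hW.mem_nhds hzW
  have evB : ∀ᶠ y in nhds z, y ∈ ball z ε := ball_mem_nhds z hε
  have hne : ∀ᶠ y in nhds z, y ≠ 0 := isOpen_ne.mem_nhds hz.2
  obtain ⟨δ, hδ, hb⟩ := Metric.eventually_nhds_iff_ball.1
    ((evW.and hev).and (evB.and hne))
  refine ⟨δ, hδ, fun y hy => (hb y hy).1.1, fun y hy h0 => ?_, fun y hy => (hb y hy).2.2, ?_⟩
  · have : y ∈ freeBoundary u ∩ ball z ε := by rw [he]; exact ⟨(hb y hy).2.1, h0⟩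
    exact this.1
  · intro x hx t ht hxt
    have hseg : ∀ s ∈ Icc 0 t, x + s • gradient U z ∈ ball z δ := by
      intro s hs
      rcases ht.eq_or_lt with rfl | ht'
      · have : s = 0 := le_antisymm hs.2 hs.1
        simpa [this] using hx
      have hcv := (convex_ball z δ) hx hxt (a := 1 - s / t) (b := s / t)
        (by rw [sub_nonneg, div_le_one ht']; exact hs.2) (div_nonneg hs.1 ht) (by ring)
      convert hcv using 1
      rw [smul_add, ← add_assoc, ← add_smul, smul_smul, div_mul_cancel₀ _ ht'.ne']
      simp
    have hd : ∀ s ∈ Icc 0 t, HasDerivAt (fun s => U (x + s • gradient U z))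
        (fderiv ℝ U (x + s • gradient U z) (gradient U z)) s := by
      intro s hs
      have h1 := (H.diffU (hb _ (hseg s hs)).1.1).hasFDerivAt
      have h2 : HasDerivAt (fun s : ℝ => x + s • gradient U z) (gradient U z) s := by
        simpa using ((hasDerivAt_id s).smul_const (gradient U z)).const_add x
      exact h1.comp_hasDerivAt s h2
    have := (convex_Icc 0 t).mul_sub_le_image_sub_of_le_deriv (f := fun s => U (x + s • gradient U z))
      (C := 1 / 2)
      (fun s hs => (hd s hs).continuousAt.continuousWithinAt)
      (fun s hs => (hd s (interior_subset hs)).differentiableAt.differentiableWithinAt)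
      (fun s hs => by
        rw [(hd s (interior_subset hs)).deriv]
        exact (hb _ (hseg s (interior_subset hs))).1.2.le)
      0 ⟨le_rfl, ht⟩ t ⟨ht, le_rfl⟩ ht
    simp at this
    linarith

end FB

namespace FB

variable {n : ℕ} {u U v : EuclideanSpace ℝ (Fin n) → ℝ} {W : Set (EuclideanSpace ℝ (Fin n))}
    {C : NNReal}

lemma foot (H : FB u U W C) {z} (hz : z ∈ freeBoundary u) {δ' : ℝ} (hδ' : 0 < δ') :
    ∃ ρ > 0, ρ ≤ δ' ∧ ∀ x ∈ ball z ρ, 0 < u x →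
      ∃ y ∈ freeBoundary u, y ∈ ball z δ' ∧ ‖x - y‖ ≤ 2 * u x := by
  obtain ⟨δ, hδ, hW, hF, hn0, hmono⟩ := H.nbhd hz
  set d := min δ δ' with hd
  have hd0 : 0 < d := lt_min hδ hδ'
  have hN := H.hgrad1 z hz
  have hev : ∀ᶠ x in nhds z, u x < d / 4 := by
    have := H.hu.continuous.continuousAt (x := z)
    exact this.eventually (gt_mem_nhds (by rw [H.frontier_zero hz.1]; positivity))
  obtain ⟨ρ, hρ, hb⟩ := Metric.eventually_nhds_iff_ball.1 hev
  refine ⟨min ρ (d / 2), by positivity, (min_le_right _ _).trans (by linarith [min_le_right δ δ']), fun x hx hux => ?_⟩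
  have hxu := hb x (ball_subset_ball (min_le_left _ _) hx)
  have hxd : dist x z < d / 2 := (mem_ball.1 hx).trans_le (min_le_right _ _)
  have hin : ∀ t, |t| ≤ 2 * u x → x + t • gradient U z ∈ ball z d := by
    intro t ht
    rw [mem_ball]
    have h1 : dist (x + t • gradient U z) x = |t| := by
      rw [dist_eq_norm, add_sub_cancel_left, norm_smul, hN, mul_one, Real.norm_eq_abs]
    have := dist_triangle (x + t • gradient U z) x z
    linarith
  have hcont : ContinuousOn (fun t : ℝ => U (x + t • gradient U z)) (Icc (-(2 * u x)) 0) := by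
    refine H.hUsm.continuousOn.comp (by fun_prop) fun t ht => ?_
    exact hW (ball_subset_ball (min_le_left _ _) (hin t (by rw [abs_le]; constructor <;> linarith [ht.1, ht.2])))
  have hUx : U x = u x := H.hUeq x (subset_closure hux)
  have hlow : U (x + (-(2 * u x)) • gradient U z) ≤ 0 := by
    have h1 := hin (-(2 * u x)) (by rw [abs_neg, abs_of_pos (by linarith)])
    have h2 := hmono (x + (-(2 * u x)) • gradient U z) (ball_subset_ball (min_le_left _ _) h1)
      (2 * u x) (by linarith) (by
        rw [add_assoc, ← add_smul]; simp
        have := hin 0 (by simp; linarith)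
        simp at this
        exact lt_of_lt_of_le this (min_le_left _ _))
    rw [add_assoc, ← add_smul] at h2
    simp only [neg_add_cancel, zero_smul, add_zero] at h2
    rw [hUx] at h2
    linarith
  obtain ⟨t, ht, hUt⟩ := intermediate_value_Icc (by linarith) hcont
    (show (0 : ℝ) ∈ Icc _ _ from ⟨hlow, by simp only [zero_smul, add_zero]; rw [hUx]; exact hux.le⟩)
  have htab : |t| ≤ 2 * u x := by rw [abs_le]; constructor <;> linarith [ht.1, ht.2]
  refine ⟨x + t • gradient U z, hF _ (ball_subset_ball (min_le_left _ _) (hin t htab)) hUt,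
    ball_subset_ball (min_le_right _ _) (hin t htab), ?_⟩
  rw [sub_add_cancel_left, norm_neg, norm_smul, hN, mul_one, Real.norm_eq_abs]
  exact htab

lemma near_k (H : FB u U W C) {z} (hz : z ∈ freeBoundary u) {η : ℝ} (hη : 0 < η) :
    ∀ᶠ x in nhdsWithin z {x | 0 < u x},
      |‖gradient u x‖ ^ 2 - 1 + 2 * u x * meanCurv U x| ≤ η * u x := by
  set k := fun x => ‖gradient U x‖ ^ 2 - 1 + 2 * U x * meanCurv U x with hk
  have hzW := H.FBW hz
  have hc : ContinuousAt (fderiv ℝ k) z :=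
    (H.k_smooth.continuousOn_fderiv_of_isOpen H.hW (by simp)).continuousAt (H.hW.mem_nhds hzW)
  have h0 : fderiv ℝ k z = 0 := H.k_fderiv_zero hz
  have hev : ∀ᶠ x in nhds z, ‖fderiv ℝ k x‖ < η / 2 :=
    hc.norm.eventually (gt_mem_nhds (by simp only [h0, norm_zero]; positivity))
  have evW : ∀ᶠ y in nhds z, y ∈ W := H.hW.mem_nhds hzW
  obtain ⟨δ, hδ, hb⟩ := Metric.eventually_nhds_iff_ball.1 (hev.and evW)
  obtain ⟨ρ, hρ, hρδ, hf⟩ := H.foot hz hδ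
  filter_upwards [mem_nhdsWithin_of_mem_nhds (ball_mem_nhds z hρ), self_mem_nhdsWithin] with x hx hux
  have hux : 0 < u x := hux
  obtain ⟨y, hy, hyb, hxy⟩ := hf x hx hux
  have := (convex_ball z δ).norm_image_sub_le_of_norm_fderiv_le (𝕜 := ℝ) (f := k) (C := η / 2)
    (fun w hw => (H.k_smooth.differentiableOn (by simp)).differentiableAt (H.hW.mem_nhds (hb w hw).2))
    (fun w hw => (hb w hw).1.le) hyb (ball_subset_ball hρδ hx)
  have hky : k y = 0 := H.k_zero hy
  rw [hky, sub_zero] at this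
  have e : ‖gradient u x‖ ^ 2 - 1 + 2 * u x * meanCurv U x = k x := by
    rw [H.gradD hux, hk]; simp only; rw [H.hUeq x (subset_closure hux)]
  rw [e]
  have h2 : η / 2 * ‖x - y‖ ≤ η / 2 * (2 * u x) := by gcongr
  rw [Real.norm_eq_abs] at this
  linarith

lemma seg_mem (H : FB u U W C) {x y} (hx : 0 < u x)
    (h : ∀ w ∈ segment ℝ x y, w ∉ frontier {x | 0 < u x}) : 0 < u y := by
  have hp : IsPreconnected (segment ℝ x y) := (convex_segment x y).isPreconnected
  have h1 := isPreconnected_iff_subset_of_disjoint.1 hp {x | 0 < u x} (closure {x | 0 < u x})ᶜ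
    H.openD isClosed_closure.isOpen_compl (fun w hw => by
      by_cases hc : w ∈ closure {x | 0 < u x}
      · left
        by_contra hn
        exact h w hw (by rw [H.openD.frontier_eq]; exact ⟨hc, hn⟩)
      · right; exact hc)
    (by
      ext w; simp only [mem_inter_iff, mem_compl_iff, mem_empty_iff_false, iff_false]
      rintro ⟨-, h1, h2⟩; exact h2 (subset_closure h1))
  rcases h1 with h1 | h1
  · exact h1 (right_mem_segment ℝ x y)
  · exact absurd (subset_closure (show x ∈ {x | 0 < u x} from hx)) (h1 (left_mem_segment ℝ x y))

lemma up (H : FB u U W C) {z} (hz : z ∈ freeBoundary u) :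
    ∃ τ > (0:ℝ), ∀ s : ℝ, 0 < s → s < τ → 0 < u (z + s • gradient U z) := by
  obtain ⟨δ, hδ, hW, hF, hn0, hmono⟩ := H.nbhd hz
  have hN := H.hgrad1 z hz
  have hUz := H.frontier_U hz.1
  have hin : ∀ x t, dist x z < δ / 2 → |t| < δ / 2 → x + t • gradient U z ∈ ball z δ := by
    intro x t hx ht
    rw [mem_ball]
    have h1 : dist (x + t • gradient U z) x = |t| := by
      rw [dist_eq_norm, add_sub_cancel_left, norm_smul, hN, mul_one, Real.norm_eq_abs]
    have := dist_triangle (x + t • gradient U z) x z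
    linarith
  refine ⟨δ / 2, by positivity, fun s hs hsτ => ?_⟩
  set p := z + s • gradient U z with hp
  have hpb : p ∈ ball z δ := hin z s (by simp; positivity) (by rw [abs_of_pos hs]; exact hsτ)
  have hUp : 0 < U p := by
    have := hmono z (mem_ball_self hδ) s hs.le hpb
    rw [hUz] at this
    linarith
  have hcU : ContinuousAt U p := H.hUsm.continuousOn.continuousAt (H.hW.mem_nhds (hW hpb))
  have evU : ∀ᶠ y in nhds p, 0 < U y := hcU.eventually (lt_mem_nhds hUp)
  have evb : ∀ᶠ y in nhds p, y ∈ ball z δ := isOpen_ball.mem_nhds hpb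
  obtain ⟨r, hr, hb⟩ := Metric.eventually_nhds_iff_ball.1 (evU.and evb)
  obtain ⟨x, hx, hxz⟩ := Metric.mem_closure_iff.1 (frontier_subset_closure hz.1) (min r (δ / 2)) (by positivity)
  have hux : 0 < u x := hx
  rw [dist_comm] at hxz
  have hxr : dist x z < r := hxz.trans_le (min_le_left _ _)
  have hxd : dist x z < δ / 2 := hxz.trans_le (min_le_right _ _)
  have hxb : x ∈ ball z δ := by rw [mem_ball]; linarith
  have hUx : 0 < U x := by rw [H.hUeq x (subset_closure hx)]; exact hux
  have step1 : 0 < u (x + s • gradient U z) := by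
    refine H.seg_mem hux fun w hw hwf => ?_
    rw [segment_eq_image'] at hw
    obtain ⟨θ, hθ, rfl⟩ := hw
    have hU0 := H.frontier_U hwf
    simp only [add_sub_cancel_left, smul_smul] at hU0
    have hts : 0 ≤ θ * s := mul_nonneg hθ.1 hs.le
    have := hmono x hxb (θ * s) hts (hin x _ hxd (by
      rw [abs_of_nonneg hts]; nlinarith [hθ.2]))
    rw [hU0] at this
    linarith
  refine H.seg_mem step1 fun w hw hwf => ?_
  have hwb : w ∈ ball p r := by
    refine (convex_ball p r).segment_subset ?_ (mem_ball_self hr) hw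
    rw [mem_ball, hp, dist_add_right]; exact hxr
  have := (hb w hwb).1
  rw [H.frontier_U hwf] at this
  exact lt_irrefl _ this

/-- Structure of a `C¹`-up-to-the-boundary function near a free boundary point. -/
lemma C1_at (H : FB u U W C) (hv : ContDiffOn ℝ 1 v ({x | 0 < u x} ∪ freeBoundary u))
    {z} (hz : z ∈ freeBoundary u) :
    ∃ L : EuclideanSpace ℝ (Fin n) →L[ℝ] ℝ,
      Filter.Tendsto (fderiv ℝ v) (nhdsWithin z {x | 0 < u x}) (nhds L) ∧
      Filter.Tendsto v (nhdsWithin z {x | 0 < u x}) (nhds (v z)) ∧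
      dNu U v z = - L (gradient U z) := by
  have hzm : z ∈ {x | 0 < u x} ∪ freeBoundary u := Or.inr hz
  have h1 := hv z hzm
  have h1' : ContDiffWithinAt ℝ (0 + 1) v ({x | 0 < u x} ∪ freeBoundary u) z := by simpa using h1
  obtain ⟨T, hT, -, f', hf', hc⟩ := (contDiffWithinAt_succ_iff_hasFDerivWithinAt (by simp)).1 h1'
  rw [insert_eq_of_mem hzm] at hT
  obtain ⟨r, hr, hrT⟩ := Metric.mem_nhdsWithin_iff.1 hT
  have hzT : z ∈ T := hrT ⟨mem_ball_self hr, hzm⟩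
  have hnear : ∀ x ∈ ball z r, 0 < u x → HasFDerivAt v (f' x) x := by
    intro x hx hux
    have hm : x ∈ T := hrT ⟨hx, Or.inl hux⟩
    refine (hf' x hm).hasFDerivAt ?_
    filter_upwards [isOpen_ball.mem_nhds hx, H.openD.mem_nhds hux] with y h1 h2
    exact hrT ⟨h1, Or.inl h2⟩
  have hDT : nhdsWithin z {x | 0 < u x} ≤ nhdsWithin z T := by
    refine nhdsWithin_le_iff.2 ?_
    exact nhdsWithin_mono z subset_union_left hT
  refine ⟨f' z, ?_, ?_, ?_⟩
  · have : Filter.Tendsto f' (nhdsWithin z {x | 0 < u x}) (nhds (f' z)) :=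
      hc.continuousWithinAt.mono_left hDT
    refine this.congr' ?_
    filter_upwards [mem_nhdsWithin_of_mem_nhds (ball_mem_nhds z hr), self_mem_nhdsWithin] with x h1 h2
    exact (hnear x h1 h2).fderiv.symm
  · exact ((hf' z hzT).continuousWithinAt).mono_left hDT
  · obtain ⟨τ, hτ, hup⟩ := H.up hz
    set ρ := min τ r with hρ
    have hρ0 : 0 < ρ := lt_min hτ hr
    have hN := H.hgrad1 z hz
    unfold dNu nuVec
    have hmaps : MapsTo (fun t : ℝ => z + t • -gradient U z) (Ioc (-ρ) 0) T := by
      intro t ht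
      rcases ht.2.eq_or_lt with rfl | h0
      · simpa using hzT
      · refine hrT ⟨?_, Or.inl ?_⟩
        · rw [mem_ball, dist_eq_norm, add_sub_cancel_left, norm_smul, norm_neg, hN, mul_one,
            Real.norm_eq_abs, abs_of_neg h0]
          linarith [ht.1, min_le_right τ r]
        · show 0 < u (z + t • -gradient U z)
          rw [smul_neg, ← neg_smul]
          exact hup (-t) (by linarith) (by linarith [ht.1, min_le_left τ r])
    have hcur : HasDerivWithinAt (fun t : ℝ => z + t • -gradient U z) (-gradient U z) (Ioc (-ρ) 0) 0 := by
      have : HasDerivAt (fun t : ℝ => z + t • -gradient U z) ((1 : ℝ) • -gradient U z) 0 :=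
        ((hasDerivAt_id (0 : ℝ)).smul_const (-gradient U z)).const_add z
      rw [one_smul] at this
      exact this.hasDerivWithinAt
    have hf0 : HasFDerivWithinAt v (f' z) T ((fun t : ℝ => z + t • -gradient U z) 0) := by
      simpa using hf' z hzT
    have hcomp := hf0.comp_hasDerivWithinAt (0 : ℝ) hcur hmaps
    have hI : HasDerivWithinAt (fun t : ℝ => v (z + t • -gradient U z)) (f' z (-gradient U z)) (Iic 0) 0 := by
      refine hcomp.mono_of_mem_nhdsWithin ?_
      have : Ioc (-ρ) 0 = Ioi (-ρ) ∩ Iic 0 := rfl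
      rw [this]
      exact Filter.inter_mem (mem_nhdsWithin_of_mem_nhds (Ioi_mem_nhds (by linarith))) self_mem_nhdsWithin
    rw [hI.derivWithin (uniqueDiffWithinAt_Iic 0), map_neg]

lemma near_v (H : FB u U W C) (hv : ContDiffOn ℝ 1 v ({x | 0 < u x} ∪ freeBoundary u))
    {z} (hz : z ∈ freeBoundary u) :
    Filter.Tendsto (fun x => (inner ℝ (gradient v x) (gradient u x) : ℝ) + meanCurv U x * v x)
      (nhdsWithin z {x | 0 < u x}) (nhds (- dNu U v z + meanCurv U z * v z)) := by
  obtain ⟨L, h1, h2, h3⟩ := H.C1_at hv hz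
  have hWz := H.hW.mem_nhds (H.FBW hz)
  have hG : Filter.Tendsto (gradient U) (nhdsWithin z {x | 0 < u x}) (nhds (gradient U z)) :=
    (H.grad_smooth.continuousOn.continuousAt hWz).mono_left nhdsWithin_le_nhds
  have hM : Filter.Tendsto (meanCurv U) (nhdsWithin z {x | 0 < u x}) (nhds (meanCurv U z)) :=
    (H.meanCurv_smooth.continuousOn.continuousAt hWz).mono_left nhdsWithin_le_nhds
  rw [h3, neg_neg]
  refine Filter.Tendsto.add ?_ (hM.mul h2)
  have hev : Continuous (fun p : (EuclideanSpace ℝ (Fin n) →L[ℝ] ℝ) × EuclideanSpace ℝ (Fin n) => p.1 p.2) :=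
    continuous_fst.clm_apply continuous_snd
  refine ((hev.tendsto (L, gradient U z)).comp (h1.prodMk_nhds hG)).congr' ?_
  filter_upwards [self_mem_nhdsWithin] with x hx
  simp only [Function.comp]
  rw [inner_gradient_eq, H.gradD hx]

/-- compactness near the free boundary -/
lemma compact_near (H : FB u U W C) {K : Set (EuclideanSpace ℝ (Fin n))} (hK : IsCompact K)
    (hK0 : (0 : EuclideanSpace ℝ (Fin n)) ∉ K) {P : EuclideanSpace ℝ (Fin n) → Prop}
    (hP : ∀ z ∈ freeBoundary u, z ∈ K → ∀ᶠ x in nhdsWithin z {x | 0 < u x}, P x) :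
    ∃ s > 0, ∀ x ∈ {x | 0 < u x} ∩ K, u x < s → P x := by
  have : ∀ z : EuclideanSpace ℝ (Fin n), ∃ O : Set (EuclideanSpace ℝ (Fin n)), IsOpen O ∧
      (z ∈ freeBoundary u → z ∈ K → z ∈ O) ∧ ∀ x ∈ O, 0 < u x → P x := by
    intro z
    by_cases h : z ∈ freeBoundary u ∧ z ∈ K
    · obtain ⟨O, hO, hzO, hOP⟩ := mem_nhdsWithin.1 (hP z h.1 h.2)
      exact ⟨O, hO, fun _ _ => hzO, fun x hx hux => hOP ⟨hx, hux⟩⟩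
    · exact ⟨∅, isOpen_empty, fun h1 h2 => absurd ⟨h1, h2⟩ h, fun x hx => absurd hx (notMem_empty x)⟩
  choose O hO hzO hOP using this
  set K' := (closure {x | 0 < u x} ∩ K) \ ⋃ z, O z with hK'
  have hK'c : IsCompact K' := by
    refine (hK.inter_left isClosed_closure).diff (isOpen_iUnion hO)
  have hpos : ∀ x ∈ K', 0 < u x := by
    rintro x ⟨⟨hc, hk⟩, hnot⟩
    by_contra hn
    have hx : x ∈ freeBoundary u := ⟨by rw [H.openD.frontier_eq]; exact ⟨hc, hn⟩, by
      rintro rfl; exact hK0 hk⟩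
    exact hnot (mem_iUnion.2 ⟨x, hzO x hx hk⟩)
  have hs : ∃ s > 0, ∀ x ∈ K', s ≤ u x := by
    rcases K'.eq_empty_or_nonempty with he | hne
    · exact ⟨1, one_pos, fun x hx => by rw [he] at hx; exact absurd hx (notMem_empty x)⟩
    · obtain ⟨x, hx, hmin⟩ := hK'c.exists_isMinOn hne H.hu.continuous.continuousOn
      exact ⟨u x, hpos x hx, fun y hy => hmin hy⟩
  obtain ⟨s, hs0, hs⟩ := hs
  refine ⟨s, hs0, fun x hx hux => ?_⟩
  by_contra hn
  have : x ∈ K' := by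
    refine ⟨⟨subset_closure hx.1, hx.2⟩, fun h => ?_⟩
    obtain ⟨z, hz⟩ := mem_iUnion.1 h
    exact hn (hOP z x hz hx.1)
  linarith [hs x this]

lemma compact_bdd (H : FB u U W C) {K : Set (EuclideanSpace ℝ (Fin n))} (hK : IsCompact K)
    (hK0 : (0 : EuclideanSpace ℝ (Fin n)) ∉ K) {f : EuclideanSpace ℝ (Fin n) → ℝ}
    (hc : ∀ x, 0 < u x → ContinuousAt f x)
    (hP : ∀ z ∈ freeBoundary u, ∃ M : ℝ, ∀ᶠ x in nhdsWithin z {x | 0 < u x}, f x ≤ M) :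
    ∃ M : ℝ, ∀ x ∈ {x | 0 < u x} ∩ K, f x ≤ M := by
  have hcomp : IsCompact (closure {x | 0 < u x} ∩ K) := hK.inter_left isClosed_closure
  have : ∃ M : ℝ, ∀ x ∈ closure {x | 0 < u x} ∩ K, 0 < u x → f x ≤ M := by
    refine hcomp.induction_on (p := fun s => ∃ M : ℝ, ∀ x ∈ s, 0 < u x → f x ≤ M) ?_ ?_ ?_ ?_
    · exact ⟨0, fun x hx => absurd hx (notMem_empty x)⟩
    · rintro s t hst ⟨M, hM⟩; exact ⟨M, fun x hx => hM x (hst hx)⟩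
    · rintro s t ⟨M, hM⟩ ⟨M', hM'⟩
      refine ⟨max M M', fun x hx hu => ?_⟩
      rcases hx with hx | hx
      · exact (hM x hx hu).trans (le_max_left _ _)
      · exact (hM' x hx hu).trans (le_max_right _ _)
    · intro z hz
      by_cases hu : 0 < u z
      · have := (hc z hu).eventually (gt_mem_nhds (lt_add_one (f z)))
        exact ⟨_, mem_nhdsWithin_of_mem_nhds this, f z + 1, fun x hx _ => le_of_lt hx⟩
      · have hzf : z ∈ freeBoundary u := ⟨by rw [H.openD.frontier_eq]; exact ⟨hz.1, hu⟩, by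
          rintro rfl; exact hK0 hz.2⟩
        obtain ⟨M, hM⟩ := hP z hzf
        obtain ⟨O, hO, hzO, hOP⟩ := mem_nhdsWithin.1 hM
        exact ⟨O, mem_nhdsWithin_of_mem_nhds (hO.mem_nhds hzO), M, fun x hx hux => hOP ⟨hx, hux⟩⟩
  obtain ⟨M, hM⟩ := this
  exact ⟨M, fun x hx => hM x ⟨subset_closure hx.1, hx.2⟩ hx.1⟩

end FB

/-- integration in polar coordinates of a product of a `0`-homogeneous and a radial function -/
lemma polar_integral {n : ℕ} (hn : 0 < n) (w : EuclideanSpace ℝ (Fin n) → ℝ) (k : ℝ → ℝ)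
    (hw : ∀ t : ℝ, 0 < t → ∀ x, x ≠ 0 → w (t • x) = w x) :
    ∫ x, w x * k ‖x‖ =
      (∫ y : sphere (0 : EuclideanSpace ℝ (Fin n)) 1, w y ∂(volume : Measure (EuclideanSpace ℝ (Fin n))).toSphere)
        * ∫ r in Ioi (0 : ℝ), r ^ (n - 1) * k r := by
  set μ := (volume : Measure (EuclideanSpace ℝ (Fin n))) with hμ
  have : Nonempty (Fin n) := ⟨⟨0, hn⟩⟩
  calc
    ∫ x, w x * k ‖x‖ = ∫ x : ({(0)}ᶜ : Set (EuclideanSpace ℝ (Fin n))), w x.1 * k ‖x.1‖ ∂(μ.comap (↑)) := by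
      rw [integral_subtype_comap (measurableSet_singleton _).compl fun x ↦ w x * k ‖x‖,
        restrict_compl_singleton]
    _ = ∫ p : sphere (0 : EuclideanSpace ℝ (Fin n)) 1 × Ioi (0 : ℝ), w p.1 * k p.2
          ∂μ.toSphere.prod (.volumeIoiPow (Module.finrank ℝ (EuclideanSpace ℝ (Fin n)) - 1)) := by
      rw [← μ.measurePreserving_homeomorphUnitSphereProd.integral_comp
        (Homeomorph.measurableEmbedding _)]
      refine integral_congr_ae (Filter.Eventually.of_forall fun x => ?_)
      have hx : (x : EuclideanSpace ℝ (Fin n)) ≠ 0 := x.2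
      simp only [homeomorphUnitSphereProd_apply_snd_coe, homeomorphUnitSphereProd_apply_fst_coe]
      rw [hw _ (inv_pos.2 (norm_pos_iff.2 hx)) _ hx]
    _ = (∫ y : sphere (0 : EuclideanSpace ℝ (Fin n)) 1, w y ∂μ.toSphere) *
          ∫ r : Ioi (0 : ℝ), k r ∂.volumeIoiPow (Module.finrank ℝ (EuclideanSpace ℝ (Fin n)) - 1) :=
      integral_prod_mul (μ := μ.toSphere)
        (ν := .volumeIoiPow (Module.finrank ℝ (EuclideanSpace ℝ (Fin n)) - 1))
        (fun y : sphere (0 : EuclideanSpace ℝ (Fin n)) 1 => w y) (fun r : Ioi (0 : ℝ) => k r)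
    _ = _ := by
      congr 1
      simp only [finrank_euclideanSpace_fin, Measure.volumeIoiPow, ENNReal.ofReal]
      rw [integral_withDensity_eq_integral_smul,
        integral_subtype_comap measurableSet_Ioi fun a ↦ Real.toNNReal (a ^ (n - 1)) • k a,
        setIntegral_congr_fun measurableSet_Ioi fun x hx ↦ ?_]
      · rw [NNReal.smul_def, Real.coe_toNNReal _ (pow_nonneg hx.out.le _)]; rfl
      · exact (measurable_subtype_coe.pow_const _).real_toNNReal

/-- logarithmic change of variables -/
lemma log_integral (F : ℝ → ℝ) {L : ℝ} (hL : 0 < L) :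
    ∫ r in Ioi (0 : ℝ), r⁻¹ * F (Real.log r / L) = L * ∫ s, F s := by
  have h1 : Real.exp '' univ = Ioi 0 := by rw [image_univ, Real.range_exp]
  rw [← h1, integral_image_eq_integral_abs_deriv_smul MeasurableSet.univ
    (fun x _ => (Real.hasDerivAt_exp x).hasDerivWithinAt) Real.exp_injective.injOn]
  rw [setIntegral_univ]
  have : ∀ x, |Real.exp x| • ((Real.exp x)⁻¹ * F (Real.log (Real.exp x) / L)) = F (x / L) := by
    intro x
    rw [Real.log_exp, abs_of_pos (Real.exp_pos x), smul_eq_mul, mul_inv_cancel_left₀ (Real.exp_ne_zero x)]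
  simp_rw [this]
  rw [Measure.integral_comp_div, abs_of_pos hL, smul_eq_mul]

/-- the basic one-dimensional bump -/
def bumpOne : ContDiffBump (0 : ℝ) := ⟨1, 2, one_pos, one_lt_two⟩

lemma bumpOne_one {s : ℝ} (hs : |s| ≤ 1) : bumpOne s = 1 :=
  bumpOne.one_of_mem_closedBall (by simpa [bumpOne] using hs)

lemma bumpOne_zero {s : ℝ} (hs : 2 ≤ |s|) : bumpOne s = 0 :=
  bumpOne.zero_of_le_dist (by simpa [bumpOne] using hs)

lemma bumpOne_diff : Differentiable ℝ bumpOne :=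
  (bumpOne.contDiff (n := 1)).differentiable (by simp)

lemma bumpOne_deriv_cont : Continuous (deriv bumpOne) :=
  (bumpOne.contDiff (n := 1)).continuous_deriv (by simp)

lemma bumpOne_deriv_supp : HasCompactSupport (deriv bumpOne) :=
  bumpOne.hasCompactSupport.deriv

lemma bumpOne_int (a L : ℝ) :
    ∫ s, (-2 * a * bumpOne s * deriv bumpOne s / L + (deriv bumpOne s) ^ 2 / L ^ 2)
      = (∫ s, (deriv bumpOne s) ^ 2) / L ^ 2 := by
  have hi1 : Integrable (fun s => 2 * bumpOne s * deriv bumpOne s) := by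
    refine Continuous.integrable_of_hasCompactSupport ?_ ?_
    · exact (continuous_const.mul bumpOne.continuous).mul bumpOne_deriv_cont
    · exact bumpOne_deriv_supp.mul_left
  have hi2 : Integrable (fun s => (deriv bumpOne s) ^ 2) := by
    refine Continuous.integrable_of_hasCompactSupport (bumpOne_deriv_cont.pow 2) ?_
    simp_rw [pow_two]
    exact bumpOne_deriv_supp.mul_left
  have hi3 : Integrable (fun s => bumpOne s ^ 2) := by
    refine Continuous.integrable_of_hasCompactSupport (bumpOne.continuous.pow 2) ?_
    simp_rw [pow_two]
    exact bumpOne.hasCompactSupport.mul_left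
  have h0 : ∫ s, 2 * bumpOne s * deriv bumpOne s = 0 := by
    refine integral_eq_zero_of_hasDerivAt_of_integrable (f := fun s => bumpOne s ^ 2) (fun x => ?_) hi1 hi3
    have := (bumpOne_diff x).hasDerivAt.fun_pow 2
    simpa using this
  have h1 : (fun s => (-2 * a * bumpOne s * deriv bumpOne s / L + (deriv bumpOne s) ^ 2 / L ^ 2))
      = fun s => (-a / L) * (2 * bumpOne s * deriv bumpOne s) + (1 / L ^ 2) * (deriv bumpOne s) ^ 2 := by
    funext s; ring
  rw [h1, integral_add (hi1.const_mul _) (hi2.const_mul _), integral_const_mul, integral_const_mul, h0]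
  ring

/-- the radial cutoff `r^{-a} χ(log r / L)` -/
def cut {n : ℕ} (a L : ℝ) (x : EuclideanSpace ℝ (Fin n)) : ℝ :=
  if x = 0 then 0 else ‖x‖ ^ (-a) * bumpOne (Real.log ‖x‖ / L)

/-- the closed annulus -/
def ann (n : ℕ) (L : ℝ) : Set (EuclideanSpace ℝ (Fin n)) :=
  {x | Real.exp (-L) ≤ ‖x‖ ∧ ‖x‖ ≤ Real.exp L}

lemma ann_ne0 {n : ℕ} {L : ℝ} {x : EuclideanSpace ℝ (Fin n)} (hx : x ∈ ann n L) : x ≠ 0 := by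
  rintro rfl
  have := hx.1
  rw [norm_zero] at this
  exact absurd this (not_le.2 (Real.exp_pos _))

lemma ann_iff {n : ℕ} {L : ℝ} {x : EuclideanSpace ℝ (Fin n)} (hx : x ≠ 0) :
    x ∈ ann n L ↔ |Real.log ‖x‖| ≤ L := by
  have h := norm_pos_iff.2 hx
  rw [abs_le, Real.le_log_iff_exp_le h, Real.log_le_iff_le_exp h]
  rfl

lemma ann_compact (n : ℕ) (L : ℝ) : IsCompact (ann n L) := by
  refine (isCompact_closedBall (0 : EuclideanSpace ℝ (Fin n)) (Real.exp L)).of_isClosed_subset ?_ ?_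
  · exact (isClosed_le continuous_const continuous_norm).inter (isClosed_le continuous_norm continuous_const)
  · intro x hx; rw [mem_closedBall_zero_iff]; exact hx.2

lemma cut_nonneg {n : ℕ} (a L : ℝ) (x : EuclideanSpace ℝ (Fin n)) : 0 ≤ cut a L x := by
  unfold cut; split_ifs
  · exact le_rfl
  · exact mul_nonneg (Real.rpow_nonneg (norm_nonneg _) _) bumpOne.nonneg

lemma cut_zero {n : ℕ} (a : ℝ) {L : ℝ} (hL : 0 < L) {x : EuclideanSpace ℝ (Fin n)} (hx : x ∉ ann n (2 * L)) :
    cut a L x = 0 := by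
  unfold cut; split_ifs with h
  · rfl
  · rw [ann_iff h, not_le] at hx
    rw [bumpOne_zero, mul_zero]
    rw [abs_div, abs_of_pos hL, le_div_iff₀ hL]; exact hx.le

lemma cut_one {n : ℕ} (a : ℝ) {L : ℝ} (hL : 0 < L) {x : EuclideanSpace ℝ (Fin n)} (hx : x ∈ ann n L) :
    cut a L x = ‖x‖ ^ (-a) := by
  have h := ann_ne0 hx
  rw [ann_iff h] at hx
  unfold cut
  rw [if_neg h, bumpOne_one, mul_one]
  rw [abs_div, abs_of_pos hL, div_le_iff₀ hL, one_mul]; exact hx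

lemma cut_sym {n : ℕ} (a L : ℝ)
    (Γ : Subgroup (EuclideanSpace ℝ (Fin n) ≃ₗᵢ[ℝ] EuclideanSpace ℝ (Fin n))) :
    IsSymmetricUnder Γ (cut a L) := by
  intro g _ x
  unfold cut
  simp [g.norm_map]

lemma cut_contDiff {n : ℕ} (a : ℝ) {L : ℝ} (hL : 0 < L) :
    ContDiff ℝ 1 (cut a L : EuclideanSpace ℝ (Fin n) → ℝ) := by
  rw [contDiff_iff_contDiffAt]
  intro x
  by_cases hx : x = 0
  · subst hx
    refine (contDiffAt_const (c := (0 : ℝ))).congr_of_eventuallyEq ?_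
    have : (ann n (2 * L))ᶜ ∈ nhds (0 : EuclideanSpace ℝ (Fin n)) :=
      (ann_compact n (2 * L)).isClosed.isOpen_compl.mem_nhds (fun h => ann_ne0 h rfl)
    filter_upwards [this] with y hy
    exact cut_zero a hL hy
  · have hn := norm_pos_iff.2 hx
    have h1 : ContDiffAt ℝ 1 (fun y : EuclideanSpace ℝ (Fin n) => ‖y‖) x := contDiffAt_norm ℝ hx
    have h2 : ContDiffAt ℝ 1 (fun y : EuclideanSpace ℝ (Fin n) =>
        ‖y‖ ^ (-a) * bumpOne (Real.log ‖y‖ / L)) x := by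
      refine (h1.rpow_const_of_ne hn.ne').mul ?_
      exact (bumpOne.contDiff (n := 1)).contDiffAt.comp x ((h1.log hn.ne').div_const L)
    refine h2.congr_of_eventuallyEq ?_
    filter_upwards [isOpen_compl_singleton.mem_nhds (show x ∈ ({0}ᶜ : Set _) from hx)] with y hy
    unfold cut
    rw [if_neg (show ¬ y = 0 from hy)]

lemma cut_grad {n : ℕ} (a : ℝ) (L : ℝ) {x : EuclideanSpace ℝ (Fin n)} (hx : x ≠ 0) :
    ‖gradient (cut a L) x‖ ^ 2 ≤ ‖x‖ ^ (-2 * a - 2) *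
      (-a * bumpOne (Real.log ‖x‖ / L) + deriv bumpOne (Real.log ‖x‖ / L) / L) ^ 2 := by
  have hn := norm_pos_iff.2 hx
  have hnd : DifferentiableAt ℝ (fun y : EuclideanSpace ℝ (Fin n) => ‖y‖) x :=
    (contDiffAt_norm ℝ hx (n := 1)).differentiableAt (by simp)
  have hZ : HasDerivAt (fun r : ℝ => r ^ (-a) * bumpOne (Real.log r / L))
      (‖x‖ ^ (-a - 1) * (-a * bumpOne (Real.log ‖x‖ / L) + deriv bumpOne (Real.log ‖x‖ / L) / L)) ‖x‖ := by
    have h1 := Real.hasDerivAt_rpow_const (x := ‖x‖) (p := -a) (Or.inl hn.ne')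
    have h2 : HasDerivAt (fun r : ℝ => Real.log r / L) (‖x‖⁻¹ / L) ‖x‖ := (Real.hasDerivAt_log hn.ne').div_const L
    have h3 := (bumpOne_diff (Real.log ‖x‖ / L)).hasDerivAt.comp ‖x‖ h2
    have h4 := h1.mul h3
    refine h4.congr_deriv ?_
    have : ‖x‖ ^ (-a) = ‖x‖ ^ (-a - 1) * ‖x‖ := by
      rw [← Real.rpow_add_one hn.ne']; congr 1; ring
    simp only [Function.comp]
    rw [this]
    field_simp
  have hc := hZ.comp_hasFDerivAt x hnd.hasFDerivAt
  have he : cut a L =ᶠ[nhds x] (fun r : ℝ => r ^ (-a) * bumpOne (Real.log r / L)) ∘ fun y : EuclideanSpace ℝ (Fin n) => ‖y‖ := by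
    filter_upwards [isOpen_compl_singleton.mem_nhds (show x ∈ ({0}ᶜ : Set _) from hx)] with y hy
    unfold cut
    rw [if_neg (show ¬ y = 0 from hy)]; rfl
  have hf := (hc.congr_of_eventuallyEq he).fderiv
  rw [norm_gradient_eq, hf, norm_smul]
  have h1 : ‖fderiv ℝ (fun y : EuclideanSpace ℝ (Fin n) => ‖y‖) x‖ ≤ 1 := by
    have := norm_fderiv_le_of_lipschitz ℝ (f := fun y : EuclideanSpace ℝ (Fin n) => ‖y‖) (x₀ := x) lipschitzWith_one_norm
    simpa using this
  rw [mul_pow, Real.norm_eq_abs, sq_abs]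
  have h2 : ‖fderiv ℝ (fun y : EuclideanSpace ℝ (Fin n) => ‖y‖) x‖ ^ 2 ≤ 1 := by
    rw [sq_le_one_iff₀ (norm_nonneg _)]; exact h1
  have h3 : ‖x‖ ^ (-2 * a - 2) = (‖x‖ ^ (-a - 1)) ^ 2 := by
    rw [← Real.rpow_mul_natCast hn.le]; congr 1; push_cast; ring
  rw [h3]
  refine (mul_le_of_le_one_right (sq_nonneg _) h2).trans (le_of_eq ?_)
  ring

/-- Global Lipschitz bound from local one and homogeneity. -/
lemma lipschitz_of_homog {n : ℕ} {u : EuclideanSpace ℝ (Fin n) → ℝ} (hu : LocallyLipschitz u)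
    (hom : ∀ t : ℝ, 0 < t → ∀ x, u (t • x) = t * u x) : ∃ C, LipschitzWith C u := by
  obtain ⟨C, T, hT, hC⟩ := hu 0
  obtain ⟨r, hr, hrT⟩ := Metric.mem_nhds_iff.1 hT
  refine ⟨C, LipschitzWith.of_dist_le_mul fun x y => ?_⟩
  set t := r / (1 + ‖x‖ + ‖y‖) with ht
  have hd : 0 < 1 + ‖x‖ + ‖y‖ := by positivity
  have ht0 : 0 < t := by positivity
  have hm : ∀ z : EuclideanSpace ℝ (Fin n), ‖z‖ < 1 + ‖x‖ + ‖y‖ → t • z ∈ T := by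
    intro z hz
    apply hrT
    rw [mem_ball_zero_iff, norm_smul, Real.norm_eq_abs, abs_of_pos ht0, ht, div_mul_eq_mul_div, div_lt_iff₀ hd]
    exact mul_lt_mul_of_pos_left hz hr
  have := hC.dist_le_mul _ (hm x (by linarith [norm_nonneg y])) _ (hm y (by linarith [norm_nonneg x]))
  rw [hom t ht0, hom t ht0, dist_smul₀, Real.dist_eq, ← mul_sub, abs_mul, abs_of_pos ht0, Real.norm_eq_abs,
    abs_of_pos ht0] at this
  rw [Real.dist_eq]
  nlinarith

lemma homog_zero {n : ℕ} {u : EuclideanSpace ℝ (Fin n) → ℝ}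
    (hom : ∀ t : ℝ, 0 < t → ∀ x, u (t • x) = t * u x) : u 0 = 0 := by
  have := hom 2 two_pos 0
  rw [smul_zero] at this
  linarith

lemma int_v2q {n : ℕ} {D K : Set (EuclideanSpace ℝ (Fin n))} (hD : IsOpen D) (hK : IsCompact K)
    {v q : EuclideanSpace ℝ (Fin n) → ℝ} (hv : ContinuousOn v D) {M : ℝ}
    (hM : ∀ x ∈ D ∩ K, |v x| ≤ M) (hq : ContinuousOn q K) :
    IntegrableOn (fun x => v x ^ 2 * q x) (D ∩ K) := by
  obtain ⟨Q, hQ⟩ := hK.exists_bound_of_continuousOn hq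
  have hm : MeasurableSet (D ∩ K) := hD.measurableSet.inter hK.measurableSet
  refine integrableOn_of_bdd hm
    ((measure_mono inter_subset_right).trans_lt hK.measure_lt_top).ne ?_ (M ^ 2 * Q) ?_
  · exact (((hv.mono inter_subset_left).pow 2).mul (hq.mono inter_subset_right)).aestronglyMeasurable hm
  · intro x hx
    rw [abs_mul, abs_pow]
    have h1 := hM x hx
    have h2 : |q x| ≤ Q := hQ x hx.2
    have := abs_nonneg (v x)
    have := abs_nonneg (q x)
    gcongr

lemma bump_deriv_zero {s : ℝ} (hs : 2 < |s|) : deriv bumpOne s = 0 := by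
  have : (bumpOne : ℝ → ℝ) =ᶠ[nhds s] fun _ => 0 := by
    filter_upwards [(isOpen_lt continuous_const continuous_abs).mem_nhds hs] with y hy
    exact bumpOne_zero (le_of_lt hy)
  rw [this.deriv_eq]; simp

lemma radial_est {n : ℕ} (hn : 0 < n) {D : Set (EuclideanSpace ℝ (Fin n))} (hD : IsOpen D)
    (h0 : (0 : EuclideanSpace ℝ (Fin n)) ∉ D)
    (hcone : ∀ t : ℝ, 0 < t → ∀ x, t • x ∈ D ↔ x ∈ D)
    {v : EuclideanSpace ℝ (Fin n) → ℝ} (hv : ContinuousOn v D) {μ γ : ℝ}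
    (hom : ∀ t : ℝ, 0 < t → ∀ x : EuclideanSpace ℝ (Fin n), x ≠ 0 → v (t • x) = t ^ (-μ) * v x)
    (hγ : ((n : ℝ) / 2 - 1 - μ) ^ 2 ≤ γ)
    (hb : ∀ L : ℝ, ∃ M, ∀ x ∈ D ∩ ann n L, |v x| ≤ M) :
    ∃ B : ℝ, 0 ≤ B ∧ ∀ L : ℝ, 1 ≤ L →
      IntegrableOn (fun x => v x ^ 2 * (γ * cut ((n : ℝ) / 2 - 1 - μ) L x ^ 2 / ‖x‖ ^ 2
        - ‖gradient (cut ((n : ℝ) / 2 - 1 - μ) L) x‖ ^ 2)) (D ∩ ann n (2 * L)) ∧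
      - (B / L) ≤ ∫ x in D ∩ ann n (2 * L),
        v x ^ 2 * (γ * cut ((n : ℝ) / 2 - 1 - μ) L x ^ 2 / ‖x‖ ^ 2
        - ‖gradient (cut ((n : ℝ) / 2 - 1 - μ) L) x‖ ^ 2) := by
  set a := (n : ℝ) / 2 - 1 - μ with ha
  set w : EuclideanSpace ℝ (Fin n) → ℝ := D.indicator (fun x => v x ^ 2 * ‖x‖ ^ (2 * μ)) with hw
  have hwh : ∀ t : ℝ, 0 < t → ∀ x, x ≠ 0 → w (t • x) = w x := by
    intro t ht x hx
    simp only [hw]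
    by_cases hxD : x ∈ D
    · rw [indicator_of_mem ((hcone t ht x).2 hxD), indicator_of_mem hxD, hom t ht x hx, norm_smul,
        Real.norm_eq_abs, abs_of_pos ht, Real.mul_rpow ht.le (norm_nonneg _), mul_pow]
      have : (t ^ (-μ)) ^ 2 * t ^ (2 * μ) = 1 := by
        rw [← Real.rpow_mul_natCast ht.le, ← Real.rpow_add ht]
        have : -μ * ((2 : ℕ) : ℝ) + 2 * μ = 0 := by push_cast; ring
        rw [this, Real.rpow_zero]
      linear_combination (v x ^ 2 * ‖x‖ ^ (2 * μ)) * this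
    · rw [indicator_of_notMem (fun h => hxD ((hcone t ht x).1 h)), indicator_of_notMem hxD]
  set A := ∫ y : sphere (0 : EuclideanSpace ℝ (Fin n)) 1, w y
    ∂(volume : Measure (EuclideanSpace ℝ (Fin n))).toSphere with hA
  have hA0 : 0 ≤ A := integral_nonneg fun y => by
    simp only [hw]
    refine indicator_nonneg (fun x _ => ?_) _
    exact mul_nonneg (sq_nonneg _) (Real.rpow_nonneg (norm_nonneg _) _)
  set I := ∫ s, (deriv bumpOne s) ^ 2 with hI
  have hI0 : 0 ≤ I := integral_nonneg fun s => sq_nonneg _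
  refine ⟨A * I, by positivity, fun L hL => ?_⟩
  have hL0 : 0 < L := by linarith
  set F : ℝ → ℝ := fun s => (-2 * a * bumpOne s * deriv bumpOne s / L + (deriv bumpOne s) ^ 2 / L ^ 2) with hF
  set k : ℝ → ℝ := fun r => r ^ (-(n : ℝ)) * F (Real.log r / L) with hk
  have hIntg : ∫ x, w x * k ‖x‖ = A * I / L := by
    rw [polar_integral hn w k hwh]
    have : ∫ r in Ioi (0 : ℝ), r ^ (n - 1) * k r = ∫ r in Ioi (0 : ℝ), r⁻¹ * F (Real.log r / L) := by
      refine setIntegral_congr_fun measurableSet_Ioi fun r hr => ?_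
      have hr : 0 < r := hr
      simp only [hk]
      rw [← mul_assoc, ← Real.rpow_natCast, ← Real.rpow_add hr, Nat.cast_sub hn]
      have : ((n : ℝ) - (1 : ℕ)) + -(n : ℝ) = -1 := by push_cast; ring
      rw [this, Real.rpow_neg_one]
    rw [this, log_integral F hL0, bumpOne_int a L]
    field_simp
    rfl
  obtain ⟨M, hM⟩ := hb (2 * L)
  have hK := ann_compact n (2 * L)
  have hm : MeasurableSet (D ∩ ann n (2 * L)) := hD.measurableSet.inter hK.measurableSet
  have hn0 : ∀ x ∈ ann n (2 * L), ‖x‖ ≠ 0 := fun x hx => norm_ne_zero_iff.2 (ann_ne0 hx)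
  have hFc : Continuous F := by
    have h1 := bumpOne_deriv_cont
    have h2 := bumpOne.continuous
    simp only [hF]
    exact (((continuous_const.mul h2).mul h1).div_const _).add ((h1.pow 2).div_const _)
  have hIntg1 : IntegrableOn (fun x => v x ^ 2 * (γ * cut a L x ^ 2 / ‖x‖ ^ 2
        - ‖gradient (cut a L) x‖ ^ 2)) (D ∩ ann n (2 * L)) := by
    refine int_v2q hD hK hv hM ?_
    have hc := (cut_contDiff (n := n) a hL0)
    have hg : Continuous fun x : EuclideanSpace ℝ (Fin n) => ‖gradient (cut a L) x‖ := by
      simp_rw [norm_gradient_eq]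
      exact (hc.continuous_fderiv (by simp)).norm
    refine ContinuousOn.sub ?_ (hg.pow 2).continuousOn
    refine ContinuousOn.div (continuous_const.mul (hc.continuous.pow 2)).continuousOn (continuous_norm.pow 2).continuousOn ?_
    exact fun x hx => pow_ne_zero 2 (hn0 x hx)
  have hIntg2 : IntegrableOn (fun x => v x ^ 2 * (‖x‖ ^ (2 * μ) * k ‖x‖)) (D ∩ ann n (2 * L)) := by
    refine int_v2q hD hK hv hM ?_
    simp only [hk]
    have hnc : ContinuousOn (fun x : EuclideanSpace ℝ (Fin n) => ‖x‖) (ann n (2 * L)) := continuous_norm.continuousOn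
    refine (hnc.rpow_const fun x hx => Or.inl (hn0 x hx)).mul
      ((hnc.rpow_const fun x hx => Or.inl (hn0 x hx)).mul ?_)
    exact hFc.comp_continuousOn ((hnc.log hn0).div_const L)
  refine ⟨hIntg1, ?_⟩
  have heq : ∫ x in D ∩ ann n (2 * L), v x ^ 2 * (‖x‖ ^ (2 * μ) * k ‖x‖) = A * I / L := by
    rw [← hIntg, ← setIntegral_eq_integral_of_forall_compl_eq_zero (s := D ∩ ann n (2 * L))
      (f := fun x => w x * k ‖x‖)]
    · refine setIntegral_congr_fun hm fun x hx => ?_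
      simp only [hw, indicator_of_mem hx.1]; ring
    · intro x hx
      by_cases hxD : x ∈ D
      · have hxa : x ∉ ann n (2 * L) := fun h => hx ⟨hxD, h⟩
        have hx0 : x ≠ 0 := by rintro rfl; exact h0 hxD
        rw [ann_iff hx0, not_le] at hxa
        have : 2 < |Real.log ‖x‖ / L| := by
          rw [abs_div, abs_of_pos hL0, lt_div_iff₀ hL0]; exact hxa
        simp only [hk, hF]
        rw [bump_deriv_zero this]; simp
      · simp only [hw]; rw [indicator_of_notMem hxD, zero_mul]
  rw [← heq, ← integral_neg]
  refine setIntegral_mono_on hIntg2.neg hIntg1 hm fun x hx => ?_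
  have hx0 := ann_ne0 hx.2
  have hr := norm_pos_iff.2 hx0
  have hg := cut_grad a L hx0
  have e1 : ‖x‖ ^ (2 * μ) * ‖x‖ ^ (-(n : ℝ)) = ‖x‖ ^ (-2 * a - 2) := by
    rw [← Real.rpow_add hr]; congr 1; rw [ha]; ring
  have e2 : cut a L x ^ 2 / ‖x‖ ^ 2 = ‖x‖ ^ (-2 * a - 2) * bumpOne (Real.log ‖x‖ / L) ^ 2 := by
    unfold cut
    rw [if_neg hx0, mul_pow, ← Real.rpow_mul_natCast hr.le]
    have : ‖x‖ ^ (-a * ((2 : ℕ) : ℝ)) = ‖x‖ ^ (-2 * a - 2) * ‖x‖ ^ 2 := by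
      rw [← Real.rpow_natCast ‖x‖ 2, ← Real.rpow_add hr]; congr 1; push_cast; ring
    rw [this]; field_simp
  have hp : 0 ≤ ‖x‖ ^ (-2 * a - 2) := Real.rpow_nonneg hr.le _
  rw [mul_div_assoc, e2]
  have e3 : -(v x ^ 2 * (‖x‖ ^ (2 * μ) * k ‖x‖)) = v x ^ 2 * (- (‖x‖ ^ (-2 * a - 2) * F (Real.log ‖x‖ / L))) := by
    rw [← e1]; simp only [hk]; ring
  rw [e3]
  refine mul_le_mul_of_nonneg_left ?_ (sq_nonneg _)
  have h5 : ‖x‖ ^ (-2 * a - 2) * (a ^ 2 * bumpOne (Real.log ‖x‖ / L) ^ 2) ≤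
      ‖x‖ ^ (-2 * a - 2) * (γ * bumpOne (Real.log ‖x‖ / L) ^ 2) := by gcongr
  have h6 : (-a * bumpOne (Real.log ‖x‖ / L) + deriv bumpOne (Real.log ‖x‖ / L) / L) ^ 2 =
     a ^ 2 * bumpOne (Real.log ‖x‖ / L) ^ 2 + F (Real.log ‖x‖ / L) := by
    simp only [hF]; field_simp; ring
  rw [h6] at hg
  linarith

namespace FB

variable {n : ℕ} {u U v : EuclideanSpace ℝ (Fin n) → ℝ} {W : Set (EuclideanSpace ℝ (Fin n))}
    {C : NNReal}

lemma bdd_of_tendsto (H : FB u U W C) {K : Set (EuclideanSpace ℝ (Fin n))} (hK : IsCompact K)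
    (hK0 : (0 : EuclideanSpace ℝ (Fin n)) ∉ K) {f : EuclideanSpace ℝ (Fin n) → ℝ}
    (hc : ∀ x, 0 < u x → ContinuousAt f x)
    (hP : ∀ z ∈ freeBoundary u, ∃ l : ℝ, Filter.Tendsto f (nhdsWithin z {x | 0 < u x}) (nhds l)) :
    ∃ M : ℝ, 0 ≤ M ∧ ∀ x ∈ {x | 0 < u x} ∩ K, |f x| ≤ M := by
  obtain ⟨M, hM⟩ := H.compact_bdd hK hK0 (f := fun x => |f x|) (fun x hx => (hc x hx).abs) (by
    intro z hz
    obtain ⟨l, hl⟩ := hP z hz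
    refine ⟨|l| + 1, ?_⟩
    filter_upwards [hl.abs.eventually (gt_mem_nhds (lt_add_one |l|))] with x hx
    exact hx.le)
  exact ⟨max M 0, le_max_right _ _, fun x hx => (hM x hx).trans (le_max_left _ _)⟩

lemma v_cont (H : FB u U W C) (hv : ContDiffOn ℝ 2 v {x | 0 < u x}) {x} (hx : 0 < u x) :
    ContinuousAt v x := (hv.continuousOn).continuousAt (H.openD.mem_nhds hx)

lemma v_bdd (H : FB u U W C) (hv2 : ContDiffOn ℝ 2 v {x | 0 < u x})
    (hv : ContDiffOn ℝ 1 v ({x | 0 < u x} ∪ freeBoundary u))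
    {K : Set (EuclideanSpace ℝ (Fin n))} (hK : IsCompact K)
    (hK0 : (0 : EuclideanSpace ℝ (Fin n)) ∉ K) :
    ∃ M : ℝ, 0 ≤ M ∧ ∀ x ∈ {x | 0 < u x} ∩ K, |v x| ≤ M :=
  H.bdd_of_tendsto hK hK0 (fun _ hx => H.v_cont hv2 hx) fun z hz => by
    obtain ⟨L, -, h, -⟩ := H.C1_at hv hz
    exact ⟨_, h⟩

lemma gv_bdd (H : FB u U W C) (hv2 : ContDiffOn ℝ 2 v {x | 0 < u x})
    (hv : ContDiffOn ℝ 1 v ({x | 0 < u x} ∪ freeBoundary u))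
    {K : Set (EuclideanSpace ℝ (Fin n))} (hK : IsCompact K)
    (hK0 : (0 : EuclideanSpace ℝ (Fin n)) ∉ K) :
    ∃ M : ℝ, 0 ≤ M ∧ ∀ x ∈ {x | 0 < u x} ∩ K, ‖gradient v x‖ ≤ M := by
  have hc := hv2.continuousOn_fderiv_of_isOpen H.openD (by norm_num)
  obtain ⟨M, hM0, hM⟩ := H.bdd_of_tendsto hK hK0 (f := fun x => ‖fderiv ℝ v x‖)
    (fun x hx => (hc.continuousAt (H.openD.mem_nhds hx)).norm) fun z hz => by
    obtain ⟨L, h, -, -⟩ := H.C1_at hv hz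
    exact ⟨_, h.norm⟩
  refine ⟨M, hM0, fun x hx => ?_⟩
  rw [norm_gradient_eq]
  exact (le_abs_self _).trans (hM x hx)

/-- the cut-off mean curvature -/
lemma h_props (H : FB u U W C) {L : ℝ} (hL : 0 < L) :
    ∃ h : EuclideanSpace ℝ (Fin n) → ℝ, ∃ M : ℝ, 0 ≤ M ∧
      (∀ x ∈ {x | 0 < u x}, DifferentiableAt ℝ h x) ∧
      (∀ x ∈ {x | 0 < u x}, |h x| ≤ M) ∧
      (∀ x ∈ {x | 0 < u x}, ‖gradient h x‖ ≤ M) ∧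
      (∀ x ∈ ann n (2 * L), h x = meanCurv U x) := by
  have h2L : 0 < 2 * L := by linarith
  set h : EuclideanSpace ℝ (Fin n) → ℝ := fun x => cut 0 (2 * L) x * meanCurv U x with hh
  have hsm : ContDiffOn ℝ 1 h W :=
    (cut_contDiff 0 h2L).contDiffOn.mul (H.meanCurv_smooth.of_le (by exact_mod_cast le_top))
  have hoff : ∀ x ∉ ann n (2 * (2 * L)), h x = 0 := fun x hx => by
    simp only [hh]; rw [cut_zero 0 h2L hx, zero_mul]
  have hK := ann_compact n (2 * (2 * L))
  have hK0 : (0 : EuclideanSpace ℝ (Fin n)) ∉ ann n (2 * (2 * L)) := fun h => ann_ne0 h rfl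
  have hc1 : ∀ x ∈ W, ContinuousAt h x := fun x hx => hsm.continuousOn.continuousAt (H.hW.mem_nhds hx)
  have hc2 : ∀ x ∈ W, ContinuousAt (fun x => ‖fderiv ℝ h x‖) x := fun x hx =>
    ((hsm.continuousOn_fderiv_of_isOpen H.hW le_rfl).continuousAt (H.hW.mem_nhds hx)).norm
  obtain ⟨M1, hM10, hM1⟩ := H.bdd_of_tendsto hK hK0 (f := h) (fun x hx => hc1 x (H.DW hx))
    fun z hz => ⟨_, (hc1 z (H.FBW hz)).mono_left nhdsWithin_le_nhds⟩
  obtain ⟨M2, hM20, hM2⟩ := H.bdd_of_tendsto hK hK0 (f := fun x => ‖fderiv ℝ h x‖) (fun x hx => hc2 x (H.DW hx))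
    fun z hz => ⟨_, (hc2 z (H.FBW hz)).mono_left nhdsWithin_le_nhds⟩
  refine ⟨h, M1 + M2, by positivity, ?_, ?_, ?_, ?_⟩
  · intro x hx
    exact (hsm.differentiableOn (by simp)).differentiableAt (H.hW.mem_nhds (H.DW hx))
  · intro x hx
    by_cases hk : x ∈ ann n (2 * (2 * L))
    · linarith [hM1 x ⟨hx, hk⟩]
    · rw [hoff x hk, abs_zero]; positivity
  · intro x hx
    by_cases hk : x ∈ ann n (2 * (2 * L))
    · have := hM2 x ⟨hx, hk⟩
      rw [norm_gradient_eq]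
      linarith [le_abs_self ‖fderiv ℝ h x‖]
    · rw [gradient_eq_zero_off hK.isClosed hoff hk, norm_zero]; positivity
  · intro x hx
    simp only [hh]
    rw [cut_one 0 h2L hx]; simp

lemma main_ineq (hn : 0 < n) (H : FB u U W C)
    (Γ : Subgroup (EuclideanSpace ℝ (Fin n) ≃ₗᵢ[ℝ] EuclideanSpace ℝ (Fin n)))
    (hmin : IsSymMinimizer Γ u)
    (huHom : ∀ t : ℝ, 0 < t → ∀ x, u (t • x) = t * u x)
    {μ γ : ℝ} (hγ : ((n : ℝ) / 2 - 1 - μ) ^ 2 ≤ γ)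
    (hvSym : IsSymmetricUnder Γ v)
    (hvHom : ∀ t : ℝ, 0 < t → ∀ x : EuclideanSpace ℝ (Fin n), x ≠ 0 → v (t • x) = t ^ (-μ) * v x)
    (hv0 : ∀ x ∈ {x | 0 < u x}, 0 ≤ v x)
    (hv2 : ContDiffOn ℝ 2 v {x | 0 < u x})
    (hv1 : ContDiffOn ℝ 1 v ({x | 0 < u x} ∪ freeBoundary u)) :
    ∃ B : ℝ, 0 ≤ B ∧ ∀ L : ℝ, 1 ≤ L → ∀ P b : EuclideanSpace ℝ (Fin n) → ℝ,
      Measurable P → Measurable b → ∀ MP : ℝ, (∀ x, |P x| ≤ MP) → (∀ x, |b x| ≤ MP) →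
      (∀ x ∈ {x | 0 < u x}, γ * v x / ‖x‖ ^ 2 + P x ≤ lap v x) →
      (∀ z ∈ freeBoundary u, ∀ η > 0, ∀ᶠ x in nhdsWithin z {x | 0 < u x},
        - meanCurv U x * v x + b x - η ≤ (inner ℝ (gradient v x) (gradient u x) : ℝ)) →
      ∀ θ > 0, ∃ ε₀ > 0, ∀ ε, 0 < ε → ε < ε₀ →
        (∫ x in {x | 0 < u x} ∩ ann n (2 * L), P x * cut ((n : ℝ) / 2 - 1 - μ) L x ^ 2 * v x)
        + ε⁻¹ * (∫ x in {x | 0 < u x} ∩ ann n (2 * L),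
          (strip u (fun y => cut ((n : ℝ) / 2 - 1 - μ) L y * v y) ε).indicator
            (fun x => cut ((n : ℝ) / 2 - 1 - μ) L x * b x) x) ≤ θ + B / L := by
  have hann0 : ∀ L, (0 : EuclideanSpace ℝ (Fin n)) ∉ ann n L := fun L h => ann_ne0 h rfl
  obtain ⟨B, hB0, hB⟩ := radial_est (n := n) hn (D := {x | 0 < u x}) H.openD
    (by simp [H.hu00]) (fun t ht x => by simp [huHom t ht x, ht]) hv2.continuousOn hvHom hγ
    (fun L => by
      obtain ⟨M, -, hM⟩ := H.v_bdd hv2 hv1 (ann_compact n L) (hann0 L)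
      exact ⟨M, hM⟩)
  refine ⟨B, hB0, fun L hL P b mP mb MP hPb hbb hlap hbdy => ?_⟩
  have hL0 : 0 < L := by linarith
  set a := (n : ℝ) / 2 - 1 - μ with ha
  set K := ann n (2 * L) with hKdef
  have hK : IsCompact K := ann_compact n (2 * L)
  have hK0 : (0 : EuclideanSpace ℝ (Fin n)) ∉ K := hann0 _
  have hmDK : MeasurableSet ({x | 0 < u x} ∩ K) := H.openD.measurableSet.inter hK.measurableSet
  have hζc := cut_contDiff (n := n) a hL0
  obtain ⟨h, Mh, hMh0, hhd, hhM, hhg, hheq⟩ := H.h_props hL0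
  obtain ⟨Mv, hMv0, hMv⟩ := H.v_bdd hv2 hv1 hK hK0
  obtain ⟨Mg, hMg0, hMg⟩ := H.gv_bdd hv2 hv1 hK hK0
  obtain ⟨Mz, hMz⟩ := hK.exists_bound_of_continuousOn hζc.continuous.continuousOn
  obtain ⟨Mz', hMz'⟩ := hK.exists_bound_of_continuousOn (hζc.continuous_fderiv (by simp)).continuousOn
  obtain ⟨Mq, hMq0, hMq⟩ := H.bdd_of_tendsto hK hK0 (f := fun x => γ * v x / ‖x‖ ^ 2)
    (fun x hx => (continuousAt_const.mul (H.v_cont hv2 hx)).div (continuous_norm.pow 2).continuousAt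
      (pow_ne_zero 2 (norm_ne_zero_iff.2 (H.ne0 hx))))
    (fun z hz => by
      obtain ⟨L, -, h, -⟩ := H.C1_at hv1 hz
      exact ⟨_, (h.const_mul γ).div ((continuous_norm.pow 2).continuousAt.mono_left nhdsWithin_le_nhds)
        (pow_ne_zero 2 (norm_ne_zero_iff.2 hz.2))⟩)
  have hMP0 : 0 ≤ MP := (abs_nonneg _).trans (hPb 0)
  have hC0 : (0 : ℝ) ≤ C := C.2
  set M : ℝ := 1 + Mh + Mv + Mg + |Mz| + |Mz'| + Mq + MP + C with hM
  have az := abs_nonneg Mz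
  have az' := abs_nonneg Mz'
  have az1 := le_abs_self Mz
  have az2 := le_abs_self Mz'
  have hqc : ContinuousOn (fun x => γ * v x / ‖x‖ ^ 2) {x | 0 < u x} :=
    (continuousOn_const.mul hv2.continuousOn).div (continuous_norm.pow 2).continuousOn
      fun x hx => pow_ne_zero 2 (norm_ne_zero_iff.2 (H.ne0 hx))
  have hcore : CoreData u v (cut a L) h (fun x => γ * v x / ‖x‖ ^ 2 + P x) b K C M :=
    { hu := H.hu
      hu0 := H.hu0
      hu2 := H.hu2
      huh := H.huh
      hv2 := hv2
      hv0 := hv0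
      hK := hK
      hζ := hζc.differentiable (by simp)
      hζ0 := cut_nonneg a L
      hζK := fun x hx => cut_zero a hL0 hx
      hhd := hhd
      hM := by linarith
      hhM := fun x hx => (hhM x hx).trans (by linarith)
      hhg := fun x hx => (hhg x hx).trans (by linarith)
      bζ := fun x hx => (le_abs_self _).trans ((hMz x hx.2).trans (by linarith))
      bgζ := fun x hx => by rw [norm_gradient_eq]; exact (hMz' x hx.2).trans (by linarith)
      bv := fun x hx => (le_abs_self _).trans ((hMv x hx).trans (by linarith))
      bgv := fun x hx => (hMg x hx).trans (by linarith)
      bgu := fun x hx => (norm_gradient_le_of_lipschitz H.hu x).trans (by linarith)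
      bG := fun x hx => (abs_add_le _ _).trans (by linarith [hMq x hx, hPb x])
      bb := fun x hx => (hbb x).trans (by linarith)
      mG := ((hqc.mono inter_subset_left).aestronglyMeasurable hmDK).add mP.aestronglyMeasurable
      mb := mb.aestronglyMeasurable
      hlap := fun x hx => hlap x hx.1 }
  have hnear : ∀ η > 0, ∃ s > 0, ∀ x ∈ {x | 0 < u x} ∩ K, u x < s →
      |‖gradient u x‖ ^ 2 - 1 + 2 * u x * h x| ≤ η * u x ∧
      - h x * v x + b x - η ≤ (inner ℝ (gradient v x) (gradient u x) : ℝ) := by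
    intro η hη
    obtain ⟨s, hs, hP⟩ := H.compact_near hK hK0 (P := fun x =>
      |‖gradient u x‖ ^ 2 - 1 + 2 * u x * meanCurv U x| ≤ η * u x ∧
      - meanCurv U x * v x + b x - η ≤ (inner ℝ (gradient v x) (gradient u x) : ℝ))
      (fun z hz _ => (H.near_k hz hη).and (hbdy z hz η hη))
    refine ⟨s, hs, fun x hx hux => ?_⟩
    rw [hheq x hx.2]
    exact hP x hx hux
  intro θ hθ
  obtain ⟨ε₀, hε₀, hfin⟩ := hcore.core hnear (hcore.energy_step Γ hmin (cut_sym a L Γ) hvSym) θ hθ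
  refine ⟨ε₀, hε₀, fun ε hε hε' => ?_⟩
  have h1 := hfin ε hε hε'
  obtain ⟨hi1, hi2⟩ := hB L hL
  have hi3 : IntegrableOn (fun x => P x * cut a L x ^ 2 * v x) ({x | 0 < u x} ∩ K) := by
    refine integrableOn_of_bdd hmDK ((measure_mono inter_subset_right).trans_lt hK.measure_lt_top).ne ?_
      (MP * Mz ^ 2 * Mv) ?_
    · exact (mP.aestronglyMeasurable.mul (hζc.continuous.pow 2).aestronglyMeasurable).mul
        ((hv2.continuousOn.mono inter_subset_left).aestronglyMeasurable hmDK)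
    · intro x hx
      rw [abs_mul, abs_mul, abs_pow]
      have e1 := hPb x
      have e2 : |cut a L x| ≤ Mz := hMz x hx.2
      have e3 := hMv x hx
      have := abs_nonneg (P x)
      have := abs_nonneg (cut a L x)
      have := abs_nonneg (v x)
      gcongr
  have hsplit : ∫ x in {x | 0 < u x} ∩ K, ((γ * v x / ‖x‖ ^ 2 + P x) * cut a L x ^ 2 * v x
      - v x ^ 2 * ‖gradient (cut a L) x‖ ^ 2) =
      (∫ x in {x | 0 < u x} ∩ K, v x ^ 2 * (γ * cut a L x ^ 2 / ‖x‖ ^ 2 - ‖gradient (cut a L) x‖ ^ 2))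
      + ∫ x in {x | 0 < u x} ∩ K, P x * cut a L x ^ 2 * v x := by
    rw [← integral_add hi1 hi3]
    refine setIntegral_congr_fun hmDK fun x hx => ?_
    ring
  rw [hsplit] at h1
  linarith

end FB

lemma lap_continuousOn {n : ℕ} {v : EuclideanSpace ℝ (Fin n) → ℝ} {D : Set (EuclideanSpace ℝ (Fin n))}
    (hD : IsOpen D) (hv : ContDiffOn ℝ 2 v D) : ContinuousOn (lap v) D := by
  unfold lap
  refine continuousOn_finsetSum _ fun i _ => ?_
  have h1 : ContDiffOn ℝ 1 (fun y => fderiv ℝ v y (EuclideanSpace.single i 1)) D :=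
    (hv.fderiv_of_isOpen hD (by norm_num)).clm_apply contDiffOn_const
  exact (h1.continuousOn_fderiv_of_isOpen hD le_rfl).clm_apply continuousOn_const

lemma setIntegral_lower {n : ℕ} {A S : Set (EuclideanSpace ℝ (Fin n))} (hA : MeasurableSet A)
    (hS : MeasurableSet S) (hSA : S ⊆ A) (hfin : volume A ≠ ⊤) {f : EuclideanSpace ℝ (Fin n) → ℝ}
    (hf : IntegrableOn f A) (hf0 : ∀ x ∈ A, 0 ≤ f x) {c : ℝ} (hc : ∀ x ∈ S, c ≤ f x) :
    c * volume.real S ≤ ∫ x in A, f x := by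
  have hSfin : volume S ≠ ⊤ := ((measure_mono hSA).trans_lt (lt_top_iff_ne_top.2 hfin)).ne
  calc c * volume.real S = ∫ x in S, c := by rw [setIntegral_const, smul_eq_mul, mul_comm]
    _ ≤ ∫ x in S, f x := setIntegral_mono_on (integrableOn_const hSfin) (hf.mono_set hSA) hS hc
    _ ≤ ∫ x in A, f x := by
      refine setIntegral_mono_set hf ?_ (Filter.Eventually.of_forall hSA)
      exact (ae_restrict_iff' hA).2 (Filter.Eventually.of_forall hf0)

lemma cut_local {n : ℕ} (a : ℝ) {x₀ : EuclideanSpace ℝ (Fin n)} (hx₀ : x₀ ≠ 0) :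
    ∃ ρ > 0, ∃ L₁ ≥ 1, ∃ c > 0, ∀ x ∈ ball x₀ ρ, ∀ L ≥ L₁,
      x ∈ ann n (2 * L) ∧ c ≤ cut a L x := by
  have hr := norm_pos_iff.2 hx₀
  have hc0 : 0 < ‖x₀‖ ^ (-a) := Real.rpow_pos_of_pos hr _
  have c1 : ContinuousAt (fun x : EuclideanSpace ℝ (Fin n) => |Real.log ‖x‖|) x₀ :=
    (continuous_norm.continuousAt.log hr.ne').abs
  have c2 : ContinuousAt (fun x : EuclideanSpace ℝ (Fin n) => ‖x‖ ^ (-a)) x₀ :=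
    continuous_norm.continuousAt.rpow_const (Or.inl hr.ne')
  have e1 := c1.eventually (gt_mem_nhds (lt_add_one _))
  have e2 := c2.eventually (lt_mem_nhds (half_lt_self hc0))
  have e3 : ∀ᶠ x in nhds x₀, x ≠ 0 := isOpen_ne.mem_nhds hx₀
  obtain ⟨ρ, hρ, hb⟩ := Metric.eventually_nhds_iff_ball.1 (e1.and (e2.and e3))
  refine ⟨ρ, hρ, |Real.log ‖x₀‖| + 1, by linarith [abs_nonneg (Real.log ‖x₀‖)], ‖x₀‖ ^ (-a) / 2, by positivity,
    fun x hx L hL => ?_⟩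
  obtain ⟨h1, h2, h3⟩ := hb x hx
  have hL0 : 0 < L := by linarith [abs_nonneg (Real.log ‖x₀‖)]
  have hann : x ∈ ann n L := (ann_iff h3).2 (by linarith)
  refine ⟨(ann_iff h3).2 (by linarith), ?_⟩
  rw [cut_one a hL0 hann]
  exact h2.le

namespace FB

variable {n : ℕ} {u U v : EuclideanSpace ℝ (Fin n) → ℝ} {W : Set (EuclideanSpace ℝ (Fin n))}
    {C : NNReal}

lemma meas_strip' (H : FB u U W C) {φ : EuclideanSpace ℝ (Fin n) → ℝ}
    (hφ : ContinuousOn φ {x | 0 < u x}) (ε : ℝ) :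
    MeasurableSet (strip u φ ε) := by
  have hc : ContinuousOn (fun y => ε * φ y - u y) {x | 0 < u x} :=
    (continuousOn_const.mul hφ).sub H.hu.continuous.continuousOn
  have ho := hc.isOpen_inter_preimage H.openD (isOpen_Iio (a := (0 : ℝ)))
  have e : strip u φ ε =
      {x | 0 < u x} \ ({x | 0 < u x} ∩ (fun y => ε * φ y - u y) ⁻¹' Iio 0) := by
    ext x
    constructor
    · rintro ⟨h1, h2⟩; exact ⟨h1, fun h => by have : ε * φ x - u x < 0 := h.2; linarith⟩
    · rintro ⟨h1, h2⟩
      refine ⟨h1, ?_⟩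
      by_contra hn
      exact h2 ⟨h1, show ε * φ x - u x < 0 by linarith⟩
  rw [e]
  exact H.openD.measurableSet.diff ho.measurableSet

/-- The strip `{0 < u < t}` has volume at least `c t` near a free boundary point. -/
lemma strip_lower (H : FB u U W C) {z} (hz : z ∈ freeBoundary u) {ρ : ℝ} (hρ : 0 < ρ) :
    ∃ c > 0, ∃ t₀ > 0, ∀ t, 0 < t → t ≤ t₀ →
      c * t ≤ volume.real ({x | 0 < u x ∧ u x < t} ∩ ball z ρ) := by
  obtain ⟨δ, hδ, hW, hF, hn0, hmono⟩ := H.nbhd hz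
  set N := gradient U z with hN
  have hN1 : ‖N‖ = 1 := H.hgrad1 z hz
  set r := min δ ρ with hr
  have hr0 : 0 < r := lt_min hδ hρ
  set C' : ℝ := max C 1 with hC'
  have hC1 : 1 ≤ C' := le_max_right _ _
  have hC0 : 0 < C' := by linarith
  have hlip : ∀ x y, |u x - u y| ≤ C' * dist x y := by
    intro x y
    have := H.hu.dist_le_mul x y
    rw [Real.dist_eq] at this
    exact this.trans (mul_le_mul_of_nonneg_right (le_max_left _ _) dist_nonneg)
  set r' := r / (8 * C') with hr'
  have hr'0 : 0 < r' := by positivity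
  set T := C' * r' with hT
  have hTr : T = r / 8 := by rw [hT, hr']; field_simp
  have hr'T : r' ≤ T := by rw [hT]; nlinarith
  have hT0 : 0 < T := by positivity
  set A := {x | 0 < u x} ∩ ball z r' with hA
  have hAo : IsOpen A := H.openD.inter isOpen_ball
  have hAne : A.Nonempty := by
    obtain ⟨x, hx, hxz⟩ := Metric.mem_closure_iff.1 (frontier_subset_closure hz.1) r' hr'0
    exact ⟨x, hx, by rw [mem_ball, dist_comm]; exact hxz⟩
  have hAfin : volume A ≠ ⊤ := ((measure_mono inter_subset_right).trans_lt measure_ball_lt_top).ne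
  have hApos : 0 < volume.real A := by
    rw [measureReal_def]
    exact ENNReal.toReal_pos (hAo.measure_pos _ hAne).ne' hAfin
  refine ⟨volume.real A / (4 * C' * T + 2 * T), by positivity, T, hT0, fun t ht htT => ?_⟩
  set S := {x | 0 < u x ∧ u x < t} ∩ ball z ρ with hS
  have hSo : IsOpen S :=
    (H.openD.inter (isOpen_lt H.hu.continuous continuous_const)).inter isOpen_ball
  have hSfin : volume S ≠ ⊤ := ((measure_mono inter_subset_right).trans_lt measure_ball_lt_top).ne
  set τ := t / (2 * C') with hτ
  have hτ0 : 0 < τ := by positivity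
  have hτt : C' * τ = t / 2 := by rw [hτ]; field_simp
  set J := ⌈2 * T / τ⌉₊ with hJ
  have hJ1 : 2 * T ≤ J * τ := by
    rw [← div_le_iff₀ hτ0]; exact Nat.le_ceil _
  have hJ2 : (J : ℝ) * τ ≤ 2 * T + τ := by
    have : (J : ℝ) < 2 * T / τ + 1 := Nat.ceil_lt_add_one (by positivity)
    have h2 := mul_lt_mul_of_pos_right this hτ0
    rw [add_mul, div_mul_cancel₀ _ hτ0.ne', one_mul] at h2
    exact h2.le
  have hτT : τ ≤ T := by nlinarith
  have hzU : u z = 0 := H.frontier_zero hz.1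
  have hball : ∀ x ∈ A, ∀ i : ℕ, i ≤ J → x - ((i : ℝ) * τ) • N ∈ ball z r := by
    intro x hx i hi
    have h1 : dist (x - ((i : ℝ) * τ) • N) x = i * τ := by
      rw [dist_eq_norm, sub_sub_cancel_left, norm_neg, norm_smul, hN1, mul_one, Real.norm_eq_abs,
        abs_of_nonneg (by positivity)]
    have h2 : (i : ℝ) * τ ≤ J * τ := by gcongr
    have h3 : dist x z < r' := hx.2
    have := dist_triangle (x - ((i : ℝ) * τ) • N) x z
    rw [mem_ball]
    linarith
  have hex : ∀ x ∈ A, ∃ j : ℕ, j ≤ J ∧ u (x - ((j : ℝ) * τ) • N) < t := by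
    intro x hx
    by_contra! hcon
    have h1 := hcon J le_rfl
    set y := x - ((J : ℝ) * τ) • N with hy
    have hyp : 0 < u y := by linarith
    have hUy : U y = u y := H.hUeq y (subset_closure hyp)
    have hxy : y + ((J : ℝ) * τ) • N = x := by rw [hy, sub_add_cancel]
    have hxb : x ∈ ball z δ := by
      have := hball x hx 0 (Nat.zero_le _)
      simp only [Nat.cast_zero, zero_mul, zero_smul, sub_zero] at this
      exact ball_subset_ball (min_le_left _ _) this
    have h2 := hmono y (ball_subset_ball (min_le_left _ _) (hball x hx J le_rfl)) ((J : ℝ) * τ)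
      (by positivity) (by rw [hxy]; exact hxb)
    rw [hxy, H.hUeq x (subset_closure hx.1), hUy] at h2
    have h3 := hlip x z
    rw [hzU, sub_zero] at h3
    have h4 : dist x z < r' := hx.2
    have h5 : C' * dist x z ≤ T := by rw [hT]; gcongr
    have := le_abs_self (u x)
    linarith
  have hcov : A ⊆ ⋃ j ∈ Finset.range (J + 1), (fun x => x - ((j : ℝ) * τ) • N) ⁻¹' S := by
    intro x hx
    classical
    obtain ⟨hjJ, hjt⟩ := Nat.find_spec (hex x hx)
    set j := Nat.find (hex x hx) with hj
    refine mem_iUnion₂.2 ⟨j, Finset.mem_range.2 (by omega), ?_⟩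
    refine ⟨⟨?_, hjt⟩, ball_subset_ball (min_le_right _ _) (hball x hx j hjJ)⟩
    rcases Nat.eq_zero_or_pos j with h0 | h0
    · rw [h0]; simpa using hx.1
    · obtain ⟨i, hi⟩ : ∃ i, j = i + 1 := ⟨j - 1, by omega⟩
      have hni := Nat.find_min (hex x hx) (m := i) (by omega)
      have hit : t ≤ u (x - ((i : ℝ) * τ) • N) := by
        by_contra hn
        exact hni ⟨by omega, by linarith⟩
      have hd : dist (x - ((i : ℝ) * τ) • N) (x - ((j : ℝ) * τ) • N) = τ := by
        have : x - ((i : ℝ) * τ) • N - (x - ((j : ℝ) * τ) • N) = τ • N := by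
          rw [hi]; push_cast; module
        rw [dist_eq_norm, this, norm_smul, hN1, mul_one, Real.norm_eq_abs, abs_of_pos hτ0]
      have h1 := hlip (x - ((i : ℝ) * τ) • N) (x - ((j : ℝ) * τ) • N)
      rw [hd, hτt] at h1
      have := le_abs_self (u (x - ((i : ℝ) * τ) • N) - u (x - ((j : ℝ) * τ) • N))
      show 0 < u (x - ((j : ℝ) * τ) • N)
      linarith
  have hvol : volume A ≤ (J + 1 : ℕ) * volume S := by
    calc volume A ≤ volume (⋃ j ∈ Finset.range (J + 1), (fun x => x - ((j : ℝ) * τ) • N) ⁻¹' S) :=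
          measure_mono hcov
      _ ≤ ∑ j ∈ Finset.range (J + 1), volume ((fun x => x - ((j : ℝ) * τ) • N) ⁻¹' S) :=
          measure_biUnion_finset_le _ _
      _ = ∑ j ∈ Finset.range (J + 1), volume S := by
          refine Finset.sum_congr rfl fun j _ => ?_
          exact (measurePreserving_sub_right volume (((j : ℝ) * τ) • N)).measure_preimage
            hSo.measurableSet.nullMeasurableSet
      _ = (J + 1 : ℕ) * volume S := by rw [Finset.sum_const, Finset.card_range, nsmul_eq_mul]
  have hvol' : volume.real A ≤ (J + 1) * volume.real S := by
    have := ENNReal.toReal_mono (ENNReal.mul_ne_top (ENNReal.natCast_ne_top _) hSfin) hvol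
    rw [ENNReal.toReal_mul, ENNReal.toReal_natCast] at this
    rw [measureReal_def, measureReal_def]
    exact_mod_cast this
  have hS0 : 0 ≤ volume.real S := measureReal_nonneg
  have hJt : ((J : ℝ) + 1) * t ≤ 4 * C' * T + 2 * T := by
    have h1 : t = 2 * (C' * τ) := by rw [hτt]; ring
    have h2 : (J : ℝ) * t ≤ 2 * C' * (2 * T + τ) := by
      have := mul_le_mul_of_nonneg_left hJ2 (show 0 ≤ 2 * C' by positivity)
      rw [h1]; linarith
    have h3 : 2 * C' * (2 * T + τ) = 4 * C' * T + t := by rw [h1]; ring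
    linarith
  rw [div_mul_eq_mul_div, div_le_iff₀ (by positivity)]
  calc volume.real A * t ≤ ((J + 1) * volume.real S) * t := by gcongr
    _ = volume.real S * ((J + 1) * t) := by ring
    _ ≤ volume.real S * (4 * C' * T + 2 * T) := by gcongr

end FB

lemma FB.bdy_eventually {n : ℕ} {u U v : EuclideanSpace ℝ (Fin n) → ℝ}
    {W : Set (EuclideanSpace ℝ (Fin n))} {C : NNReal} (H : FB u U W C)
    (hv1 : ContDiffOn ℝ 1 v ({x | 0 < u x} ∪ freeBoundary u))
    {z : EuclideanSpace ℝ (Fin n)} (hz : z ∈ freeBoundary u) {κ : ℝ}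
    (hκ : κ < -dNu U v z + meanCurv U z * v z) :
    ∀ᶠ x in nhdsWithin z {x | 0 < u x},
      -meanCurv U x * v x + κ ≤ (inner ℝ (gradient v x) (gradient u x) : ℝ) := by
  have h := (H.near_v hv1 hz).eventually (lt_mem_nhds hκ)
  filter_upwards [h] with x hx
  linarith

lemma gap_false {B L₁ g : ℝ} (hB : 0 ≤ B) (hL₁ : 1 ≤ L₁) (hg : 0 < g)
    (h : ∀ L, L₁ ≤ L → ∀ θ : ℝ, 0 < θ → g ≤ θ + B / L) : False := by
  have hL : L₁ ≤ L₁ + 4 * B / g := by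
    have : 0 ≤ 4 * B / g := by positivity
    linarith
  have h1 := h _ hL (g / 4) (by positivity)
  have h2 : B / (L₁ + 4 * B / g) ≤ g / 4 := by
    rw [div_le_iff₀ (by linarith)]
    have : g / 4 * (L₁ + 4 * B / g) = g / 4 * L₁ + B := by field_simp
    rw [this]
    have : 0 ≤ g / 4 * L₁ := by positivity
    linarith
  linarith

lemma FB.case_int {n : ℕ} (hn : 0 < n) {u U v : EuclideanSpace ℝ (Fin n) → ℝ}
    {W : Set (EuclideanSpace ℝ (Fin n))} {C : NNReal} (H : FB u U W C)
    (Γ : Subgroup (EuclideanSpace ℝ (Fin n) ≃ₗᵢ[ℝ] EuclideanSpace ℝ (Fin n)))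
    (hmin : IsSymMinimizer Γ u)
    (huHom : ∀ t : ℝ, 0 < t → ∀ x, u (t • x) = t * u x)
    {μ γ : ℝ} (hγ : ((n : ℝ) / 2 - 1 - μ) ^ 2 ≤ γ)
    (hvSym : IsSymmetricUnder Γ v)
    (hvHom : ∀ t : ℝ, 0 < t → ∀ x : EuclideanSpace ℝ (Fin n), x ≠ 0 →
      v (t • x) = t ^ (-μ) * v x)
    (hv0 : ∀ x ∈ {x | 0 < u x}, 0 ≤ v x)
    (hv2 : ContDiffOn ℝ 2 v {x | 0 < u x})
    (hv1 : ContDiffOn ℝ 1 v ({x | 0 < u x} ∪ freeBoundary u))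
    (hSub : ∀ x ∈ {x | 0 < u x}, γ * v x / ‖x‖ ^ 2 ≤ lap v x)
    (hBdy : ∀ x ∈ freeBoundary u, dNu U v x ≤ meanCurv U x * v x)
    {x₀ : EuclideanSpace ℝ (Fin n)} (hx₀ : 0 < u x₀) (hvx : 0 < v x₀)
    (hs : γ * v x₀ / ‖x₀‖ ^ 2 < lap v x₀) : False := by
  obtain ⟨B, hB0, hB⟩ := H.main_ineq hn Γ hmin huHom hγ hvSym hvHom hv0 hv2 hv1
  set a := (n : ℝ) / 2 - 1 - μ with ha
  have hx₀0 : x₀ ≠ 0 := H.ne0 hx₀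
  obtain ⟨ρ₁, hρ₁, L₁, hL₁, c, hc, hcut⟩ := cut_local a hx₀0
  obtain ⟨κ, hκ0, hκ⟩ : ∃ κ : ℝ, 0 < κ ∧ κ < lap v x₀ - γ * v x₀ / ‖x₀‖ ^ 2 :=
    ⟨(lap v x₀ - γ * v x₀ / ‖x₀‖ ^ 2) / 2, by linarith, by linarith⟩
  have hD := H.openD.mem_nhds hx₀
  have cv := H.v_cont hv2 hx₀
  have cl : ContinuousAt (fun x => lap v x - γ * v x / ‖x‖ ^ 2) x₀ := by
    refine ((lap_continuousOn H.openD hv2).continuousAt hD).sub ?_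
    exact (continuousAt_const.mul cv).div (continuous_norm.pow 2).continuousAt
      (pow_ne_zero 2 (norm_ne_zero_iff.2 hx₀0))
  have e : ∀ᶠ x in nhds x₀, (κ < lap v x - γ * v x / ‖x‖ ^ 2 ∧ v x₀ / 2 < v x) ∧
      0 < u x ∧ x ∈ ball x₀ ρ₁ :=
    ((cl.eventually (lt_mem_nhds hκ)).and (cv.eventually (lt_mem_nhds (by linarith)))).and
      (Filter.Eventually.and hD (ball_mem_nhds x₀ hρ₁))
  obtain ⟨ρ, hρ, hball⟩ := Metric.eventually_nhds_iff_ball.1 e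
  set P : EuclideanSpace ℝ (Fin n) → ℝ := (ball x₀ ρ).indicator (fun _ => κ) with hP
  have hPm : Measurable P := measurable_const.indicator measurableSet_ball
  have hP0 : ∀ x, 0 ≤ P x := fun x => indicator_nonneg (fun _ _ => hκ0.le) x
  have hPκ : ∀ x, |P x| ≤ κ := fun x => by
    rw [abs_of_nonneg (hP0 x)]; exact indicator_le_self' (fun _ _ => hκ0.le) x
  have hvol : 0 < volume.real (ball x₀ ρ) :=
    ENNReal.toReal_pos (measure_ball_pos volume x₀ hρ).ne' measure_ball_lt_top.ne
  refine gap_false (g := κ * c ^ 2 * (v x₀ / 2) * volume.real (ball x₀ ρ)) hB0 hL₁ (by positivity) ?_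
  intro L hL θ hθ
  have hL1 : 1 ≤ L := hL₁.trans hL
  have hL0 : 0 < L := by linarith
  obtain ⟨ε₀, hε₀, hε⟩ := hB L hL1 P (fun _ => 0) hPm measurable_const κ hPκ
    (fun x => by rw [abs_zero]; exact hκ0.le)
    (fun x hx => by
      by_cases h : x ∈ ball x₀ ρ
      · rw [hP, indicator_of_mem h]
        linarith [(hball x h).1.1]
      · rw [hP, indicator_of_notMem h, add_zero]
        exact hSub x hx)
    (fun z hz η hη => by
      filter_upwards [H.bdy_eventually hv1 hz (κ := -η) (by linarith [hBdy z hz])] with x hx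
      linarith)
    θ hθ
  have h1 := hε (ε₀ / 2) (by linarith) (by linarith)
  simp only [mul_zero, indicator_zero, integral_zero, add_zero] at h1
  refine le_trans ?_ h1
  have hK := ann_compact n (2 * L)
  have hm : MeasurableSet ({x | 0 < u x} ∩ ann n (2 * L)) :=
    H.openD.measurableSet.inter hK.measurableSet
  have hfin : volume ({x | 0 < u x} ∩ ann n (2 * L)) ≠ ⊤ :=
    ((measure_mono inter_subset_right).trans_lt hK.measure_lt_top).ne
  have hζc := (cut_contDiff (n := n) a hL0).continuous
  obtain ⟨Mz, hMz⟩ := hK.exists_bound_of_continuousOn hζc.continuousOn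
  obtain ⟨Mv, hMv0, hMv⟩ := H.v_bdd hv2 hv1 hK (fun h => ann_ne0 h rfl)
  refine setIntegral_lower hm measurableSet_ball
    (fun x hx => ⟨(hball x hx).2.1, (hcut x (hball x hx).2.2 L hL).1⟩) hfin ?_ ?_ ?_
  · refine integrableOn_of_bdd hm hfin ?_ (κ * Mz ^ 2 * Mv) ?_
    · exact (hPm.aestronglyMeasurable.mul (hζc.pow 2).aestronglyMeasurable).mul
        ((hv2.continuousOn.mono inter_subset_left).aestronglyMeasurable hm)
    · intro x hx
      rw [abs_mul, abs_mul, abs_pow]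
      have e1 := hPκ x
      have e2 : |cut a L x| ≤ Mz := hMz x hx.2
      have e3 := hMv x hx
      have := abs_nonneg (cut a L x)
      gcongr
  · intro x hx
    exact mul_nonneg (mul_nonneg (hP0 x) (sq_nonneg _)) (hv0 x hx.1)
  · intro x hx
    rw [hP, indicator_of_mem hx]
    have e2 := (hcut x (hball x hx).2.2 L hL).2
    have e3 := (hball x hx).1.2.le
    gcongr

lemma FB.case_bdy {n : ℕ} (hn : 0 < n) {u U v : EuclideanSpace ℝ (Fin n) → ℝ}
    {W : Set (EuclideanSpace ℝ (Fin n))} {C : NNReal} (H : FB u U W C)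
    (Γ : Subgroup (EuclideanSpace ℝ (Fin n) ≃ₗᵢ[ℝ] EuclideanSpace ℝ (Fin n)))
    (hmin : IsSymMinimizer Γ u)
    (huHom : ∀ t : ℝ, 0 < t → ∀ x, u (t • x) = t * u x)
    {μ γ : ℝ} (hγ : ((n : ℝ) / 2 - 1 - μ) ^ 2 ≤ γ)
    (hvSym : IsSymmetricUnder Γ v)
    (hvHom : ∀ t : ℝ, 0 < t → ∀ x : EuclideanSpace ℝ (Fin n), x ≠ 0 →
      v (t • x) = t ^ (-μ) * v x)
    (hv0 : ∀ x ∈ {x | 0 < u x}, 0 ≤ v x)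
    (hv2 : ContDiffOn ℝ 2 v {x | 0 < u x})
    (hv1 : ContDiffOn ℝ 1 v ({x | 0 < u x} ∪ freeBoundary u))
    (hSub : ∀ x ∈ {x | 0 < u x}, γ * v x / ‖x‖ ^ 2 ≤ lap v x)
    (hBdy : ∀ x ∈ freeBoundary u, dNu U v x ≤ meanCurv U x * v x)
    {x₀ : EuclideanSpace ℝ (Fin n)} (hx₀ : x₀ ∈ freeBoundary u) (hvx : 0 < v x₀)
    (hs : dNu U v x₀ < meanCurv U x₀ * v x₀) : False := by
  obtain ⟨B, hB0, hB⟩ := H.main_ineq hn Γ hmin huHom hγ hvSym hvHom hv0 hv2 hv1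
  set a := (n : ℝ) / 2 - 1 - μ with ha
  have hx₀0 : x₀ ≠ 0 := hx₀.2
  obtain ⟨ρ₂, hρ₂, L₁, hL₁, c, hc, hcut⟩ := cut_local a hx₀0
  obtain ⟨κ, hκ0, hκ⟩ : ∃ κ : ℝ, 0 < κ ∧ κ < -dNu U v x₀ + meanCurv U x₀ * v x₀ :=
    ⟨(-dNu U v x₀ + meanCurv U x₀ * v x₀) / 2, by linarith, by linarith⟩
  obtain ⟨_, -, tv, -⟩ := H.C1_at hv1 hx₀
  have e : ∀ᶠ x in nhdsWithin x₀ {x | 0 < u x},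
      (-meanCurv U x * v x + κ ≤ (inner ℝ (gradient v x) (gradient u x) : ℝ) ∧ v x₀ / 2 < v x) ∧
      x ∈ ball x₀ ρ₂ :=
    ((H.bdy_eventually hv1 hx₀ hκ).and (tv.eventually (lt_mem_nhds (by linarith)))).and
      (mem_nhdsWithin_of_mem_nhds (ball_mem_nhds x₀ hρ₂))
  obtain ⟨ρ₁, hρ₁, hball⟩ := Metric.mem_nhdsWithin_iff.1 e
  set ρ := ρ₁ / 2 with hρdef
  have hρ : 0 < ρ := by positivity
  have hρρ : ball x₀ ρ ⊆ ball x₀ ρ₁ := ball_subset_ball (by linarith)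
  have hb' : ∀ x ∈ ball x₀ ρ₁, 0 < u x →
      (-meanCurv U x * v x + κ ≤ (inner ℝ (gradient v x) (gradient u x) : ℝ) ∧ v x₀ / 2 < v x) ∧
      x ∈ ball x₀ ρ₂ := fun x hx h => hball ⟨hx, h⟩
  set b : EuclideanSpace ℝ (Fin n) → ℝ := (ball x₀ ρ).indicator (fun _ => κ) with hb
  have hbm : Measurable b := measurable_const.indicator measurableSet_ball
  have hbn : ∀ x, 0 ≤ b x := fun x => indicator_nonneg (fun _ _ => hκ0.le) x
  have hbκ' : ∀ x, b x ≤ κ := fun x => indicator_le_self' (fun _ _ => hκ0.le) x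
  have hbκ : ∀ x, |b x| ≤ κ := fun x => by rw [abs_of_nonneg (hbn x)]; exact hbκ' x
  obtain ⟨c', hc', t₀, ht₀, hstrip⟩ := H.strip_lower hx₀ hρ
  set c₃ := c * (v x₀ / 2) with hc₃
  have hc₃0 : 0 < c₃ := by positivity
  refine gap_false (g := c * κ * (c' * c₃)) hB0 hL₁ (by positivity) ?_
  intro L hL θ hθ
  have hL1 : 1 ≤ L := hL₁.trans hL
  have hL0 : 0 < L := by linarith
  obtain ⟨ε₀, hε₀, hε⟩ := hB L hL1 (fun _ => 0) b measurable_const hbm κ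
    (fun x => by rw [abs_zero]; exact hκ0.le) hbκ
    (fun x hx => by rw [add_zero]; exact hSub x hx)
    (fun z hz η hη => by
      by_cases h : z ∈ ball x₀ ρ₁
      · filter_upwards [mem_nhdsWithin_of_mem_nhds (isOpen_ball.mem_nhds h),
          self_mem_nhdsWithin] with x hx hx'
        linarith [(hb' x hx hx').1.1, hbκ' x]
      · have hz' : z ∈ (closedBall x₀ ρ)ᶜ := by
          rw [mem_compl_iff, mem_closedBall]
          rw [mem_ball] at h
          linarith
        filter_upwards [H.bdy_eventually hv1 hz (κ := -η) (by linarith [hBdy z hz]),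
          mem_nhdsWithin_of_mem_nhds (isClosed_closedBall.isOpen_compl.mem_nhds hz')] with x hx hx'
        rw [hb, indicator_of_notMem (fun h => hx' (ball_subset_closedBall h))]
        linarith)
    θ hθ
  set ε := min (ε₀ / 2) (t₀ / c₃) with hεdef
  have hεpos : 0 < ε := lt_min (by positivity) (by positivity)
  have hεε : ε < ε₀ := (min_le_left _ _).trans_lt (by linarith)
  have hεt : ε * c₃ ≤ t₀ := by
    rw [← le_div_iff₀ hc₃0]; exact min_le_right _ _
  have h1 := hε ε hεpos hεε
  simp only [zero_mul, integral_zero, zero_add] at h1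
  refine le_trans ?_ h1
  have hK := ann_compact n (2 * L)
  have hm : MeasurableSet ({x | 0 < u x} ∩ ann n (2 * L)) :=
    H.openD.measurableSet.inter hK.measurableSet
  have hfin : volume ({x | 0 < u x} ∩ ann n (2 * L)) ≠ ⊤ :=
    ((measure_mono inter_subset_right).trans_lt hK.measure_lt_top).ne
  have hζc := (cut_contDiff (n := n) a hL0).continuous
  obtain ⟨Mz, hMz⟩ := hK.exists_bound_of_continuousOn hζc.continuousOn
  have hSm := H.meas_strip' (φ := fun y => cut a L y * v y)
    (hζc.continuousOn.mul hv2.continuousOn) ε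
  have huc : Continuous u := H.hu.continuous
  have low : c * κ * volume.real ({x | 0 < u x ∧ u x < ε * c₃} ∩ ball x₀ ρ) ≤
      ∫ x in {x | 0 < u x} ∩ ann n (2 * L),
        (strip u (fun y => cut a L y * v y) ε).indicator (fun x => cut a L x * b x) x := by
    refine setIntegral_lower hm ?_ ?_ hfin ?_ ?_ ?_
    · exact ((isOpen_lt continuous_const huc).inter
        (isOpen_lt huc continuous_const)).measurableSet.inter measurableSet_ball
    · rintro x ⟨⟨h0, -⟩, hx⟩
      exact ⟨h0, (hcut x (hb' x (hρρ hx) h0).2 L hL).1⟩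
    · refine Integrable.indicator ?_ hSm
      refine integrableOn_of_bdd hm hfin
        (hζc.aestronglyMeasurable.mul hbm.aestronglyMeasurable) (Mz * κ) fun x hx => ?_
      rw [abs_mul]
      exact mul_le_mul (hMz x hx.2) (hbκ x) (abs_nonneg _) ((norm_nonneg _).trans (hMz x hx.2))
    · intro x _
      exact indicator_nonneg (fun x _ => mul_nonneg (cut_nonneg a L x) (hbn x)) x
    · rintro x ⟨⟨h0, ht⟩, hx⟩
      have hh := hb' x (hρρ hx) h0
      have e2 := (hcut x hh.2 L hL).2
      have e3 := hh.1.2.le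
      have hxs : x ∈ strip u (fun y => cut a L y * v y) ε := by
        refine ⟨h0, ht.le.trans ?_⟩
        have : c * (v x₀ / 2) ≤ cut a L x * v x :=
          mul_le_mul e2 e3 (by linarith) (cut_nonneg a L x)
        exact mul_le_mul_of_nonneg_left this hεpos.le
      rw [indicator_of_mem hxs, hb, indicator_of_mem hx]
      gcongr
  have hst := hstrip (ε * c₃) (by positivity) hεt
  calc c * κ * (c' * c₃) = ε⁻¹ * (c * κ * (c' * (ε * c₃))) := by field_simp
    _ ≤ _ := by
      refine mul_le_mul_of_nonneg_left (le_trans ?_ low) (by positivity)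
      exact mul_le_mul_of_nonneg_left hst (by positivity)

/-- **Instability from a homogeneous strict subsolution** (Proposition 3.9).
Let `u` be locally Lipschitz, `Γ`-symmetric, `1`-homogeneous, harmonic in `{u>0}`, with
`Σ = ∂{u>0} \ {0}` a smooth embedded hypersurface (encoded by a smooth extension `Uext`) and
`|∇u| = 1` on `Σ`.  If there is a `Γ`-symmetric nonnegative strict subsolution `v̄`,
homogeneous of degree `-μ`, of `Δv̄ ≥ γ v̄/|x|²` in `{u>0}` with `∂_ν v̄ ≤ H v̄` on `Σ` and
`γ ≥ (n/2 - 1 - μ)²`, then `u` is not a `Γ`-symmetric minimizer against `Γ`-symmetric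
competitors. -/
theorem homogeneous_subsolution_implies_unstable {n : ℕ} (hn : 3 ≤ n)
    (Γ : Subgroup (EuclideanSpace ℝ (Fin n) ≃ₗᵢ[ℝ] EuclideanSpace ℝ (Fin n)))
    (hfin : Finite Γ)
    (hfree : ∀ g ∈ Γ, (∃ x : EuclideanSpace ℝ (Fin n), x ≠ 0 ∧ g x = x) → g = 1)
    (u : EuclideanSpace ℝ (Fin n) → ℝ)
    (hu0 : ∀ x, 0 ≤ u x) (huLip : LocallyLipschitz u)
    (huSym : IsSymmetricUnder Γ u)
    (huHom : ∀ t : ℝ, 0 < t → ∀ x, u (t • x) = t * u x)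
    (huHarm : ∀ x ∈ {x | 0 < u x}, lap u x = 0)
    -- smooth extension of `u` across `Σ`
    (Uext : EuclideanSpace ℝ (Fin n) → ℝ) (W : Set (EuclideanSpace ℝ (Fin n)))
    (hW : IsOpen W) (hWsup : closure {x | 0 < u x} \ {0} ⊆ W)
    (hUsm : ContDiffOn ℝ (⊤ : ℕ∞) Uext W)
    (hUeq : ∀ x ∈ closure {x | 0 < u x}, Uext x = u x)
    (hgrad1 : ∀ x ∈ freeBoundary u, ‖gradient Uext x‖ = 1)
    (hsurf : ∀ x ∈ freeBoundary u, ∃ ε > 0,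
      freeBoundary u ∩ ball x ε = {y ∈ ball x ε | Uext y = 0})
    -- the strict subsolution `v̄`, homogeneous of degree `-μ`
    (μ : ℝ) (γ : ℝ) (hγ : ((n : ℝ) / 2 - 1 - μ) ^ 2 ≤ γ)
    (vbar : EuclideanSpace ℝ (Fin n) → ℝ)
    (hvSym : IsSymmetricUnder Γ vbar)
    (hvHom : ∀ t : ℝ, 0 < t → ∀ x : EuclideanSpace ℝ (Fin n), x ≠ 0 →
      vbar (t • x) = t ^ (-μ) * vbar x)
    (hv0 : ∀ x ∈ closure {x | 0 < u x} \ {0}, 0 ≤ vbar x)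
    (hvC2 : ContDiffOn ℝ 2 vbar {x | 0 < u x})
    (hvC1 : ContDiffOn ℝ 1 vbar ({x | 0 < u x} ∪ freeBoundary u))
    (hvNe : ∃ x, 0 < u x ∧ vbar x ≠ 0)
    (hSub : ∀ x ∈ {x | 0 < u x}, γ * vbar x / ‖x‖ ^ 2 ≤ lap vbar x)
    (hBdy : ∀ x ∈ freeBoundary u, dNu Uext vbar x ≤ meanCurv Uext x * vbar x)
    (hStrict :
      (∃ x₀ ∈ {x | 0 < u x}, 0 < vbar x₀ ∧ γ * vbar x₀ / ‖x₀‖ ^ 2 < lap vbar x₀) ∨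
      (∃ x₀ ∈ freeBoundary u, 0 < vbar x₀ ∧
        dNu Uext vbar x₀ < meanCurv Uext x₀ * vbar x₀)) :
    ¬ IsSymMinimizer Γ u := by
  intro hmin
  obtain ⟨C, hC⟩ := lipschitz_of_homog huLip huHom
  have H : FB u Uext W C :=
    { hu := hC, hu0 := hu0, hu00 := homog_zero huHom, huh := huHarm, hW := hW, hWsup := hWsup,
      hUsm := hUsm, hUeq := hUeq, hgrad1 := hgrad1, hsurf := hsurf }
  have hv0' : ∀ x ∈ {x | 0 < u x}, 0 ≤ vbar x := fun x hx =>
    hv0 x ⟨subset_closure hx, H.ne0 hx⟩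
  have hn0 : 0 < n := by omega
  rcases hStrict with ⟨x₀, hx₀, hvx, hs⟩ | ⟨x₀, hx₀, hvx, hs⟩
  · exact H.case_int hn0 Γ hmin huHom hγ hvSym hvHom hv0' hvC2 hvC1 hSub hBdy hx₀ hvx hs
  · exact H.case_bdy hn0 Γ hmin huHom hγ hvSym hvHom hv0' hvC2 hvC1 hSub hBdy hx₀ hvx hs
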